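/- Let d ≥ 4 and 1 < p < p_d = (2d−2)/(d+1). Then for every measurable function h : ℝ^d × [1,∞) → ℂ with ∫_{ℝ^d} ∫_1^∞ |h(y,r)|^p r^{d−1} dr dy < ∞, ‖∫_{ℝ^d} ∫_1^∞ h(y,r) F_{y,r} dr dy‖_{L^p(ℝ^d)} ≤ C (∫_{ℝ^d} ∫_1^∞ |h(y,r)|^p r^{d−1} dr dy)^{1/p}, where C depends only on p, d and ψ, and the inner expression denotes the function x ↦ ∫_{ℝ^d} ∫_1^∞ h(y,r) (σ_r * ψ)(x − y) dr dy. -/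

import Mathlib

open MeasureTheory Metric Set
open scoped FourierTransform ENNReal NNReal

noncomputable section

abbrev Ed (d : ℕ) := EuclideanSpace ℝ (Fin d)

/-- Surface measure on the sphere of radius `r` centered at the origin in `ℝ^d`:
the `(d-1)`-dimensional Hausdorff measure restricted to the sphere. -/
def sphereM (d : ℕ) (r : ℝ) : Measure (Ed d) :=
  (μH[(d : ℝ) - 1]).restrict (Metric.sphere (0 : Ed d) r)

/-- `ψ₀` is admissible: radial, `C^∞`, supported in the ball of radius `1/10`, and
its Fourier transform vanishes to order `20d` at the origin. -/
def Admissible (d : ℕ) (ψ₀ : Ed d → ℂ) : Prop :=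
  ContDiff ℝ (⊤ : ℕ∞) ψ₀ ∧
  (∀ x, ψ₀ x ≠ 0 → ‖x‖ ≤ 1 / 10) ∧
  (∀ x y : Ed d, ‖x‖ = ‖y‖ → ψ₀ x = ψ₀ y) ∧
  (∀ n : ℕ, n < 20 * d → iteratedFDeriv ℝ n (𝓕 ψ₀) 0 = 0)

/-- `ψ = ψ₀ * ψ₀` (convolution). -/
def psiOf (d : ℕ) (ψ₀ : Ed d → ℂ) : Ed d → ℂ :=
  fun x => ∫ y, ψ₀ y * ψ₀ (x - y)

/-- `F_{y,r} = σ_r * ψ(· - y)`. -/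
def Fyr (d : ℕ) (ψ₀ : Ed d → ℂ) (y : Ed d) (r : ℝ) : Ed d → ℂ :=
  fun x => ∫ z, psiOf d ψ₀ (x - y - z) ∂(sphereM d r)

lemma lipschitzOn_normalize {E : Type*} [NormedAddCommGroup E] [NormedSpace ℝ E] :
    LipschitzOnWith 2 (fun x : E => ‖x‖⁻¹ • x) {x | 1 ≤ ‖x‖} := by
  apply LipschitzOnWith.of_dist_le_mul
  intro x hx y hy
  simp only [mem_ofPred_eq] at hx hy
  have hx0 : 0 < ‖x‖ := by linarith
  have hy0 : 0 < ‖y‖ := by linarith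
  rw [dist_eq_norm, dist_eq_norm]
  have h1 : ‖x‖⁻¹ • x - ‖y‖⁻¹ • y = ‖x‖⁻¹ • (x - y) + (‖x‖⁻¹ - ‖y‖⁻¹) • y := by
    rw [smul_sub, sub_smul]; abel
  rw [h1]
  refine (norm_add_le _ _).trans ?_
  rw [norm_smul, norm_smul, norm_inv, norm_norm]
  have h2 : ‖‖x‖⁻¹ - ‖y‖⁻¹‖ * ‖y‖ = ‖x‖⁻¹ * |‖y‖ - ‖x‖| := by
    have : ‖x‖⁻¹ - ‖y‖⁻¹ = ‖x‖⁻¹ * (‖y‖ - ‖x‖) * ‖y‖⁻¹ := by field_simp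
    rw [this, Real.norm_eq_abs, abs_mul, abs_mul, abs_of_pos (inv_pos.2 hx0),
      abs_of_pos (inv_pos.2 hy0)]
    field_simp
  rw [h2]
  have h3 : |‖y‖ - ‖x‖| ≤ ‖x - y‖ := by rw [abs_sub_comm]; exact abs_norm_sub_norm_le x y
  have h4 : ‖x‖⁻¹ ≤ 1 := inv_le_one_of_one_le₀ hx
  have := norm_nonneg (x - y)
  have h5 : ‖x‖⁻¹ * ‖x - y‖ ≤ 1 * ‖x - y‖ := by gcongr
  have h6 : ‖x‖⁻¹ * |‖y‖ - ‖x‖| ≤ 1 * ‖x - y‖ := by gcongr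
  simp only [NNReal.coe_ofNat]
  linarith

lemma sphere_finite_aux (n : ℕ) :
    (μH[(n : ℝ)] : Measure (Ed (n + 1))) (sphere 0 1) < ⊤ := by
  let g : Fin (n + 1) → ℝ → (Fin n → ℝ) → Ed (n + 1) :=
    fun i s v => WithLp.toLp 2 (Fin.insertNth (α := fun _ => ℝ) i s v)
  let K : ℝ≥0 := ((Fintype.card (Fin (n+1)) : ℝ≥0) ^ ((1 / (2:ℝ≥0∞)).toReal))
  have hg : ∀ i s, LipschitzWith K (g i s) := by
    intro i s
    have h1 : LipschitzWith K (WithLp.toLp 2 : (Fin (n+1) → ℝ) → Ed (n+1)) :=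
      PiLp.lipschitzWith_toLp 2 _
    have h2 : LipschitzWith 1 (fun v : Fin n → ℝ => (Fin.insertNth (α := fun _ => ℝ) i s v)) := by
      apply LipschitzWith.of_dist_le_mul
      intro v w
      simp only [NNReal.coe_one, one_mul]
      rw [dist_pi_le_iff dist_nonneg]
      intro j
      refine Fin.succAboveCases i ?_ ?_ j
      · simp
      · intro k; simp only [Fin.insertNth_apply_succAbove]; exact dist_le_pi_dist v w k
    have := h1.comp h2
    rw [mul_one] at this
    exact this
  have hn : ∀ i s v, |s| = 1 → 1 ≤ ‖g i s v‖ := by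
    intro i s v hs
    have := PiLp.norm_apply_le (g i s v) i
    simpa [g, hs] using this
  have hcov : sphere (0 : Ed (n+1)) 1 ⊆ ⋃ i : Fin (n+1), ⋃ s ∈ ({1, -1} : Set ℝ),
      (fun v => ‖g i s v‖⁻¹ • g i s v) '' (Icc (-1) 1) := by
    intro ω hω
    have hω1 : ‖ω‖ = 1 := by simpa using hω
    obtain ⟨i, -, hi⟩ := Finset.exists_max_image (Finset.univ : Finset (Fin (n+1)))
      (fun i => |ω i|) Finset.univ_nonempty
    have hm : 0 < |ω i| := by
      by_contra hcon
      have h0 : |ω i| = 0 := le_antisymm (not_lt.1 hcon) (abs_nonneg _)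
      have : ω = 0 := by
        ext j
        have := hi j (Finset.mem_univ _)
        rw [h0] at this
        simpa using abs_eq_zero.1 (le_antisymm this (abs_nonneg _))
      rw [this] at hω1; simp at hω1
    simp only [mem_iUnion]
    refine ⟨i, ω i / |ω i|, ?_, fun j => ω (i.succAbove j) / |ω i|, ?_, ?_⟩
    · rcases lt_or_gt_of_ne (abs_pos.1 hm) with h | h
      · right; rw [abs_of_neg h]; simp [div_neg, div_self h.ne]
      · left; rw [abs_of_pos h]; exact div_self h.ne'
    · constructor
      · intro j
        have := hi (i.succAbove j) (Finset.mem_univ _)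
        simp only [Pi.neg_apply, Pi.one_apply]
        rw [le_div_iff₀ hm]; have := neg_abs_le (ω (i.succAbove j)); linarith
      · intro j
        have := hi (i.succAbove j) (Finset.mem_univ _)
        simp only [Pi.one_apply]
        rw [div_le_iff₀ hm]; have := le_abs_self (ω (i.succAbove j)); linarith
    · have : g i (ω i / |ω i|) (fun j => ω (i.succAbove j) / |ω i|) = |ω i|⁻¹ • ω := by
        ext j
        refine Fin.succAboveCases i ?_ ?_ j
        · simp [g, div_eq_inv_mul]
        · intro k; simp [g, div_eq_inv_mul]
      simp only [this]
      rw [norm_smul, hω1, norm_inv, Real.norm_eq_abs, abs_abs, smul_smul]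
      simp [hm.ne']
  refine (measure_mono hcov).trans_lt ?_
  refine (measure_iUnion_le _).trans_lt ?_
  rw [tsum_fintype]
  refine ENNReal.sum_lt_top.2 fun i _ => ?_
  refine (measure_biUnion_lt_top (by simp) ?_)
  intro s hs
  have hs1 : |s| = 1 := by rcases hs with rfl | rfl <;> simp
  have hl : LipschitzOnWith (2 * K) (fun v => ‖g i s v‖⁻¹ • g i s v) (Icc (-1) 1) := by
    have := (lipschitzOn_normalize (E := Ed (n+1))).comp ((hg i s).lipschitzOnWith (s := Icc (-1) 1))
      (fun v _ => hn i s v hs1)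
    exact this
  refine (hl.hausdorffMeasure_image_le (Nat.cast_nonneg n)).trans_lt ?_
  have : (μH[(n:ℝ)] : Measure (Fin n → ℝ)) = volume := by
    have := hausdorffMeasure_pi_real (ι := Fin n)
    simpa using this
  rw [this]
  refine ENNReal.mul_lt_top ?_ ?_
  · exact ENNReal.rpow_lt_top_of_nonneg (Nat.cast_nonneg n) ENNReal.coe_ne_top
  · exact (isCompact_Icc).measure_lt_top

lemma sphereM_finite (d : ℕ) (hd : 4 ≤ d) : IsFiniteMeasure (sphereM d 1) := by
  obtain ⟨n, rfl⟩ : ∃ n, d = n + 1 := ⟨d - 1, by omega⟩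
  constructor
  rw [sphereM, Measure.restrict_apply_univ]
  have := sphere_finite_aux n
  simpa using this

lemma sphereM_map (d : ℕ) (r : ℝ) (e : Ed d ≃ₗᵢ[ℝ] Ed d) :
    MeasurePreserving e (sphereM d r) (sphereM d r) := by
  have h := (e.toIsometryEquiv.measurePreserving_hausdorffMeasure ((d:ℝ) - 1)).restrict_preimage
    (s := sphere (0 : Ed d) r) Metric.isClosed_sphere.measurableSet
  have h2 : e.toIsometryEquiv ⁻¹' (sphere (0 : Ed d) r) = sphere 0 r := by
    ext z; simp
  rw [h2] at h
  exact h

open scoped Pointwise in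
lemma sphereM_scale (d : ℕ) (hd : 4 ≤ d) (r : ℝ) (hr : 0 < r) :
    sphereM d r = (ENNReal.ofReal (r ^ (d - 1))) • (sphereM d 1).map (fun z => r • z) := by
  ext s hs
  have hm : Measurable (fun z : Ed d => r • z) := measurable_const_smul r
  rw [Measure.smul_apply, Measure.map_apply hm hs, sphereM, sphereM, Measure.restrict_apply hs,
    Measure.restrict_apply (hm hs)]
  have h1 : s ∩ sphere (0 : Ed d) r = r • ((fun z : Ed d => r • z) ⁻¹' s ∩ sphere 0 1) := by
    ext z
    rw [Set.mem_smul_set]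
    constructor
    · rintro ⟨h1, h2⟩
      refine ⟨r⁻¹ • z, ⟨?_, ?_⟩, ?_⟩
      · simpa [smul_smul, hr.ne'] using h1
      · have : ‖z‖ = r := by simpa using h2
        simp [norm_smul, this, abs_of_pos hr, hr.ne']
      · simp [smul_smul, hr.ne']
    · rintro ⟨w, ⟨h1, h2⟩, rfl⟩
      refine ⟨h1, ?_⟩
      have : ‖w‖ = 1 := by simpa using h2
      simp [norm_smul, this, abs_of_pos hr]
  have hd1 : (d : ℝ) - 1 = ((d - 1 : ℕ) : ℝ) := by push_cast [Nat.cast_sub (by omega : 1 ≤ d)]; ring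
  rw [h1, Measure.hausdorffMeasure_smul₀ (by rw [hd1]; positivity) hr.ne', hd1,
    NNReal.rpow_natCast, ENNReal.smul_def]
  congr 1
  rw [ENNReal.ofReal_pow hr.le, ENNReal.coe_pow]
  congr 1
  rw [← Real.enorm_of_nonneg hr.le]; rfl

lemma sphereM_finite' (d : ℕ) (hd : 4 ≤ d) (r : ℝ) (hr : 0 < r) :
    IsFiniteMeasure (sphereM d r) := by
  have := sphereM_finite d hd
  rw [sphereM_scale d hd r hr]
  exact Measure.smul_finite _ ENNReal.ofReal_ne_top

lemma sphereM_integral_scale (d : ℕ) (hd : 4 ≤ d) (r : ℝ) (hr : 0 < r) (f : Ed d → ℂ) :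
    ∫ z, f z ∂(sphereM d r) = (r : ℂ) ^ (d - 1) * ∫ z, f (r • z) ∂(sphereM d 1) := by
  rw [sphereM_scale d hd r hr, integral_smul_measure]
  have : MeasurableEmbedding (fun z : Ed d => r • z) :=
    (Homeomorph.smulOfNeZero r hr.ne').measurableEmbedding
  rw [this.integral_map, ENNReal.toReal_ofReal (by positivity), Complex.real_smul]
  push_cast; rfl

lemma sphereM_ae (d : ℕ) (r : ℝ) : ∀ᵐ z ∂(sphereM d r), ‖z‖ = r := by
  have := ae_restrict_mem (μ := (μH[(d:ℝ) - 1] : Measure (Ed d))) (s := sphere 0 r)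
    Metric.isClosed_sphere.measurableSet
  filter_upwards [this] with z hz
  simpa using hz

/-- Fourier transform of the surface measure of the unit sphere. -/
def nh (d : ℕ) (ξ : Ed d) : ℂ :=
  ∫ z, Complex.exp (((-2 * Real.pi * inner ℝ z ξ : ℝ) : ℂ) * Complex.I) ∂(sphereM d 1)

lemma exists_isom {d : ℕ} {v w : Ed d} (h : ‖v‖ = ‖w‖) : ∃ e : Ed d ≃ₗᵢ[ℝ] Ed d, e v = w :=
  ⟨_, Submodule.reflection_sub h⟩

lemma nh_radial {d : ℕ} {ξ η : Ed d} (h : ‖ξ‖ = ‖η‖) : nh d ξ = nh d η := by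
  obtain ⟨e, rfl⟩ := exists_isom h
  unfold nh
  symm
  rw [← (sphereM_map d 1 e).integral_comp e.toHomeomorph.measurableEmbedding]
  simp

lemma exists_rot {d : ℕ} (i k : Fin d) (hik : k ≠ i) (φ : ℝ) :
    ∃ e : Ed d ≃ₗᵢ[ℝ] Ed d, ∀ z, (e z) i = Real.cos φ * z i + Real.sin φ * z k ∧
      (e z) k = Real.sin φ * z i - Real.cos φ * z k := by
  let u : Ed d := EuclideanSpace.single i (Real.cos (φ/2)) + EuclideanSpace.single k (Real.sin (φ/2))
  have hu : ‖u‖ ^ 2 = 1 := by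
    rw [← real_inner_self_eq_norm_sq]
    simp only [u, inner_add_left, inner_add_right, EuclideanSpace.inner_single_left]
    simp [hik, hik.symm]
    nlinarith [Real.sin_sq_add_cos_sq (φ/2)]
  refine ⟨Submodule.reflection (Submodule.span ℝ {u}), fun z => ?_⟩
  have h1 : Submodule.reflection (Submodule.span ℝ {u}) z
      = (2 * (Real.cos (φ/2) * z i + Real.sin (φ/2) * z k)) • u - z := by
    rw [Submodule.reflection_singleton_apply]
    have : inner ℝ u z = Real.cos (φ/2) * z i + Real.sin (φ/2) * z k := by
      simp only [u, inner_add_left, EuclideanSpace.inner_single_left]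
      simp
    rw [this]
    simp only [RCLike.ofReal_real_eq_id, id_eq]
    rw [hu, div_one, two_smul, ← add_smul, two_mul]
  have hc : Real.cos φ = 2 * Real.cos (φ/2) ^ 2 - 1 := by
    rw [← Real.cos_two_mul]; congr 1; ring
  have hs : Real.sin φ = 2 * Real.sin (φ/2) * Real.cos (φ/2) := by
    rw [← Real.sin_two_mul]; congr 1; ring
  have hcs := Real.sin_sq_add_cos_sq (φ/2)
  rw [h1, hc, hs]
  constructor
  · simp [u, hik.symm]; ring
  · simp [u, hik]
    linear_combination (2 * z k) * hcs

lemma coord_le {d : ℕ} (z : Ed d) (i : Fin d) (hz : ‖z‖ = 1) : |z i| ≤ 1 := by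
  have := PiLp.norm_apply_le z i
  rwa [hz] at this

section Bessel

def EX (d : ℕ) (i : Fin d) (s : ℝ) (z : Ed d) : ℂ := Complex.exp (((s * z i : ℝ) : ℂ) * Complex.I)

lemma EX_norm (d : ℕ) (i : Fin d) (s : ℝ) (z : Ed d) : ‖EX d i s z‖ = 1 := Complex.norm_exp_ofReal_mul_I _

lemma EX_cont (d : ℕ) (i : Fin d) (s : ℝ) : Continuous (EX d i s) := by unfold EX; fun_prop

def JJ (d : ℕ) (i : Fin d) (g : Ed d → ℂ) (s : ℝ) : ℂ := ∫ z, g z * EX d i s z ∂(sphereM d 1)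

lemma int_bdd (d : ℕ) (hd : 4 ≤ d) (f : Ed d → ℂ) (hf : Continuous f) : Integrable f (sphereM d 1) := by
  have := sphereM_finite d hd
  obtain ⟨M, hM⟩ := (isCompact_sphere (0 : Ed d) 1).exists_bound_of_continuousOn hf.continuousOn
  refine Integrable.of_bound hf.aestronglyMeasurable M ?_
  filter_upwards [sphereM_ae d 1] with z hz
  exact hM z (by simpa using hz)

lemma JJ_deriv (d : ℕ) (hd : 4 ≤ d) (i : Fin d) (g : Ed d → ℂ) (hg : Continuous g) (s : ℝ) :
    HasDerivAt (JJ d i g) (JJ d i (fun z => g z * (z i * Complex.I)) s) s := by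
  have hfin := sphereM_finite d hd
  obtain ⟨M, hM⟩ := (isCompact_sphere (0 : Ed d) 1).exists_bound_of_continuousOn hg.continuousOn
  unfold JJ
  refine (hasDerivAt_integral_of_dominated_loc_of_deriv_le (s := univ) (bound := fun _ => M)
    (F := fun s z => g z * EX d i s z)
    (F' := fun s z => g z * (z i * Complex.I) * EX d i s z)
    Filter.univ_mem ?_ ?_ ?_ ?_ ?_ ?_).2
  · exact Filter.Eventually.of_forall fun s =>
      (hg.mul (EX_cont d i s)).aestronglyMeasurable
  · exact int_bdd d hd _ (hg.mul (EX_cont d i s))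
  · refine Continuous.aestronglyMeasurable ?_
    have := EX_cont d i s
    fun_prop
  · filter_upwards [sphereM_ae d 1] with z hz s _
    rw [norm_mul, EX_norm, mul_one, norm_mul, norm_mul, Complex.norm_I, mul_one, Complex.norm_real]
    have h1 := hM z (by simpa using hz)
    have h2 := coord_le z i hz
    have h3 : ‖g z‖ * ‖z i‖ ≤ ‖g z‖ * 1 := by gcongr; exact h2
    linarith
  · exact integrable_const _
  · refine Filter.Eventually.of_forall fun z s _ => ?_
    unfold EX
    have h1 : HasDerivAt (fun s : ℝ => ((s * z i : ℝ) : ℂ) * Complex.I) (z i * Complex.I) s := by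
      have := ((hasDerivAt_id s).mul_const (z i)).ofReal_comp.mul_const Complex.I
      simpa using this
    have := (h1.cexp).const_mul (g z)
    refine this.congr_deriv ?_
    ring

lemma JJ_rot (d : ℕ) (hd : 4 ≤ d) (i : Fin d) (k : Fin d) (hk : k ≠ i) (s : ℝ) :
    JJ d i (fun z => (z i : ℂ)) s = Complex.I * s * JJ d i (fun z => (z k : ℂ) ^ 2) s := by
  have hfin := sphereM_finite d hd
  let Q : ℝ → Ed d → ℂ := fun φ z => ((Real.sin φ * z i - Real.cos φ * z k : ℝ) : ℂ) *
      Complex.exp (((s * (Real.cos φ * z i + Real.sin φ * z k) : ℝ) : ℂ) * Complex.I)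
  let Q' : ℝ → Ed d → ℂ := fun φ z => ((Real.cos φ * z i + Real.sin φ * z k : ℝ) : ℂ) *
      Complex.exp (((s * (Real.cos φ * z i + Real.sin φ * z k) : ℝ) : ℂ) * Complex.I)
      + ((Real.sin φ * z i - Real.cos φ * z k : ℝ) : ℂ) *
      (Complex.exp (((s * (Real.cos φ * z i + Real.sin φ * z k) : ℝ) : ℂ) * Complex.I) *
        (((s * (-Real.sin φ * z i + Real.cos φ * z k) : ℝ) : ℂ) * Complex.I))
  have hconst : ∀ φ, ∫ z, Q φ z ∂(sphereM d 1) = ∫ z, (z k : ℂ) * EX d i s z ∂(sphereM d 1) := by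
    intro φ
    obtain ⟨e, he⟩ := exists_rot i k hk φ
    symm
    rw [← (sphereM_map d 1 e).integral_comp e.toHomeomorph.measurableEmbedding]
    refine integral_congr_ae (Filter.Eventually.of_forall fun z => ?_)
    simp only [Q, EX, (he z).1, (he z).2]
  have hQc : ∀ φ, Continuous (Q φ) := fun φ => by fun_prop
  have hQ'c : ∀ φ, Continuous (Q' φ) := fun φ => by fun_prop
  have hder : HasDerivAt (fun φ => ∫ z, Q φ z ∂(sphereM d 1)) (∫ z, Q' 0 z ∂(sphereM d 1)) 0 := by
    refine (hasDerivAt_integral_of_dominated_loc_of_deriv_le (s := univ)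
      (bound := fun _ => 2 + 2 * (|s| * 2)) Filter.univ_mem ?_ ?_ ?_ ?_ ?_ ?_).2
    · exact Filter.Eventually.of_forall fun s => (hQc s).aestronglyMeasurable
    · exact int_bdd d hd _ (hQc 0)
    · exact (hQ'c 0).aestronglyMeasurable
    · filter_upwards [sphereM_ae d 1] with z hz φ _
      have h1 := coord_le z i hz
      have h2 := coord_le z k hz
      have h3 := Real.abs_sin_le_one φ
      have h4 := Real.abs_cos_le_one φ
      have m1 : |Real.cos φ * z i| ≤ 1 := by rw [abs_mul]; exact mul_le_one₀ h4 (abs_nonneg _) h1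
      have m2 : |Real.cos φ * z k| ≤ 1 := by rw [abs_mul]; exact mul_le_one₀ h4 (abs_nonneg _) h2
      have m3 : |Real.sin φ * z i| ≤ 1 := by rw [abs_mul]; exact mul_le_one₀ h3 (abs_nonneg _) h1
      have m4 : |Real.sin φ * z k| ≤ 1 := by rw [abs_mul]; exact mul_le_one₀ h3 (abs_nonneg _) h2
      refine (norm_add_le _ _).trans ?_
      simp only [norm_mul, Complex.norm_exp_ofReal_mul_I, Complex.norm_real, Complex.norm_I,
        Real.norm_eq_abs, mul_one, one_mul]
      have a1 : |Real.cos φ * z i + Real.sin φ * z k| ≤ 2 := (abs_add_le _ _).trans (by linarith)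
      have a2 : |Real.sin φ * z i - Real.cos φ * z k| ≤ 2 := (abs_sub _ _).trans (by linarith)
      have a3 : |-Real.sin φ * z i + Real.cos φ * z k| ≤ 2 := by
        refine (abs_add_le _ _).trans ?_
        rw [neg_mul, abs_neg]; linarith
      gcongr
    · exact integrable_const _
    · refine Filter.Eventually.of_forall fun z φ _ => ?_
      have e1 : HasDerivAt (fun φ => Real.sin φ * z i - Real.cos φ * z k)
          (Real.cos φ * z i + Real.sin φ * z k) φ := by
        refine (((Real.hasDerivAt_sin φ).mul_const (z i)).sub
          ((Real.hasDerivAt_cos φ).mul_const (z k))).congr_deriv ?_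
        ring
      have e2 : HasDerivAt (fun φ => s * (Real.cos φ * z i + Real.sin φ * z k))
          (s * (-Real.sin φ * z i + Real.cos φ * z k)) φ :=
        (((Real.hasDerivAt_cos φ).mul_const (z i)).add
          ((Real.hasDerivAt_sin φ).mul_const (z k))).const_mul s
      exact e1.ofReal_comp.mul (e2.ofReal_comp.mul_const Complex.I).cexp
  have h0 : ∫ z, Q' 0 z ∂(sphereM d 1) = 0 := by
    have h1 : (fun φ => ∫ z, Q φ z ∂(sphereM d 1)) = fun _ => ∫ z, (z k : ℂ) * EX d i s z ∂(sphereM d 1) :=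
      funext hconst
    rw [h1] at hder
    exact hder.unique (hasDerivAt_const _ _)
  have h2 : ∀ z, Q' 0 z = (z i : ℂ) * EX d i s z - Complex.I * s * ((z k : ℂ) ^ 2 * EX d i s z) := by
    intro z
    simp only [Q', EX, Real.sin_zero, Real.cos_zero]
    push_cast
    ring_nf
  have hc := EX_cont d i s
  rw [integral_congr_ae (Filter.Eventually.of_forall h2), integral_sub
    (int_bdd d hd _ (by fun_prop)) (int_bdd d hd _ (by fun_prop)), integral_const_mul, sub_eq_zero] at h0
  exact h0

lemma JJ_ode (d : ℕ) (hd : 4 ≤ d) (i : Fin d) (s : ℝ) :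
    (s : ℂ) * JJ d i (fun z => 1 * (z i * Complex.I) * (z i * Complex.I)) s
      = -((d : ℂ) - 1) * JJ d i (fun z => 1 * (z i * Complex.I)) s - s * JJ d i (fun _ => 1) s := by
  have hc := EX_cont d i s
  have h1 : JJ d i (fun z => 1 * (z i * Complex.I)) s = Complex.I * JJ d i (fun z => (z i : ℂ)) s := by
    unfold JJ; rw [← integral_const_mul]; congr 1; ext z; ring
  have h2 : JJ d i (fun z => 1 * (z i * Complex.I) * (z i * Complex.I)) s
      = - JJ d i (fun z => (z i : ℂ) ^ 2) s := by
    unfold JJ; rw [← integral_neg]; congr 1; ext z; linear_combination (z i)^2 * EX d i s z * Complex.I_sq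
  have h3 : ∑ k, JJ d i (fun z => (z k : ℂ) ^ 2) s = JJ d i (fun _ => 1) s := by
    unfold JJ
    rw [← integral_finsetSum]
    · refine integral_congr_ae ?_
      filter_upwards [sphereM_ae d 1] with z hz
      rw [← Finset.sum_mul]
      congr 1
      have : ∑ k, (z k) ^ 2 = 1 := by
        have := EuclideanSpace.norm_sq_eq z
        rw [hz] at this
        simpa using this.symm
      exact_mod_cast this
    · intro k _; exact int_bdd d hd _ (by fun_prop)
  have h4 : ∑ k ∈ Finset.univ.erase i, (Complex.I * s * JJ d i (fun z => (z k : ℂ) ^ 2) s)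
      = ((d : ℂ) - 1) * JJ d i (fun z => (z i : ℂ)) s := by
    rw [Finset.sum_congr rfl (fun k hk => (JJ_rot d hd i k (Finset.ne_of_mem_erase hk) s).symm)]
    rw [Finset.sum_const, Finset.card_erase_of_mem (Finset.mem_univ _), Finset.card_univ,
      Fintype.card_fin, nsmul_eq_mul, Nat.cast_sub (by omega)]
    simp
  rw [← Finset.mul_sum] at h4
  have h5 := Finset.add_sum_erase Finset.univ (fun k => JJ d i (fun z => (z k : ℂ) ^ 2) s) (Finset.mem_univ i)
  rw [h3] at h5
  simp only at h5
  rw [h1, h2]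
  have h6 : ∑ k ∈ Finset.univ.erase i, JJ d i (fun z => (z k : ℂ) ^ 2) s
    = JJ d i (fun _ => 1) s - JJ d i (fun z => (z i : ℂ) ^ 2) s := by rw [← h5]; ring
  rw [h6] at h4
  linear_combination (-Complex.I) * h4 + s * (JJ d i (fun _ => 1) s - JJ d i (fun z => (z i : ℂ) ^ 2) s) * Complex.I_sq

lemma energy_bound (B B1 B2 : ℝ → ℂ) (e : ℝ) (he : 1 ≤ e)
    (h1 : ∀ s, HasDerivAt B (B1 s) s) (h2 : ∀ s, HasDerivAt B1 (B2 s) s)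
    (hode : ∀ s : ℝ, (s : ℂ) * B2 s = -(2 * e : ℝ) * B1 s - s * B s) :
    ∃ C : ℝ, ∀ s : ℝ, 1 ≤ s → s ^ e * ‖B s‖ ≤ C := by
  let u : ℝ → ℂ := fun s => s ^ e • B s
  let u1 : ℝ → ℂ := fun s => s ^ e • B1 s + (e * s ^ (e - 1)) • B s
  let c : ℝ := e * (e - 1)
  have hc : 0 ≤ c := mul_nonneg (by linarith) (by linarith)
  have hu : ∀ s, 0 < s → HasDerivAt u (u1 s) s := by
    intro s hs
    exact (Real.hasDerivAt_rpow_const (p := e) (Or.inl hs.ne')).smul (h1 s)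
  have hu1 : ∀ s, 0 < s → HasDerivAt u1 ((c / s ^ 2 - 1) • u s) s := by
    intro s hs
    have p1 := (Real.hasDerivAt_rpow_const (p := e) (Or.inl hs.ne')).smul (h2 s)
    have p2 := ((Real.hasDerivAt_rpow_const (p := e - 1) (Or.inl hs.ne')).const_mul e).smul (h1 s)
    refine (p1.add p2).congr_deriv ?_
    have e1 : s ^ (e - 1) = s ^ e / s := by rw [Real.rpow_sub_one hs.ne']
    have e2 : s ^ (e - 1 - 1) = s ^ e / s / s := by
      rw [Real.rpow_sub_one hs.ne', Real.rpow_sub_one hs.ne']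
    have hs' : (s : ℂ) ≠ 0 := by exact_mod_cast hs.ne'
    have h3 : B2 s = (-(2 * e : ℝ) * B1 s - s * B s) / s := by
      rw [← hode s]; field_simp
    simp only [u, c, Complex.real_smul, e1, e2, h3]
    push_cast
    field_simp
    ring
  let En : ℝ → ℝ := fun s => (‖u s‖ ^ 2 + ‖u1 s‖ ^ 2) * Real.exp (c / s)
  have hEn : ∀ s, 0 < s → HasDerivAt En ((2 * inner ℝ (u s) (u1 s) + 2 * inner ℝ (u1 s) ((c / s ^ 2 - 1) • u s))
      * Real.exp (c / s) + (‖u s‖ ^ 2 + ‖u1 s‖ ^ 2) * (Real.exp (c / s) * (-c / s ^ 2))) s := by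
    intro s hs
    have p := ((hu s hs).norm_sq.add (hu1 s hs).norm_sq)
    have q : HasDerivAt (fun s : ℝ => c / s) (-c / s ^ 2) s := by
      have := (hasDerivAt_inv hs.ne').const_mul c
      refine (this.congr_deriv ?_)
      field_simp
    exact p.mul q.exp
  have hanti : AntitoneOn En (Ici 1) := by
    refine antitoneOn_of_deriv_nonpos (convex_Ici 1) ?_ ?_ ?_
    · intro s hs
      exact (hEn s (by simp at hs; linarith)).continuousAt.continuousWithinAt
    · intro s hs
      rw [interior_Ici] at hs
      exact (hEn s (by simp at hs; linarith)).differentiableAt.differentiableWithinAt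
    · intro s hs
      rw [interior_Ici] at hs
      have hs0 : 0 < s := by simp at hs; linarith
      rw [(hEn s hs0).deriv, inner_smul_right, real_inner_comm]
      have hcs := real_inner_le_norm (u1 s) (u s)
      have hE := Real.exp_pos (c / s)
      have hcc : 0 ≤ c / s ^ 2 := by positivity
      have : (2 * inner ℝ (u1 s) (u s) + 2 * ((c / s ^ 2 - 1) * inner ℝ (u1 s) (u s)))
          = 2 * (c / s ^ 2) * inner ℝ (u1 s) (u s) := by ring
      rw [this]
      have h5 : 2 * (c / s ^ 2) * inner ℝ (u1 s) (u s) ≤ (c / s ^ 2) * (‖u s‖ ^ 2 + ‖u1 s‖ ^ 2) := by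
        have : 2 * inner ℝ (u1 s) (u s) ≤ ‖u s‖ ^ 2 + ‖u1 s‖ ^ 2 := by
          nlinarith [sq_nonneg (‖u s‖ - ‖u1 s‖)]
        nlinarith
      have h6 := mul_le_mul_of_nonneg_right h5 hE.le
      have h7 : (‖u s‖ ^ 2 + ‖u1 s‖ ^ 2) * (Real.exp (c / s) * (-c / s ^ 2))
        = - ((c / s ^ 2) * (‖u s‖ ^ 2 + ‖u1 s‖ ^ 2) * Real.exp (c/s)) := by ring
      rw [h7]; linarith
  refine ⟨Real.sqrt (En 1), fun s hs => ?_⟩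
  have h8 := hanti (mem_Ici.2 le_rfl) (mem_Ici.2 hs) hs
  have hs0 : 0 < s := by linarith
  refine Real.le_sqrt_of_sq_le ?_
  refine le_trans ?_ h8
  have h9 : ‖u s‖ = s ^ e * ‖B s‖ := by
    simp only [u]; rw [norm_smul, Real.norm_of_nonneg (by positivity)]
  rw [← h9]
  have h10 : 1 ≤ Real.exp (c / s) := Real.one_le_exp (by positivity)
  simp only [En]
  nlinarith [sq_nonneg ‖u s‖, sq_nonneg ‖u1 s‖]

lemma nh_decay (d : ℕ) (hd : 4 ≤ d) : ∃ C : ℝ, 0 < C ∧ ∀ ξ : Ed d, ‖nh d ξ‖ ≤ C ∧ ‖nh d ξ‖ * ‖ξ‖ ^ (((d : ℝ) - 1) / 2) ≤ C := by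
  have hfin := sphereM_finite d hd
  let i : Fin d := ⟨0, by omega⟩
  have hd' : (4 : ℝ) ≤ d := by exact_mod_cast hd
  obtain ⟨C, hC⟩ := energy_bound (JJ d i (fun _ => 1)) (JJ d i (fun z => 1 * (z i * Complex.I)))
    (JJ d i (fun z => 1 * (z i * Complex.I) * (z i * Complex.I))) (((d : ℝ) - 1) / 2) (by linarith)
    (fun s => JJ_deriv d hd i _ (by fun_prop) s) (fun s => JJ_deriv d hd i _ (by fun_prop) s)
    (fun s => by rw [JJ_ode d hd i s]; push_cast; ring)
  let M := (sphereM d 1).real univ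
  have hM : 0 ≤ M := measureReal_nonneg
  have hB : ∀ ξ, nh d ξ = JJ d i (fun _ => 1) (2 * Real.pi * ‖ξ‖) := by
    intro ξ
    have h1 : ‖ξ‖ = ‖(EuclideanSpace.single i (-‖ξ‖) : Ed d)‖ := by simp
    rw [nh_radial h1]
    unfold nh JJ EX
    congr 1; ext z
    rw [EuclideanSpace.inner_single_right, one_mul]
    congr 2
    simp; ring
  have hbd : ∀ ξ, ‖nh d ξ‖ ≤ M := by
    intro ξ
    unfold nh
    refine (norm_integral_le_of_norm_le_const (C := 1) (Filter.Eventually.of_forall fun z => ?_)).trans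
      (by simp [M])
    rw [Complex.norm_exp_ofReal_mul_I]
  refine ⟨max C 0 + M + 1, by positivity, fun ξ => ⟨?_, ?_⟩⟩
  · have := hbd ξ; have := le_max_right C 0; linarith
  · by_cases h : 1 ≤ 2 * Real.pi * ‖ξ‖
    · have h1 := hC _ h
      rw [← hB, mul_comm] at h1
      have h2 : ‖ξ‖ ^ (((d : ℝ) - 1) / 2) ≤ (2 * Real.pi * ‖ξ‖) ^ (((d : ℝ) - 1) / 2) := by
        apply Real.rpow_le_rpow (norm_nonneg _) _ (by linarith)
        have := norm_nonneg ξ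
        nlinarith [Real.pi_gt_three]
      have h3 := mul_le_mul_of_nonneg_left h2 (norm_nonneg (nh d ξ))
      have := le_max_left C 0; linarith
    · have h2 : ‖ξ‖ ^ (((d : ℝ) - 1) / 2) ≤ 1 := by
        apply Real.rpow_le_one (norm_nonneg _) _ (by linarith)
        have := norm_nonneg ξ
        nlinarith [Real.pi_gt_three]
      have h3 := mul_le_mul_of_nonneg_left h2 (norm_nonneg (nh d ξ))
      have := hbd ξ; have := le_max_right C 0; linarith

end Bessel

lemma adm_schwartz {d : ℕ} {ψ₀ : Ed d → ℂ} (hψ : Admissible d ψ₀) :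
    ∃ f : SchwartzMap (Ed d) ℂ, (f : Ed d → ℂ) = ψ₀ := by
  have hcs : HasCompactSupport ψ₀ := by
    apply HasCompactSupport.intro (isCompact_closedBall (0 : Ed d) (1/10))
    intro x hx
    by_contra h
    exact hx (by simpa using hψ.2.1 x h)
  exact ⟨hcs.toSchwartzMap hψ.1, rfl⟩

lemma taylor_aux {d : ℕ} (P : Ed d → ℂ) (hP : ContDiff ℝ (⊤ : ℕ∞) P) (N : ℕ)
    (h0 : ∀ n < N, iteratedFDeriv ℝ n P 0 = 0) :
    ∀ m k : ℕ, k + m ≤ N → ∃ C : ℝ, 0 ≤ C ∧ ∀ ξ : Ed d, ‖ξ‖ ≤ 1 →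
      ‖iteratedFDeriv ℝ k P ξ‖ ≤ C * ‖ξ‖ ^ m := by
  intro m
  induction m with
  | zero =>
    intro k _
    have hc : Continuous (iteratedFDeriv ℝ k P) := hP.continuous_iteratedFDeriv (by exact_mod_cast le_top)
    obtain ⟨C, hC⟩ := (isCompact_closedBall (0 : Ed d) 1).exists_bound_of_continuousOn hc.continuousOn
    refine ⟨max C 0, le_max_right _ _, fun ξ hξ => ?_⟩
    simpa using Or.inl (hC ξ (by simpa using hξ))
  | succ m ih =>
    intro k hk
    obtain ⟨C, hC0, hC⟩ := ih (k+1) (by omega)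
    refine ⟨C, hC0, fun ξ hξ => ?_⟩
    have hd : Differentiable ℝ (iteratedFDeriv ℝ k P) :=
      hP.differentiable_iteratedFDeriv (by exact_mod_cast WithTop.coe_lt_top _)
    have := (convex_closedBall (0 : Ed d) ‖ξ‖).norm_image_sub_le_of_norm_fderiv_le (𝕜 := ℝ)
      (f := iteratedFDeriv ℝ k P) (C := C * ‖ξ‖ ^ m) (x := 0) (y := ξ)
      (fun x _ => hd x) (fun x hx => by
        have hx : ‖x‖ ≤ ‖ξ‖ := by simpa using hx
        rw [norm_fderiv_iteratedFDeriv]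
        refine (hC x (hx.trans hξ)).trans ?_
        gcongr) (by simp) (by simp)
    rw [h0 k (by omega)] at this
    simp only [sub_zero] at this
    rw [pow_succ, ← mul_assoc]
    exact this

/-- basic facts on `P = 𝓕 ψ₀` -/
lemma P_facts {d : ℕ} {ψ₀ : Ed d → ℂ} (hψ : Admissible d ψ₀) :
    Continuous (𝓕 ψ₀) ∧ Integrable (𝓕 ψ₀) ∧ (∃ B : ℝ, 0 < B ∧ ∀ ξ, ‖𝓕 ψ₀ ξ‖ ≤ B) ∧
    (∀ ξ η : Ed d, ‖ξ‖ = ‖η‖ → 𝓕 ψ₀ ξ = 𝓕 ψ₀ η) := by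
  obtain ⟨f, hf⟩ := adm_schwartz hψ
  have h1 : 𝓕 ψ₀ = ((𝓕 f : SchwartzMap (Ed d) ℂ) : Ed d → ℂ) := by
    rw [← hf, SchwartzMap.fourier_coe]
  refine ⟨h1 ▸ (𝓕 f).continuous, h1 ▸ (𝓕 f).integrable, ?_, ?_⟩
  · obtain ⟨C, hC⟩ := (𝓕 f).decay 0 0
    refine ⟨C, hC.1, fun ξ => ?_⟩
    have := hC.2 ξ
    rw [h1]; simpa using this
  · intro ξ η h
    obtain ⟨e, he⟩ := exists_isom h
    have := Real.fourier_comp_linearIsometry e ψ₀ ξ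
    have h2 : ψ₀ ∘ e = ψ₀ := by
      funext x; exact hψ.2.2.1 _ _ (by simp)
    rw [h2] at this
    rw [this]; simp [he]

lemma P_taylor {d : ℕ} {ψ₀ : Ed d → ℂ} (hψ : Admissible d ψ₀) (q : ℝ) (hq0 : 0 ≤ q) (hq : q ≤ d) :
    ∃ C : ℝ, 0 < C ∧ ∀ ξ, ‖𝓕 ψ₀ ξ‖ ≤ C * ‖ξ‖ ^ q := by
  obtain ⟨hc, hi, ⟨B, hB0, hB⟩, hr⟩ := P_facts hψ
  obtain ⟨f, hf⟩ := adm_schwartz hψ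
  have h1 : 𝓕 ψ₀ = ((𝓕 f : SchwartzMap (Ed d) ℂ) : Ed d → ℂ) := by
    rw [← hf, SchwartzMap.fourier_coe]
  obtain ⟨C, hC0, hC⟩ := taylor_aux (𝓕 ψ₀) (h1 ▸ (𝓕 f).smooth _) (20*d) hψ.2.2.2 d 0 (by omega)
  refine ⟨max C B, lt_max_of_lt_right hB0, fun ξ => ?_⟩
  rcases le_or_gt ‖ξ‖ 1 with h | h
  · have h2 := hC ξ h
    rw [norm_iteratedFDeriv_zero] at h2
    refine h2.trans ?_
    have h3 : ‖ξ‖ ^ d ≤ ‖ξ‖ ^ q := by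
      rcases eq_or_lt_of_le (norm_nonneg ξ) with h0 | h0
      · rw [← h0]
        rcases Nat.eq_zero_or_pos d with hd | hd
        · have : q = 0 := le_antisymm (by simpa [hd] using hq) hq0
          simp [hd, this]
        · rw [zero_pow (by omega)]; positivity
      · rw [← Real.rpow_natCast]
        exact Real.rpow_le_rpow_of_exponent_ge h0 h hq
    exact mul_le_mul (le_max_left _ _) h3 (by positivity) (by positivity)
  · refine (hB ξ).trans ?_
    have : 1 ≤ ‖ξ‖ ^ q := Real.one_le_rpow h.le hq0
    calc B ≤ max C B := le_max_right _ _
      _ = max C B * 1 := by ring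
      _ ≤ _ := by gcongr

lemma key1 {d : ℕ} (hd : 4 ≤ d) {ψ₀ : Ed d → ℂ} (hψ : Admissible d ψ₀) :
    ∃ C : ℝ, 0 < C ∧ ∀ t : ℝ, 0 < t → ∀ ξ, ‖nh d (t • ξ)‖ * ‖𝓕 ψ₀ ξ‖ ≤ C * t ^ (-(((d:ℝ)-1)/2)) := by
  have hd' : (4:ℝ) ≤ d := by exact_mod_cast hd
  obtain ⟨C, hC0, hC⟩ := P_taylor hψ (((d:ℝ)-1)/2) (by linarith) (by linarith)
  obtain ⟨C', hC0', hC'⟩ := nh_decay d hd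
  refine ⟨C' * C, by positivity, fun t ht ξ => ?_⟩
  have h1 := (hC' (t • ξ)).2
  rw [norm_smul, Real.norm_of_nonneg ht.le, Real.mul_rpow ht.le (norm_nonneg _)] at h1
  have h2 := hC ξ
  have ht' : 0 < t ^ (((d:ℝ)-1)/2) := by positivity
  rw [Real.rpow_neg ht.le, ← div_eq_mul_inv, le_div_iff₀ ht']
  calc _ ≤ ‖nh d (t • ξ)‖ * (C * ‖ξ‖ ^ (((d:ℝ)-1)/2)) * t ^ (((d:ℝ)-1)/2) := by gcongr
    _ = (‖nh d (t • ξ)‖ * (t ^ (((d:ℝ)-1)/2) * ‖ξ‖ ^ (((d:ℝ)-1)/2))) * C := by ring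
    _ ≤ _ := by gcongr

lemma key2 {d : ℕ} (hd : 4 ≤ d) {ψ₀ : Ed d → ℂ} (hψ : Admissible d ψ₀) :
    ∃ C : ℝ, 0 < C ∧ ∀ t : ℝ, 0 < t → ∀ s : ℝ, 0 < s → ∀ ξ,
      ‖nh d (t • ξ)‖ * ‖nh d (s • ξ)‖ * ‖𝓕 ψ₀ ξ‖
        ≤ C * (t ^ (-(((d:ℝ)-1)/2)) * s ^ (-(((d:ℝ)-1)/2))) := by
  have hd' : (4:ℝ) ≤ d := by exact_mod_cast hd
  obtain ⟨C, hC0, hC⟩ := P_taylor hψ ((d:ℝ)-1) (by linarith) (by linarith)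
  obtain ⟨C', hC0', hC'⟩ := nh_decay d hd
  refine ⟨C' * C' * C, by positivity, fun t ht s hs ξ => ?_⟩
  have h1 := (hC' (t • ξ)).2
  rw [norm_smul, Real.norm_of_nonneg ht.le, Real.mul_rpow ht.le (norm_nonneg _)] at h1
  have h1' := (hC' (s • ξ)).2
  rw [norm_smul, Real.norm_of_nonneg hs.le, Real.mul_rpow hs.le (norm_nonneg _)] at h1'
  have h2 := hC ξ
  have h3 : ‖ξ‖ ^ ((d:ℝ)-1) = ‖ξ‖ ^ (((d:ℝ)-1)/2) * ‖ξ‖ ^ (((d:ℝ)-1)/2) := by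
    rw [← Real.rpow_add_of_nonneg (norm_nonneg _) (by linarith) (by linarith)]; congr 1; ring
  have ht' : 0 < t ^ (((d:ℝ)-1)/2) := by positivity
  have hs' : 0 < s ^ (((d:ℝ)-1)/2) := by positivity
  rw [Real.rpow_neg ht.le, Real.rpow_neg hs.le, ← mul_inv, ← div_eq_mul_inv, le_div_iff₀ (by positivity)]
  calc _ ≤ ‖nh d (t • ξ)‖ * ‖nh d (s • ξ)‖ * (C * ‖ξ‖ ^ ((d:ℝ)-1)) * (t ^ (((d:ℝ)-1)/2) * s ^ (((d:ℝ)-1)/2)) := by gcongr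
    _ = (‖nh d (t • ξ)‖ * (t ^ (((d:ℝ)-1)/2) * ‖ξ‖ ^ (((d:ℝ)-1)/2))) *
       (‖nh d (s • ξ)‖ * (s ^ (((d:ℝ)-1)/2) * ‖ξ‖ ^ (((d:ℝ)-1)/2))) * C := by rw [h3]; ring
    _ ≤ _ := by gcongr

lemma psi_facts {d : ℕ} {ψ₀ : Ed d → ℂ} (hψ : Admissible d ψ₀) :
    Continuous (psiOf d ψ₀) ∧ (∀ x, psiOf d ψ₀ x ≠ 0 → ‖x‖ ≤ 1/5) ∧
    (∀ ξ, 𝓕 (psiOf d ψ₀) ξ = 𝓕 ψ₀ ξ ^ 2) := by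
  have hcs : HasCompactSupport ψ₀ := by
    apply HasCompactSupport.intro (isCompact_closedBall (0 : Ed d) (1/10))
    intro x hx
    by_contra h
    exact hx (by simpa using hψ.2.1 x h)
  have hc : Continuous ψ₀ := hψ.1.continuous
  have hi : Integrable ψ₀ := hc.integrable_of_hasCompactSupport hcs
  have heq : psiOf d ψ₀ = convolution ψ₀ ψ₀ (ContinuousLinearMap.mul ℂ ℂ) volume := by
    funext x; simp [psiOf, convolution]
  refine ⟨?_, ?_, ?_⟩
  · rw [heq]
    exact hcs.continuous_convolution_right _ hi.locallyIntegrable hc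
  · intro x hx
    by_contra hlt
    apply hx
    unfold psiOf
    rw [integral_eq_zero_of_ae]
    filter_upwards with y
    by_contra h
    simp only [Pi.zero_apply] at h
    have h1 := hψ.2.1 y (left_ne_zero_of_mul h)
    have h2 := hψ.2.1 (x-y) (right_ne_zero_of_mul h)
    have h3 : ‖x‖ ≤ ‖y‖ + ‖x - y‖ := by simpa using norm_add_le y (x-y)
    exact hlt (by linarith)
  · intro ξ
    rw [heq, Real.fourier_mul_convolution_eq hi hi, sq]

lemma psi_more {d : ℕ} {ψ₀ : Ed d → ℂ} (hψ : Admissible d ψ₀) :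
    HasCompactSupport (psiOf d ψ₀) ∧ Integrable (psiOf d ψ₀) ∧
    (∃ B : ℝ, 0 < B ∧ ∀ x, ‖psiOf d ψ₀ x‖ ≤ B) := by
  obtain ⟨hc, hs, _⟩ := psi_facts hψ
  have hcs : HasCompactSupport (psiOf d ψ₀) := by
    apply HasCompactSupport.intro (isCompact_closedBall (0 : Ed d) (1/5))
    intro x hx
    by_contra h
    exact hx (by simpa using hs x h)
  refine ⟨hcs, hc.integrable_of_hasCompactSupport hcs, ?_⟩
  obtain ⟨B, hB⟩ := hcs.exists_bound_of_continuous hc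
  exact ⟨max B 1, by positivity, fun x => (hB x).trans (le_max_left _ _)⟩

/-- scaled version of `Fyr`, jointly continuous -/
def FF (d : ℕ) (ψ₀ : Ed d → ℂ) (q : (Ed d × ℝ) × Ed d) : ℂ :=
  (q.1.2 : ℂ) ^ (d-1) * ∫ z, psiOf d ψ₀ (q.2 - q.1.1 - q.1.2 • z) ∂(sphereM d 1)

lemma Fyr_eq_FF {d : ℕ} (hd : 4 ≤ d) (ψ₀ : Ed d → ℂ) (y : Ed d) (r : ℝ) (hr : 0 < r) (x : Ed d) :
    Fyr d ψ₀ y r x = FF d ψ₀ ((y, r), x) := by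
  unfold Fyr FF
  rw [sphereM_integral_scale d hd r hr]

lemma FF_continuous {d : ℕ} (hd : 4 ≤ d) {ψ₀ : Ed d → ℂ} (hψ : Admissible d ψ₀) :
    Continuous (FF d ψ₀) := by
  have := sphereM_finite d hd
  obtain ⟨hc, hs, _⟩ := psi_facts hψ
  obtain ⟨_, _, B, hB0, hB⟩ := psi_more hψ
  unfold FF
  apply Continuous.mul (by fun_prop)
  apply continuous_of_dominated (bound := fun _ => B)
  · intro q
    exact (hc.comp (by fun_prop)).aestronglyMeasurable
  · intro q; filter_upwards with z using hB _
  · exact integrable_const _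
  · filter_upwards with z
    exact hc.comp (by fun_prop)

lemma Fyr_continuous {d : ℕ} (hd : 4 ≤ d) {ψ₀ : Ed d → ℂ} (hψ : Admissible d ψ₀) (y : Ed d) (r : ℝ) (hr : 0 < r) :
    Continuous (Fyr d ψ₀ y r) := by
  have : Fyr d ψ₀ y r = fun x => FF d ψ₀ ((y, r), x) := by
    funext x; exact Fyr_eq_FF hd ψ₀ y r hr x
  rw [this]
  exact (FF_continuous hd hψ).comp (by fun_prop)

lemma Fyr_supp {d : ℕ} {ψ₀ : Ed d → ℂ} (hψ : Admissible d ψ₀) (y : Ed d) (r : ℝ) (x : Ed d)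
    (h : Fyr d ψ₀ y r x ≠ 0) : |‖x - y‖ - r| ≤ 1/5 := by
  by_contra hlt
  apply h
  unfold Fyr
  rw [integral_eq_zero_of_ae]
  filter_upwards [sphereM_ae d r] with z hz
  by_contra h
  have h2 := (psi_facts hψ).2.1 _ h
  rw [← hz] at hlt
  exact hlt ((abs_norm_sub_norm_le _ _).trans h2)

lemma Fyr_cs {d : ℕ} {ψ₀ : Ed d → ℂ} (hψ : Admissible d ψ₀) (y : Ed d) (r : ℝ) :
    HasCompactSupport (Fyr d ψ₀ y r) := by
  apply HasCompactSupport.intro (isCompact_closedBall y (r+1/5))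
  intro x hx
  by_contra h
  apply hx
  have := abs_le.1 (Fyr_supp hψ y r x h)
  rw [mem_closedBall, dist_eq_norm]; linarith

lemma Fyr_integrable {d : ℕ} (hd : 4 ≤ d) {ψ₀ : Ed d → ℂ} (hψ : Admissible d ψ₀) (y : Ed d) (r : ℝ) (hr : 0 < r) :
    Integrable (Fyr d ψ₀ y r) :=
  (Fyr_continuous hd hψ y r hr).integrable_of_hasCompactSupport (Fyr_cs hψ y r)

/-- the phase -/
def ph {d : ℕ} (y ξ : Ed d) : ℂ := Complex.exp (((-2 * Real.pi * inner ℝ y ξ : ℝ) : ℂ) * Complex.I)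

lemma ph_norm {d : ℕ} (y ξ : Ed d) : ‖ph y ξ‖ = 1 := Complex.norm_exp_ofReal_mul_I _

lemma ph_cont {d : ℕ} : Continuous (fun q : Ed d × Ed d => ph q.1 q.2) := by
  unfold ph; fun_prop

lemma ph_cont1 {d : ℕ} (ξ : Ed d) : Continuous (fun y : Ed d => ph y ξ) := by
  unfold ph; fun_prop

lemma ph_cont2 {d : ℕ} (y : Ed d) : Continuous (fun ξ : Ed d => ph y ξ) := by
  unfold ph; fun_prop

lemma ph_add {d : ℕ} (y z ξ : Ed d) : ph (y + z) ξ = ph y ξ * ph z ξ := by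
  unfold ph
  rw [← Complex.exp_add, inner_add_left]; congr 1; push_cast; ring

lemma ph_smul {d : ℕ} (r : ℝ) (z ξ : Ed d) : ph (r • z) ξ = ph z (r • ξ) := by
  unfold ph; rw [real_inner_smul_left, real_inner_smul_right]

lemma ph_conj {d : ℕ} (y ξ : Ed d) : (starRingEnd ℂ) (ph y ξ) = ph (-y) ξ := by
  unfold ph; rw [← Complex.exp_conj, map_mul, Complex.conj_ofReal, Complex.conj_I, inner_neg_left]; congr 1; push_cast; ring

lemma nh_eq {d : ℕ} (ξ : Ed d) : nh d ξ = ∫ z, ph z ξ ∂(sphereM d 1) := rfl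

lemma four_eq {d : ℕ} (f : Ed d → ℂ) (ξ : Ed d) : 𝓕 f ξ = ∫ x, ph x ξ * f x := by
  rw [Real.fourier_eq']; rfl

lemma four_trans {d : ℕ} (f : Ed d → ℂ) (y ξ : Ed d) :
    ∫ x, ph x ξ * f (x - y) = ph y ξ * 𝓕 f ξ := by
  rw [← integral_add_right_eq_self _ y, four_eq, ← integral_const_mul]
  congr 1; funext x
  rw [ph_add]; simp only [add_sub_cancel_right]; ring

lemma Fyr_fourier {d : ℕ} (hd : 4 ≤ d) {ψ₀ : Ed d → ℂ} (hψ : Admissible d ψ₀) (y : Ed d) (r : ℝ) (hr : 0 < r)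
    (ξ : Ed d) : 𝓕 (Fyr d ψ₀ y r) ξ = (r:ℂ)^(d-1) * (nh d (r • ξ) * 𝓕 ψ₀ ξ ^ 2 * ph y ξ) := by
  have := sphereM_finite d hd
  obtain ⟨hc, hs, hF⟩ := psi_facts hψ
  obtain ⟨_, hi, _⟩ := psi_more hψ
  rw [four_eq]
  have h1 : ∀ x, ph x ξ * Fyr d ψ₀ y r x = (r:ℂ)^(d-1) *
      ∫ z, ph x ξ * psiOf d ψ₀ (x - (y + r • z)) ∂(sphereM d 1) := by
    intro x
    rw [Fyr_eq_FF hd ψ₀ y r hr, integral_const_mul]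
    simp only [FF, sub_sub]; ring
  simp_rw [h1]
  rw [integral_const_mul, integral_integral_swap]
  · congr 1
    simp_rw [four_trans, hF, ph_add, ph_smul]
    rw [nh_eq, ← integral_mul_const, ← integral_mul_const]
    congr 1; funext z; ring
  · have hm : Continuous (Function.uncurry fun (x z : Ed d) => ph x ξ * psiOf d ψ₀ (x - (y + r • z))) := by
      apply Continuous.mul
      · exact (ph_cont1 ξ).comp continuous_fst
      · exact hc.comp (by fun_prop)
    rw [integrable_prod_iff' hm.aestronglyMeasurable]
    constructor
    · filter_upwards with z
      have h2 : Integrable (fun x => psiOf d ψ₀ (x - (y + r • z))) := hi.comp_sub_right _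
      refine h2.mono ?_ ?_
      · exact (hm.comp (by fun_prop : Continuous fun x : Ed d => (x, z))).aestronglyMeasurable
      · filter_upwards with x
        simp [Function.uncurry, ph_norm]
    · have : ∀ z : Ed d, ∫ x, ‖(Function.uncurry fun (x z : Ed d) => ph x ξ * psiOf d ψ₀ (x - (y + r • z))) (x, z)‖ = ∫ x, ‖psiOf d ψ₀ x‖ := by
        intro z
        simp only [Function.uncurry, norm_mul, ph_norm, one_mul]
        exact integral_sub_right_eq_self (fun x => ‖psiOf d ψ₀ x‖) _
      simp_rw [this]
      exact integrable_const _

lemma plancherel {d : ℕ} {f g : Ed d → ℂ} (hf : Integrable f) (hgc : Continuous g) (hg : Integrable g)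
    (hg' : Integrable (𝓕 g)) : ∫ ξ, inner ℂ (𝓕 f ξ) (𝓕 g ξ) = ∫ x, inner ℂ (f x) (g x) := by
  have h := VectorFourier.integral_sesq_fourierIntegral_eq_neg_flip (innerSL ℂ : ℂ →L⋆[ℂ] ℂ →L[ℂ] ℂ)
    (L := innerₗ (Ed d)) Real.continuous_fourierChar continuous_inner hf hg'
  have h2 := hgc.fourierInv_fourier_eq hg hg'
  have h3 : ∫ x, inner ℂ (f x) (g x) = ∫ x, inner ℂ (f x) (𝓕⁻ (𝓕 g) x) := by rw [h2]
  rw [h3]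
  simpa using! h

lemma nh_cont (d : ℕ) (hd : 4 ≤ d) : Continuous (nh d) := by
  have := sphereM_finite d hd
  have : nh d = fun ξ => ∫ z, ph z ξ ∂(sphereM d 1) := by funext ξ; rfl
  rw [this]
  apply continuous_of_dominated (bound := fun _ => 1)
  · intro ξ; exact (ph_cont1 ξ).aestronglyMeasurable
  · intro ξ; filter_upwards with z; rw [ph_norm]
  · exact integrable_const _
  · filter_upwards with z; exact ph_cont2 z

lemma ph_symm {d : ℕ} (y ξ : Ed d) : ph y ξ = ph ξ y := by
  unfold ph; rw [real_inner_comm]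

lemma four_radial {d : ℕ} (m : Ed d → ℂ)
    (hr : ∀ x y : Ed d, ‖x‖ = ‖y‖ → m x = m y) (ξ η : Ed d) (h : ‖ξ‖ = ‖η‖) : 𝓕 m ξ = 𝓕 m η := by
  obtain ⟨e, he⟩ := exists_isom h
  have := Real.fourier_comp_linearIsometry e m ξ
  have h2 : m ∘ e = m := by
    funext x; exact hr _ _ (by simp)
  rw [h2] at this
  rw [this]; simp [he]

lemma rot_swap {d : ℕ} (μ : Measure (Ed d)) [IsFiniteMeasure μ] (m : Ed d → ℂ) (hm : Integrable m) (t : ℝ) :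
    ∫ ξ, ∫ z, ph z (t • ξ) * m ξ ∂μ = ∫ z, (∫ ξ, ph z (t • ξ) * m ξ) ∂μ := by
  have h1 : Integrable (fun q : Ed d × Ed d => m q.1) ((volume : Measure (Ed d)).prod μ) := hm.comp_fst μ
  have hc : Continuous (fun q : Ed d × Ed d => ph q.2 (t • q.1)) := by
    unfold ph; fun_prop
  have hb : ∀ᵐ q : Ed d × Ed d ∂((volume : Measure (Ed d)).prod μ), ‖ph q.2 (t • q.1)‖ ≤ 1 :=
    Filter.Eventually.of_forall (fun q => (ph_norm _ _).le)
  have h2 := h1.bdd_mul hc.aestronglyMeasurable hb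
  exact integral_integral_swap (f := fun ξ z => ph z (t • ξ) * m ξ) h2

lemma rot_avg {d : ℕ} (hd : 4 ≤ d) (m : Ed d → ℂ) (hm : Integrable m)
    (hr : ∀ x y : Ed d, ‖x‖ = ‖y‖ → m x = m y) (v : Ed d) :
    ((sphereM d 1).real univ : ℂ) * 𝓕 m v = ∫ ξ, nh d (‖v‖ • ξ) * m ξ := by
  have := sphereM_finite d hd
  have e1 : ∫ ξ, nh d (‖v‖ • ξ) * m ξ = ∫ ξ, ∫ z, ph z (‖v‖ • ξ) * m ξ ∂(sphereM d 1) := by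
    congr 1; funext ξ; rw [nh_eq, integral_mul_const]
  have e2 : ∫ z, (∫ ξ, ph z (‖v‖ • ξ) * m ξ) ∂(sphereM d 1) = ∫ z, 𝓕 m v ∂(sphereM d 1) := by
    apply integral_congr_ae
    filter_upwards [sphereM_ae d 1] with z hz
    rw [four_radial m hr v (‖v‖ • z) (by simp [norm_smul, hz]), four_eq]
    congr 1; funext ξ
    rw [← ph_smul, ph_symm]
  rw [e1, rot_swap _ m hm, e2, integral_const]
  simp

lemma ofReal_pow_norm (r : ℝ) (hr : 0 < r) (n : ℕ) : ‖(r:ℂ)^n‖ = r^n := by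
  rw [norm_pow, Complex.norm_real, Real.norm_of_nonneg hr.le]

lemma int_mul_P {d : ℕ} {ψ₀ : Ed d → ℂ} (hψ : Admissible d ψ₀) (g : Ed d → ℂ) (hg : Continuous g)
    (B : ℝ) (hB : ∀ ξ, ‖g ξ‖ ≤ B) : Integrable (fun ξ => g ξ * 𝓕 ψ₀ ξ) := by
  obtain ⟨hc, hi, _, hr⟩ := P_facts hψ
  exact hi.bdd_mul hg.aestronglyMeasurable (c := B) (by filter_upwards with x using hB x)

lemma Fyr_fourier_int {d : ℕ} (hd : 4 ≤ d) {ψ₀ : Ed d → ℂ} (hψ : Admissible d ψ₀) (y : Ed d) (r : ℝ) (hr : 0 < r) :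
    Integrable (𝓕 (Fyr d ψ₀ y r)) := by
  obtain ⟨hc, hi, ⟨B, hB0, hB⟩, _⟩ := P_facts hψ
  obtain ⟨C, hC0, hC⟩ := nh_decay d hd
  have : 𝓕 (Fyr d ψ₀ y r) = fun ξ => ((r:ℂ)^(d-1) * (nh d (r • ξ) * 𝓕 ψ₀ ξ * ph y ξ)) * 𝓕 ψ₀ ξ := by
    funext ξ; rw [Fyr_fourier hd hψ y r hr]; ring
  rw [this]
  apply int_mul_P hψ _ _ (r^(d-1) * (C * B * 1))
  · intro ξ
    rw [norm_mul, norm_mul, norm_mul, ofReal_pow_norm r hr, ph_norm]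
    have := (hC (r • ξ)).1
    have := hB ξ
    gcongr
  · exact continuous_const.mul ((((nh_cont d hd).comp (by fun_prop)).mul hc).mul (ph_cont2 y))

lemma pow_split {d : ℕ} (hd : 4 ≤ d) (r : ℝ) (hr : 0 < r) :
    r^(d-1) = r^(((d:ℝ)-1)/2) * r^(((d:ℝ)-1)/2) := by
  rw [← Real.rpow_add hr, ← Real.rpow_natCast]
  congr 1
  rw [Nat.cast_sub (by omega)]; push_cast; ring

lemma I1_aux {d : ℕ} (hd : 4 ≤ d) {ψ₀ : Ed d → ℂ} (hψ : Admissible d ψ₀) :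
    ∃ C : ℝ, 0 < C ∧ ∀ (y : Ed d) (r : ℝ), 1 ≤ r → ∀ x, ‖((sphereM d 1).real univ : ℂ) * Fyr d ψ₀ y r x‖ ≤ C := by
  have hd' : (4:ℝ) ≤ d := by exact_mod_cast hd
  obtain ⟨hc, hi, ⟨B, hB0, hB⟩, hrad⟩ := P_facts hψ
  obtain ⟨C, hC0, hC⟩ := nh_decay d hd
  obtain ⟨C2, hC20, hC2⟩ := key2 hd hψ
  set D := C2 * (4/5:ℝ)^(-(((d:ℝ)-1)/2)) * ∫ ξ, ‖𝓕 ψ₀ ξ‖ with hD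
  refine ⟨D + 1, by positivity, ?_⟩
  intro y r hr1 x
  have hr : 0 < r := by linarith
  by_cases hx : Fyr d ψ₀ y r x = 0
  · rw [hx]; simp; positivity
  have hsup := abs_le.1 (Fyr_supp hψ y r x hx)
  have hv : 4/5 * r ≤ ‖y - x‖ := by rw [norm_sub_rev]; linarith
  have hv0 : 0 < ‖y - x‖ := by linarith
  set m : Ed d → ℂ := fun ξ => nh d (r • ξ) * 𝓕 ψ₀ ξ ^ 2 with hm
  have hmi : Integrable m := by
    have : m = fun ξ => (nh d (r • ξ) * 𝓕 ψ₀ ξ) * 𝓕 ψ₀ ξ := by funext ξ; simp only [hm]; ring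
    rw [this]
    apply int_mul_P hψ _ _ (C * B)
    · intro ξ; rw [norm_mul]
      have := (hC (r • ξ)).1
      have := hB ξ
      gcongr
    · exact ((nh_cont d hd).comp (by fun_prop)).mul hc
  have hmr : ∀ a b : Ed d, ‖a‖ = ‖b‖ → m a = m b := by
    intro a b hab
    simp only [hm]
    rw [hrad a b hab, nh_radial (ξ := r • a) (η := r • b) (by simp [norm_smul, hab])]
  have hinv := congrFun ((Fyr_continuous hd hψ y r hr).fourierInv_fourier_eq
    (Fyr_integrable hd hψ y r hr) (Fyr_fourier_int hd hψ y r hr)) x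
  have hF : Fyr d ψ₀ y r x = (r:ℂ)^(d-1) * 𝓕 m (y - x) := by
    rw [← hinv, Real.fourierInv_eq_fourier_neg, four_eq, four_eq, ← integral_const_mul]
    congr 1; funext ξ
    rw [Fyr_fourier hd hψ y r hr, sub_eq_add_neg, ph_symm ξ (y + -x), ph_add, ph_symm (-x) ξ]
    simp only [hm]; ring
  rw [hF]
  have := rot_avg hd m hmi hmr (y - x)
  rw [show ((sphereM d 1).real univ : ℂ) * ((r:ℂ)^(d-1) * 𝓕 m (y - x)) =
    (r:ℂ)^(d-1) * (((sphereM d 1).real univ : ℂ) * 𝓕 m (y - x)) by ring, this, norm_mul, ofReal_pow_norm r hr]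
  have hb : ‖∫ ξ, nh d (‖y-x‖ • ξ) * m ξ‖ ≤ ∫ ξ, C2 * (‖y-x‖ ^ (-(((d:ℝ)-1)/2)) * r ^ (-(((d:ℝ)-1)/2))) * ‖𝓕 ψ₀ ξ‖ := by
    apply norm_integral_le_of_norm_le (hi.norm.const_mul _)
    filter_upwards with ξ
    have := hC2 _ hv0 _ hr ξ
    calc ‖nh d (‖y-x‖ • ξ) * m ξ‖ = (‖nh d (‖y-x‖ • ξ)‖ * ‖nh d (r • ξ)‖ * ‖𝓕 ψ₀ ξ‖) * ‖𝓕 ψ₀ ξ‖ := by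
          simp only [hm, norm_mul, norm_pow]; ring
      _ ≤ _ := by gcongr
  rw [integral_const_mul] at hb
  have h2 : ‖y-x‖ ^ (-(((d:ℝ)-1)/2)) ≤ (4/5:ℝ)^(-(((d:ℝ)-1)/2)) * r ^ (-(((d:ℝ)-1)/2)) := by
    rw [← Real.mul_rpow (by norm_num) hr.le]
    exact Real.rpow_le_rpow_of_nonpos (by positivity) hv (by linarith)
  have h3 : r^(d-1) * (r ^ (-(((d:ℝ)-1)/2)) * r ^ (-(((d:ℝ)-1)/2))) = 1 := by
    rw [pow_split hd r hr, Real.rpow_neg hr.le]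
    have : r ^ (((d:ℝ)-1)/2) ≠ 0 := by positivity
    field_simp
  calc _ ≤ r^(d-1) * (C2 * (((4/5:ℝ)^(-(((d:ℝ)-1)/2)) * r ^ (-(((d:ℝ)-1)/2))) * r ^ (-(((d:ℝ)-1)/2))) * ∫ ξ, ‖𝓕 ψ₀ ξ‖) := by
        gcongr
        refine hb.trans ?_
        have : 0 ≤ ∫ ξ, ‖𝓕 ψ₀ ξ‖ := by positivity
        gcongr
    _ = (r^(d-1) * (r ^ (-(((d:ℝ)-1)/2)) * r ^ (-(((d:ℝ)-1)/2)))) * D := by rw [hD]; ring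
    _ ≤ D + 1 := by rw [h3]; linarith

lemma I1 {d : ℕ} (hd : 4 ≤ d) {ψ₀ : Ed d → ℂ} (hψ : Admissible d ψ₀) :
    ∃ C : ℝ, 0 < C ∧ ∀ (y : Ed d) (r : ℝ), 1 ≤ r → ∀ x, ‖Fyr d ψ₀ y r x‖ ≤ C := by
  have := sphereM_finite d hd
  obtain ⟨C, hC0, hC⟩ := I1_aux hd hψ
  rcases eq_or_lt_of_le (measureReal_nonneg (μ := sphereM d 1) (s := univ)) with h | h
  · refine ⟨1, one_pos, fun y r hr x => ?_⟩
    have h0 : sphereM d 1 = 0 := by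
      rw [← Measure.measure_univ_eq_zero]
      exact (measureReal_eq_zero_iff).1 h.symm
    rw [Fyr_eq_FF hd ψ₀ y r (by linarith)]
    simp [FF, h0]
  · refine ⟨C / (sphereM d 1).real univ, by positivity, fun y r hr x => ?_⟩
    rw [le_div_iff₀ h]
    have := hC y r hr x
    rw [norm_mul, Complex.norm_real, Real.norm_of_nonneg h.le] at this
    linarith

lemma Fyr_memLp {d : ℕ} (hd : 4 ≤ d) {ψ₀ : Ed d → ℂ} (hψ : Admissible d ψ₀) (y : Ed d) (r : ℝ) (hr : 0 < r) :
    MemLp (Fyr d ψ₀ y r) 2 volume :=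
  (Fyr_continuous hd hψ y r hr).memLp_of_hasCompactSupport (Fyr_cs hψ y r)

open Classical in
/-- `F_{y,r}` as an element of `L²`. -/
def Phi (d : ℕ) (ψ₀ : Ed d → ℂ) (a : Ed d × ℝ) : Lp ℂ 2 (volume : Measure (Ed d)) :=
  if h : MemLp (Fyr d ψ₀ a.1 a.2) 2 volume then h.toLp _ else 0

lemma Phi_ae {d : ℕ} (hd : 4 ≤ d) {ψ₀ : Ed d → ℂ} (hψ : Admissible d ψ₀) (a : Ed d × ℝ) (hr : 0 < a.2) :
    (Phi d ψ₀ a : Ed d → ℂ) =ᵐ[volume] Fyr d ψ₀ a.1 a.2 := by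
  unfold Phi
  rw [dif_pos (Fyr_memLp hd hψ a.1 a.2 hr)]
  exact MemLp.coeFn_toLp _

lemma Phi_inner {d : ℕ} (hd : 4 ≤ d) {ψ₀ : Ed d → ℂ} (hψ : Admissible d ψ₀) (a b : Ed d × ℝ) (hr : 0 < a.2)
    (hb : 0 < b.2) :
    inner ℂ (Phi d ψ₀ a) (Phi d ψ₀ b) = ∫ x, inner ℂ (Fyr d ψ₀ a.1 a.2 x) (Fyr d ψ₀ b.1 b.2 x) := by
  rw [L2.inner_def]
  apply integral_congr_ae
  filter_upwards [Phi_ae hd hψ a hr, Phi_ae hd hψ b hb] with x h1 h2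
  rw [h1, h2]

lemma I4 {d : ℕ} (hd : 4 ≤ d) {ψ₀ : Ed d → ℂ} (hψ : Admissible d ψ₀) (a b : Ed d × ℝ) (ha : 1 ≤ a.2)
    (hb : 1 ≤ b.2) (h : ‖a.1 - b.1‖ + 1 < |a.2 - b.2| ∨ a.2 + b.2 + 1 < ‖a.1 - b.1‖) :
    inner ℂ (Phi d ψ₀ a) (Phi d ψ₀ b) = 0 := by
  rw [Phi_inner hd hψ a b (by linarith) (by linarith)]
  apply integral_eq_zero_of_ae
  filter_upwards with x
  by_contra h0
  simp only [RCLike.inner_apply, Pi.zero_apply] at h0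
  have h1 := abs_le.1 (Fyr_supp hψ _ _ _ (left_ne_zero_of_mul h0))
  have h2 := abs_le.1 (Fyr_supp hψ _ _ _ (by simpa using right_ne_zero_of_mul h0))
  have t1 : ‖a.1 - b.1‖ ≤ ‖x - a.1‖ + ‖x - b.1‖ := by
    have := norm_sub_le (x - b.1) (x - a.1)
    simp only [sub_sub_sub_cancel_left] at this; linarith
  have t2 : ‖x - a.1‖ - ‖x - b.1‖ ≤ ‖a.1 - b.1‖ := by
    have := norm_sub_norm_le (x - a.1) (x - b.1)
    rw [sub_sub_sub_cancel_left, norm_sub_rev b.1 a.1] at this; linarith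
  have t3 : ‖x - b.1‖ - ‖x - a.1‖ ≤ ‖a.1 - b.1‖ := by
    have := norm_sub_norm_le (x - b.1) (x - a.1)
    rw [sub_sub_sub_cancel_left] at this; linarith
  rcases h with h | h
  · rcases abs_cases (a.2 - b.2) with h' | h' <;> linarith
  · linarith

lemma key1' {d : ℕ} (hd : 4 ≤ d) {ψ₀ : Ed d → ℂ} (hψ : Admissible d ψ₀) :
    ∃ C : ℝ, 0 < C ∧ ∀ t : ℝ, 0 ≤ t → ∀ ξ,
      ‖nh d (t • ξ)‖ * ‖𝓕 ψ₀ ξ‖ * (1 + t) ^ (((d:ℝ)-1)/2) ≤ C := by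
  have hd' : (4:ℝ) ≤ d := by exact_mod_cast hd
  obtain ⟨C1, hC10, hC1⟩ := key1 hd hψ
  obtain ⟨C, hC0, hC⟩ := nh_decay d hd
  obtain ⟨hc, hi, ⟨B, hB0, hB⟩, hrad⟩ := P_facts hψ
  refine ⟨max C1 (C * B) * 2 ^ (((d:ℝ)-1)/2), by positivity, fun t ht ξ => ?_⟩
  rcases le_or_gt t 1 with h | h
  · have h1 := (hC (t • ξ)).1
    have h2 := hB ξ
    have h3 : (1 + t) ^ (((d:ℝ)-1)/2) ≤ 2 ^ (((d:ℝ)-1)/2) := 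
      Real.rpow_le_rpow (by linarith) (by linarith) (by linarith)
    have h4 := le_max_right C1 (C*B)
    calc _ ≤ (C * B) * 2 ^ (((d:ℝ)-1)/2) := by gcongr
      _ ≤ _ := by gcongr
  · have h0 : 0 < t := by linarith
    have h1 := hC1 t h0 ξ
    have h3 : (1 + t) ^ (((d:ℝ)-1)/2) ≤ 2 ^ (((d:ℝ)-1)/2) * t ^ (((d:ℝ)-1)/2) := by
      rw [← Real.mul_rpow (by norm_num) ht]
      exact Real.rpow_le_rpow (by linarith) (by linarith) (by linarith)
    have h4 := le_max_left C1 (C*B)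
    calc _ ≤ (C1 * t ^ (-(((d:ℝ)-1)/2))) * (2 ^ (((d:ℝ)-1)/2) * t ^ (((d:ℝ)-1)/2)) := by gcongr
      _ = C1 * 2 ^ (((d:ℝ)-1)/2) := by
        rw [Real.rpow_neg ht]
        have : t ^ (((d:ℝ)-1)/2) ≠ 0 := by positivity
        field_simp
      _ ≤ _ := by gcongr

lemma Fyr_V0 {d : ℕ} (hd : 4 ≤ d) (ψ₀ : Ed d → ℂ) (h : (sphereM d 1).real univ = 0) (y : Ed d) (r : ℝ)
    (hr : 0 < r) (x : Ed d) : Fyr d ψ₀ y r x = 0 := by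
  have := sphereM_finite d hd
  have h0 : sphereM d 1 = 0 := by
    rw [← Measure.measure_univ_eq_zero]
    exact (measureReal_eq_zero_iff).1 h
  rw [Fyr_eq_FF hd ψ₀ y r hr]
  simp [FF, h0]

lemma I3_aux {d : ℕ} (hd : 4 ≤ d) {ψ₀ : Ed d → ℂ} (hψ : Admissible d ψ₀) :
    ∃ C : ℝ, 0 < C ∧ ∀ r s : ℝ, 1 ≤ r → 1 ≤ s → ∀ v : Ed d,
      ‖((sphereM d 1).real univ : ℂ) * (𝓕 (fun ξ => (starRingEnd ℂ) (nh d (r • ξ)) * nh d (s • ξ) *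
        (starRingEnd ℂ) (𝓕 ψ₀ ξ ^ 2) * 𝓕 ψ₀ ξ ^ 2) v)‖ * (1 + ‖v‖) ^ (((d:ℝ)-1)/2)
      ≤ C * (r ^ (-(((d:ℝ)-1)/2)) * s ^ (-(((d:ℝ)-1)/2))) := by
  have hd' : (4:ℝ) ≤ d := by exact_mod_cast hd
  obtain ⟨C1, hC10, hC1⟩ := key1 hd hψ
  obtain ⟨C3, hC30, hC3⟩ := key1' hd hψ
  obtain ⟨C, hC0, hC⟩ := nh_decay d hd
  obtain ⟨hc, hi, ⟨B, hB0, hB⟩, hrad⟩ := P_facts hψ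
  refine ⟨C1 * C1 * C3 * (∫ ξ, ‖𝓕 ψ₀ ξ‖) + 1, by positivity, ?_⟩
  intro r s hr1 hs1 v
  have hr : 0 < r := by linarith
  have hs : 0 < s := by linarith
  set m : Ed d → ℂ := fun ξ => (starRingEnd ℂ) (nh d (r • ξ)) * nh d (s • ξ) *
        (starRingEnd ℂ) (𝓕 ψ₀ ξ ^ 2) * 𝓕 ψ₀ ξ ^ 2 with hm
  have hmi : Integrable m := by
    have : m = fun ξ => ((starRingEnd ℂ) (nh d (r • ξ)) * nh d (s • ξ) *
        (starRingEnd ℂ) (𝓕 ψ₀ ξ ^ 2) * 𝓕 ψ₀ ξ) * 𝓕 ψ₀ ξ := by funext ξ; simp only [hm]; ring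
    rw [this]
    apply int_mul_P hψ _ _ (C * C * B^2 * B)
    · intro ξ; rw [norm_mul, norm_mul, norm_mul, RCLike.norm_conj, RCLike.norm_conj, norm_pow]
      have h1 := (hC (r • ξ)).1
      have h2 := (hC (s • ξ)).1
      have h3 := hB ξ
      gcongr
    · have h1 : Continuous fun ξ : Ed d => nh d (r • ξ) := (nh_cont d hd).comp (by fun_prop)
      have h2 : Continuous fun ξ : Ed d => nh d (s • ξ) := (nh_cont d hd).comp (by fun_prop)
      exact (((RCLike.continuous_conj.comp h1).mul h2).mul (RCLike.continuous_conj.comp (hc.pow 2))).mul hc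
  have hmr : ∀ a b : Ed d, ‖a‖ = ‖b‖ → m a = m b := by
    intro a b hab
    simp only [hm]
    rw [hrad a b hab, nh_radial (ξ := r • a) (η := r • b) (by simp [norm_smul, hab]),
      nh_radial (ξ := s • a) (η := s • b) (by simp [norm_smul, hab])]
  rw [rot_avg hd m hmi hmr v]
  set w := (1 + ‖v‖) ^ (((d:ℝ)-1)/2) with hw
  have hw0 : 0 < w := by positivity
  set R := r ^ (-(((d:ℝ)-1)/2)) with hR
  set S := s ^ (-(((d:ℝ)-1)/2)) with hS
  have hR0 : 0 < R := by positivity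
  have hS0 : 0 < S := by positivity
  rw [← le_div_iff₀ hw0]
  have hb : ‖∫ ξ, nh d (‖v‖ • ξ) * m ξ‖ ≤ ∫ ξ, (C1 * R) * (C1 * S) * (C3 / w) * ‖𝓕 ψ₀ ξ‖ := by
    apply norm_integral_le_of_norm_le (hi.norm.const_mul _)
    filter_upwards with ξ
    have h1 := hC1 r hr ξ
    have h2 := hC1 s hs ξ
    have h3 := hC3 ‖v‖ (norm_nonneg _) ξ
    rw [← le_div_iff₀ hw0] at h3
    calc ‖nh d (‖v‖ • ξ) * m ξ‖ = (‖nh d (r • ξ)‖ * ‖𝓕 ψ₀ ξ‖) * (‖nh d (s • ξ)‖ * ‖𝓕 ψ₀ ξ‖) * (‖nh d (‖v‖ • ξ)‖ * ‖𝓕 ψ₀ ξ‖) * ‖𝓕 ψ₀ ξ‖ := by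
          simp only [hm, norm_mul, norm_pow, RCLike.norm_conj]; ring
      _ ≤ _ := by gcongr
  rw [integral_const_mul] at hb
  refine hb.trans ?_
  rw [le_div_iff₀ hw0]
  have : (C1 * R) * (C1 * S) * (C3 / w) * (∫ ξ, ‖𝓕 ψ₀ ξ‖) * w = C1 * C1 * C3 * (∫ ξ, ‖𝓕 ψ₀ ξ‖) * (R * S) := by
    field_simp
  rw [this]
  gcongr
  linarith

lemma I3 {d : ℕ} (hd : 4 ≤ d) {ψ₀ : Ed d → ℂ} (hψ : Admissible d ψ₀) :
    ∃ C : ℝ, 0 < C ∧ ∀ a b : Ed d × ℝ, 1 ≤ a.2 → 1 ≤ b.2 →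
      ‖inner ℂ (Phi d ψ₀ a) (Phi d ψ₀ b)‖ * (1 + ‖a.1 - b.1‖) ^ (((d:ℝ)-1)/2)
      ≤ C * (a.2 ^ (((d:ℝ)-1)/2) * b.2 ^ (((d:ℝ)-1)/2)) := by
  obtain ⟨C, hC0, hC⟩ := I3_aux hd hψ
  rcases eq_or_lt_of_le (measureReal_nonneg (μ := sphereM d 1) (s := univ)) with hV | hV
  · refine ⟨1, one_pos, fun a b ha hb => ?_⟩
    rw [Phi_inner hd hψ a b (by linarith) (by linarith)]
    simp_rw [Fyr_V0 hd ψ₀ hV.symm a.1 a.2 (by linarith)]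
    have ha0 : 0 ≤ a.2 := by linarith
    have hb0 : 0 ≤ b.2 := by linarith
    simp only [inner_zero_left, integral_zero, norm_zero, zero_mul]; positivity
  refine ⟨C / (sphereM d 1).real univ, by positivity, fun a b ha hb => ?_⟩
  have hr : 0 < a.2 := by linarith
  have hs : 0 < b.2 := by linarith
  rw [Phi_inner hd hψ a b hr hs, ← plancherel (Fyr_integrable hd hψ _ _ hr) (Fyr_continuous hd hψ _ _ hs)
    (Fyr_integrable hd hψ _ _ hs) (Fyr_fourier_int hd hψ _ _ hs)]
  have h := hC a.2 b.2 ha hb (b.1 - a.1)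
  have e : ∫ ξ, inner ℂ (𝓕 (Fyr d ψ₀ a.1 a.2) ξ) (𝓕 (Fyr d ψ₀ b.1 b.2) ξ) =
     ((a.2:ℂ)^(d-1) * (b.2:ℂ)^(d-1)) * 𝓕 (fun ξ => (starRingEnd ℂ) (nh d (a.2 • ξ)) * nh d (b.2 • ξ) *
        (starRingEnd ℂ) (𝓕 ψ₀ ξ ^ 2) * 𝓕 ψ₀ ξ ^ 2) (b.1 - a.1) := by
    rw [four_eq, ← integral_const_mul]
    congr 1; funext ξ
    rw [Fyr_fourier hd hψ _ _ hr, Fyr_fourier hd hψ _ _ hs, RCLike.inner_apply, sub_eq_add_neg, ph_symm ξ, ph_add,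
      ← ph_conj]
    simp only [map_mul, map_pow, Complex.conj_ofReal]
    ring
  rw [e, norm_mul, norm_mul, ofReal_pow_norm _ hr, ofReal_pow_norm _ hs, pow_split hd _ hr, pow_split hd _ hs,
    norm_sub_rev]
  rw [norm_mul, Complex.norm_real, Real.norm_of_nonneg hV.le, Real.rpow_neg hr.le, Real.rpow_neg hs.le] at h
  set X := ‖𝓕 (fun ξ => (starRingEnd ℂ) (nh d (a.2 • ξ)) * nh d (b.2 • ξ) *
        (starRingEnd ℂ) (𝓕 ψ₀ ξ ^ 2) * 𝓕 ψ₀ ξ ^ 2) (b.1 - a.1)‖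
  set V := (sphereM d 1).real univ
  set R := a.2 ^ (((d:ℝ)-1)/2) with hR
  set S := b.2 ^ (((d:ℝ)-1)/2) with hS
  have hR0 : 0 < R := by positivity
  have hS0 : 0 < S := by positivity
  set w := (1 + ‖b.1 - a.1‖) ^ (((d:ℝ)-1)/2)
  have h2 : X * w ≤ C / V * (R⁻¹ * S⁻¹) := by
    rw [div_mul_eq_mul_div, le_div_iff₀ hV]; linarith
  calc R * R * (S * S) * X * w = R * R * (S * S) * (X * w) := by ring
    _ ≤ R * R * (S * S) * (C / V * (R⁻¹ * S⁻¹)) := by gcongr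
    _ = _ := by field_simp

lemma integral_norm_sq_plancherel {d : ℕ} {g : Ed d → ℂ} (hgc : Continuous g) (hg : Integrable g)
    (hg' : Integrable (𝓕 g)) : ∫ ξ, ‖𝓕 g ξ‖^2 = ∫ x, ‖g x‖^2 := by
  apply Complex.ofRealLI.injective
  simpa [← LinearIsometry.integral_comp_comm, inner_self_eq_norm_sq_to_K] using
    plancherel hg hgc hg hg'

lemma four_sum {d : ℕ} {ι : Type*} (Y : Finset ι) (c : ι → ℂ) (f : ι → Ed d → ℂ)
    (hf : ∀ i ∈ Y, Integrable (f i)) (ξ : Ed d) :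
    𝓕 (fun x => ∑ i ∈ Y, c i * f i x) ξ = ∑ i ∈ Y, c i * 𝓕 (f i) ξ := by
  rw [four_eq]
  simp_rw [Finset.mul_sum]
  rw [integral_finset_sum]
  · apply Finset.sum_congr rfl
    intro i _
    rw [four_eq, ← integral_const_mul]
    congr 1; funext x; ring
  · intro i hi
    refine ((hf i hi).const_mul (c i)).bdd_mul (ph_cont1 ξ).aestronglyMeasurable (c := 1) ?_
    filter_upwards with x using (ph_norm _ _).le

lemma K_norm {d : ℕ} {ψ₀ : Ed d → ℂ} (hψ : Admissible d ψ₀) (Y : Finset (Ed d)) 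
    (hY : ∀ y ∈ Y, ∀ z ∈ Y, y ≠ z → 1 ≤ dist y z) (c : Ed d → ℂ) (x : Ed d) :
    ‖∑ y ∈ Y, c y * ψ₀ (x - y)‖^2 = ∑ y ∈ Y, ‖c y‖^2 * ‖ψ₀ (x - y)‖^2 := by
  by_cases h : ∃ y ∈ Y, ψ₀ (x - y) ≠ 0
  · obtain ⟨y, hy, hy0⟩ := h
    have hz : ∀ z ∈ Y, z ≠ y → ψ₀ (x - z) = 0 := by
      intro z hz hzy
      by_contra h0
      have h1 := hψ.2.1 _ hy0
      have h2 := hψ.2.1 _ h0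
      have h3 := hY y hy z hz (Ne.symm hzy)
      rw [dist_eq_norm] at h3
      have := norm_sub_le (x - z) (x - y)
      simp only [sub_sub_sub_cancel_left] at this
      linarith
    rw [Finset.sum_eq_single y (fun z h1 h2 => by rw [hz z h1 h2, mul_zero]) (fun h => (h hy).elim),
      Finset.sum_eq_single y (fun z h1 h2 => by rw [hz z h1 h2]; simp) (fun h => (h hy).elim), norm_mul, mul_pow]
  · push Not at h
    rw [Finset.sum_eq_zero (fun y hy => by rw [h y hy, mul_zero]),
      Finset.sum_eq_zero (fun y hy => by rw [h y hy]; simp)]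
    simp

lemma I2 {d : ℕ} (hd : 4 ≤ d) {ψ₀ : Ed d → ℂ} (hψ : Admissible d ψ₀) :
    ∃ C : ℝ, 0 < C ∧ ∀ (Y : Finset (Ed d)), (∀ y ∈ Y, ∀ z ∈ Y, y ≠ z → 1 ≤ dist y z) →
      ∀ (c : Ed d → ℂ) (r : ℝ), 1 ≤ r →
      ‖∑ y ∈ Y, c y • Phi d ψ₀ (y, r)‖^2 ≤ C * r^(d-1) * ∑ y ∈ Y, ‖c y‖^2 := by
  obtain ⟨C1, hC10, hC1⟩ := key1 hd hψ
  obtain ⟨hPc, hPi, ⟨B, hB0, hB⟩, hrad⟩ := P_facts hψ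
  have hc : Continuous ψ₀ := hψ.1.continuous
  have hcs : HasCompactSupport ψ₀ := by
    apply HasCompactSupport.intro (isCompact_closedBall (0 : Ed d) (1/10))
    intro x hx
    by_contra h
    exact hx (by simpa using hψ.2.1 x h)
  have hψi : Integrable ψ₀ := hc.integrable_of_hasCompactSupport hcs
  have hψ2 : Integrable (fun x => ‖ψ₀ x‖^2) := by
    have : HasCompactSupport (fun x => ‖ψ₀ x‖^2) := hcs.norm.comp_left (g := fun t : ℝ => t^2) (by simp)
    exact (hc.norm.pow 2).integrable_of_hasCompactSupport this
  refine ⟨C1^2 * (∫ x, ‖ψ₀ x‖^2) + 1, by positivity, ?_⟩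
  intro Y hY c r hr1
  have hr : 0 < r := by linarith
  set G : Ed d → ℂ := fun x => ∑ y ∈ Y, c y * Fyr d ψ₀ y r x with hG
  set K : Ed d → ℂ := fun x => ∑ y ∈ Y, c y * ψ₀ (x - y) with hK
  have hae : (↑(∑ y ∈ Y, c y • Phi d ψ₀ (y, r)) : Ed d → ℂ) =ᵐ[volume] G := by
    have h1 := Lp.coeFn_finsetSum Y (fun y => c y • Phi d ψ₀ (y, r))
    have h2 : ∀ y ∈ Y, (↑(c y • Phi d ψ₀ (y, r)) : Ed d → ℂ) =ᵐ[volume] fun x => c y * Fyr d ψ₀ y r x := by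
      intro y _
      filter_upwards [Lp.coeFn_smul (c y) (Phi d ψ₀ (y, r)), Phi_ae hd hψ (y, r) hr] with x h3 h4
      rw [h3, Pi.smul_apply, h4, smul_eq_mul]
    have h3 := (Filter.eventually_all_finset Y).2 h2
    filter_upwards [h1, h3] with x h4 h5
    rw [h4]
    simp only [hG, Finset.sum_apply]
    exact Finset.sum_congr rfl h5
  have hn : ‖∑ y ∈ Y, c y • Phi d ψ₀ (y, r)‖^2 = ∫ x, ‖G x‖^2 := by
    have h1 := L2.inner_def (𝕜 := ℂ) (∑ y ∈ Y, c y • Phi d ψ₀ (y, r)) (∑ y ∈ Y, c y • Phi d ψ₀ (y, r))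
    rw [inner_self_eq_norm_sq_to_K] at h1
    apply Complex.ofRealLI.injective
    rw [← LinearIsometry.integral_comp_comm]
    simp only [Complex.ofRealLI_apply, Complex.ofReal_pow]
    refine h1.trans ?_
    apply integral_congr_ae
    filter_upwards [hae] with x hx
    rw [hx, inner_self_eq_norm_sq_to_K]; rfl
  have hGc : Continuous G := continuous_finset_sum _ (fun y _ => continuous_const.mul (Fyr_continuous hd hψ y r hr))
  have hGi : Integrable G := integrable_finset_sum _ (fun y _ => (Fyr_integrable hd hψ y r hr).const_mul _)
  have hGF : ∀ ξ, 𝓕 G ξ = ∑ y ∈ Y, c y * 𝓕 (Fyr d ψ₀ y r) ξ := fun ξ =>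
    four_sum Y c (fun y => Fyr d ψ₀ y r) (fun y _ => Fyr_integrable hd hψ y r hr) ξ
  have hGFi : Integrable (𝓕 G) := by
    rw [show 𝓕 G = fun ξ => ∑ y ∈ Y, c y * 𝓕 (Fyr d ψ₀ y r) ξ from funext hGF]
    exact integrable_finset_sum _ (fun y _ => (Fyr_fourier_int hd hψ y r hr).const_mul _)
  have hKc : Continuous K := continuous_finset_sum _ (fun y _ => continuous_const.mul (hc.comp (by fun_prop)))
  have hKi : Integrable K := integrable_finset_sum _ (fun y _ => (hψi.comp_sub_right y).const_mul _)
  have hKF : ∀ ξ, 𝓕 K ξ = ∑ y ∈ Y, c y * (ph y ξ * 𝓕 ψ₀ ξ) := by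
    intro ξ
    have := four_sum Y c (fun y x => ψ₀ (x - y)) (fun y _ => hψi.comp_sub_right y) ξ
    rw [this]
    apply Finset.sum_congr rfl
    intro y _
    rw [four_eq, four_trans]
  have hphP : ∀ y : Ed d, Integrable fun ξ => ph y ξ * 𝓕 ψ₀ ξ := fun y =>
    int_mul_P hψ _ (ph_cont2 y) 1 (fun ξ => (ph_norm _ _).le)
  have hKFi : Integrable (𝓕 K) := by
    rw [show 𝓕 K = fun ξ => ∑ y ∈ Y, c y * (ph y ξ * 𝓕 ψ₀ ξ) from funext hKF]
    exact integrable_finset_sum _ (fun y _ => (hphP y).const_mul _)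
  have hKc' : Continuous (𝓕 K) := by
    rw [show 𝓕 K = fun ξ => ∑ y ∈ Y, c y * (ph y ξ * 𝓕 ψ₀ ξ) from funext hKF]
    exact continuous_finset_sum _ (fun y _ => continuous_const.mul ((ph_cont2 y).mul hPc))
  have hrel : ∀ ξ, 𝓕 G ξ = (r:ℂ)^(d-1) * (nh d (r • ξ) * 𝓕 ψ₀ ξ) * 𝓕 K ξ := by
    intro ξ
    rw [hGF, hKF, Finset.mul_sum]
    apply Finset.sum_congr rfl
    intro y _
    rw [Fyr_fourier hd hψ y r hr]; ring
  have hpt : ∀ ξ, ‖𝓕 G ξ‖^2 ≤ (C1^2 * r^(d-1)) * ‖𝓕 K ξ‖^2 := by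
    intro ξ
    rw [hrel, norm_mul, norm_mul, norm_mul, ofReal_pow_norm r hr, mul_pow]
    gcongr
    have h1 := hC1 r hr ξ
    have h2 : r^(d-1) * (‖nh d (r • ξ)‖ * ‖𝓕 ψ₀ ξ‖) ≤ C1 * r^(((d:ℝ)-1)/2) := by
      calc _ ≤ r^(d-1) * (C1 * r ^ (-(((d:ℝ)-1)/2))) := by gcongr
        _ = _ := by
          rw [pow_split hd r hr, Real.rpow_neg hr.le]
          have : r ^ (((d:ℝ)-1)/2) ≠ 0 := by positivity
          field_simp
    calc _ ≤ (C1 * r^(((d:ℝ)-1)/2))^2 := by gcongr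
      _ = _ := by rw [pow_split hd r hr]; ring
  have hK2 : Integrable (fun ξ => ‖𝓕 K ξ‖^2) := by
    obtain ⟨B', hB'⟩ : ∃ B', ∀ ξ, ‖𝓕 K ξ‖ ≤ B' := by
      refine ⟨∑ y ∈ Y, ‖c y‖ * B, fun ξ => ?_⟩
      rw [hKF]
      refine (norm_sum_le _ _).trans (Finset.sum_le_sum fun y _ => ?_)
      rw [norm_mul, norm_mul, ph_norm, one_mul]
      have := hB ξ
      gcongr
    have := hKFi.norm.bdd_mul hKc'.norm.aestronglyMeasurable (c := B') (by
      filter_upwards with ξ; rw [norm_norm]; exact hB' ξ)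
    simpa [sq] using this
  have hKn : ∫ x, ‖K x‖^2 = (∫ x, ‖ψ₀ x‖^2) * ∑ y ∈ Y, ‖c y‖^2 := by
    have : ∀ x, ‖K x‖^2 = ∑ y ∈ Y, ‖c y‖^2 * ‖ψ₀ (x - y)‖^2 := K_norm hψ Y hY c
    simp_rw [this]
    rw [integral_finset_sum _ (fun y _ => (hψ2.comp_sub_right y).const_mul _), Finset.mul_sum]
    apply Finset.sum_congr rfl
    intro y _
    rw [integral_const_mul, integral_sub_right_eq_self (fun x => ‖ψ₀ x‖^2) y, mul_comm]
  rw [hn, ← integral_norm_sq_plancherel hGc hGi hGFi]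
  calc ∫ ξ, ‖𝓕 G ξ‖^2 ≤ ∫ ξ, (C1^2 * r^(d-1)) * ‖𝓕 K ξ‖^2 := by
        apply integral_mono_of_nonneg
        · filter_upwards with ξ; positivity
        · exact hK2.const_mul _
        · filter_upwards with ξ using hpt ξ
    _ = (C1^2 * (∫ x, ‖ψ₀ x‖^2)) * r^(d-1) * ∑ y ∈ Y, ‖c y‖^2 := by
        rw [integral_const_mul, integral_norm_sq_plancherel hKc hKi hKFi, hKn]; ring
    _ ≤ _ := by gcongr; linarith

section abs
variable {H : Type*} [NormedAddCommGroup H] [InnerProductSpace ℂ H]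

lemma normsq_le {ι : Type*} (N : Finset ι) (g : ι → H) :
    ‖∑ n ∈ N, g n‖^2 ≤ ∑ n ∈ N, ∑ m ∈ N, ‖inner ℂ (g n) (g m)‖ := by
  have h : ((‖∑ n ∈ N, g n‖^2 : ℝ) : ℂ) = ∑ n ∈ N, ∑ m ∈ N, inner ℂ (g n) (g m) := by
    have := inner_self_eq_norm_sq_to_K (𝕜 := ℂ) (∑ n ∈ N, g n)
    rw [sum_inner] at this
    simp_rw [inner_sum] at this
    rw [this]; simp
  have h2 : ‖∑ n ∈ N, g n‖^2 = ‖((‖∑ n ∈ N, g n‖^2 : ℝ) : ℂ)‖ := by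
    rw [Complex.norm_real, Real.norm_of_nonneg (by positivity)]
  rw [h2, h]
  refine (norm_sum_le _ _).trans (Finset.sum_le_sum fun n _ => norm_sum_le _ _)

lemma near_far0 {ι : Type*} (N : Finset ι) (g : ι → H) (R : ι → ι → Prop) [DecidableRel R]
    (hR : ∀ n m, R n m → R m n) (K : ℕ) (hK : ∀ n ∈ N, (N.filter (fun m => R n m)).card ≤ K) :
    ‖∑ n ∈ N, g n‖^2 ≤ K * ∑ n ∈ N, ‖g n‖^2 +
      ∑ n ∈ N, ∑ m ∈ N.filter (fun m => ¬ R n m), ‖inner ℂ (g n) (g m)‖ := by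
  refine (normsq_le N g).trans ?_
  have h1 : ∑ n ∈ N, ∑ m ∈ N, ‖inner ℂ (g n) (g m)‖ =
      ∑ n ∈ N, ∑ m ∈ N.filter (fun m => R n m), ‖inner ℂ (g n) (g m)‖ +
      ∑ n ∈ N, ∑ m ∈ N.filter (fun m => ¬ R n m), ‖inner ℂ (g n) (g m)‖ := by
    rw [← Finset.sum_add_distrib]
    exact Finset.sum_congr rfl fun n _ => (Finset.sum_filter_add_sum_filter_not N _ _).symm
  rw [h1]
  gcongr
  have h2 : ∑ n ∈ N, ∑ m ∈ N.filter (fun m => R n m), ‖inner ℂ (g n) (g m)‖ ≤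
      ∑ n ∈ N, ∑ m ∈ N.filter (fun m => R n m), (‖g n‖^2/2 + ‖g m‖^2/2) := by
    refine Finset.sum_le_sum fun n _ => Finset.sum_le_sum fun m _ => ?_
    have := norm_inner_le_norm (𝕜 := ℂ) (g n) (g m)
    nlinarith [sq_nonneg (‖g n‖ - ‖g m‖)]
  have h3 : ∑ n ∈ N, ∑ m ∈ N.filter (fun m => R n m), ‖g m‖^2/2 =
      ∑ n ∈ N, ∑ m ∈ N.filter (fun m => R n m), ‖g n‖^2/2 := by
    apply Finset.sum_comm'
    intro n m
    simp only [Finset.mem_filter]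
    constructor
    · rintro ⟨a, b, c⟩; exact ⟨⟨a, hR _ _ c⟩, b⟩
    · rintro ⟨⟨a, b⟩, c⟩; exact ⟨a, c, hR _ _ b⟩
  refine h2.trans ?_
  simp_rw [Finset.sum_add_distrib]
  rw [h3, ← Finset.sum_add_distrib, Finset.mul_sum]
  refine Finset.sum_le_sum fun n hn => ?_
  simp only [Finset.sum_const, nsmul_eq_mul]
  have : ((N.filter (fun m => R n m)).card : ℝ) ≤ K := by exact_mod_cast hK n hn
  nlinarith [sq_nonneg ‖g n‖]

lemma near_far {α ι : Type*} [DecidableEq ι] (A : Finset α) (v : α → H) (blk : α → ι)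
    (R : ι → ι → Prop) [DecidableRel R]
    (hR : ∀ n m, R n m → R m n) (K : ℕ)
    (hK : ∀ n ∈ A.image blk, ((A.image blk).filter (fun m => R n m)).card ≤ K) :
    ‖∑ a ∈ A, v a‖^2 ≤ K * ∑ n ∈ A.image blk, ‖∑ a ∈ A.filter (fun a => blk a = n), v a‖^2 +
      ∑ a ∈ A, ∑ b ∈ A.filter (fun b => ¬ R (blk a) (blk b)), ‖inner ℂ (v a) (v b)‖ := by
  have h0 : ∑ a ∈ A, v a = ∑ n ∈ A.image blk, ∑ a ∈ A.filter (fun a => blk a = n), v a :=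
    (Finset.sum_fiberwise_of_maps_to (fun a ha => Finset.mem_image_of_mem _ ha) v).symm
  rw [h0]
  refine (near_far0 (A.image blk) _ R hR K hK).trans ?_
  gcongr
  rw [← Finset.sum_fiberwise_of_maps_to (s := A) (t := A.image blk) (g := blk)
    (fun a ha => Finset.mem_image_of_mem _ ha)
    (fun a => ∑ b ∈ A.filter (fun b => ¬ R (blk a) (blk b)), ‖inner ℂ (v a) (v b)‖)]
  refine Finset.sum_le_sum fun n _ => ?_
  have e : ∀ a ∈ A.filter (fun a => blk a = n), ∑ b ∈ A.filter (fun b => ¬ R (blk a) (blk b)), ‖inner ℂ (v a) (v b)‖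
     = ∑ m ∈ (A.image blk).filter (fun m => ¬ R n m), ∑ b ∈ A.filter (fun b => blk b = m), ‖inner ℂ (v a) (v b)‖ := by
    intro a ha
    have ha2 : blk a = n := (Finset.mem_filter.1 ha).2
    rw [ha2, ← Finset.sum_fiberwise_of_maps_to (s := A.filter (fun b => ¬ R n (blk b)))
      (t := (A.image blk).filter (fun m => ¬ R n m)) (g := blk)]
    · refine Finset.sum_congr rfl fun m hm => ?_
      congr 1
      rw [Finset.filter_filter]
      apply Finset.filter_congr
      intro b _
      have := (Finset.mem_filter.1 hm).2
      constructor
      · exact fun h => h.2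
      · rintro rfl; exact ⟨this, rfl⟩
    · intro b hb
      rw [Finset.mem_filter] at hb ⊢
      exact ⟨Finset.mem_image_of_mem _ hb.1, hb.2⟩
  rw [Finset.sum_congr rfl e, Finset.sum_comm]
  refine Finset.sum_le_sum fun m _ => ?_
  rw [sum_inner]
  simp_rw [inner_sum]
  exact (norm_sum_le _ _).trans (Finset.sum_le_sum fun a _ => norm_sum_le _ _)

end abs

lemma card_sep (T : Finset ℝ) (x L : ℝ) (hT : ∀ t ∈ T, x ≤ t ∧ t ≤ x + L)
    (hs : ∀ s ∈ T, ∀ t ∈ T, s = t ∨ 1 ≤ |s - t|) : (T.card : ℝ) ≤ max L 0 + 1 := by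
  have h1 : T.card ≤ (Finset.range (⌊L⌋₊ + 1)).card := by
    apply Finset.card_le_card_of_injOn (fun t => ⌊t - x⌋₊)
    · intro t ht
      have := hT t ht
      simp only [Finset.coe_range, mem_Iio]
      have : ⌊t - x⌋₊ ≤ ⌊L⌋₊ := Nat.floor_le_floor (by linarith)
      omega
    · intro s hs' t ht hst
      rcases hs s hs' t ht with h | h
      · exact h
      · exfalso
        simp only at hst
        have a1 := Nat.floor_le (a := s - x) (by linarith [hT s hs'])
        have a2 := Nat.lt_floor_add_one (s - x)
        have b1 := Nat.floor_le (a := t - x) (by linarith [hT t ht])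
        have b2 := Nat.lt_floor_add_one (t - x)
        rw [hst] at a1 a2
        rcases abs_cases (s - t) with h' | h' <;> linarith
  rw [Finset.card_range] at h1
  have h2 : (T.card : ℝ) ≤ (⌊L⌋₊ : ℝ) + 1 := by exact_mod_cast h1
  have h3 : (⌊L⌋₊ : ℝ) ≤ max L 0 := by
    rcases le_or_gt 0 L with h | h
    · exact (Nat.floor_le h).trans (le_max_left _ _)
    · rw [Nat.floor_of_nonpos h.le]; simp
  linarith

lemma geomsum_le (q : ℝ) (hq : 0 ≤ q) (hq1 : q < 1) (M : ℕ) : ∑ i ∈ Finset.range M, q^i ≤ 1/(1-q) := by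
  rw [one_div]
  exact (summable_geometric_of_lt_one hq hq1).sum_le_tsum _ (fun i _ => by positivity) |>.trans
    (tsum_geometric_of_lt_one hq hq1).le

/-- dyadic shells -/
lemma shell {α : Type*} (S : Finset α) (D : α → ℝ) (L u e : ℝ) (hL : 0 < L) (hu : 0 ≤ u) (he : 1 < e)
    (hD : ∀ s ∈ S, L ≤ D s) (hc : ∀ ρ, L ≤ ρ → ((S.filter (fun s => D s ≤ ρ)).card : ℝ) ≤ u * ρ) :
    ∑ s ∈ S, (D s)^(-e) ≤ 2 / (1 - 2^(1-e)) * (u * L^(1-e)) := by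
  have hq1 : (2:ℝ)^(1-e) < 1 := Real.rpow_lt_one_of_one_lt_of_neg (by norm_num) (by linarith)
  have hex : ∀ s ∈ S, ∃ i : ℕ, 2^i * L ≤ D s ∧ D s ≤ 2^(i+1) * L := by
    intro s hs
    obtain ⟨n, h1, h2⟩ := exists_nat_pow_near (x := D s / L) (y := 2) (by rw [le_div_iff₀ hL]; linarith [hD s hs]) (by norm_num)
    rw [le_div_iff₀ hL] at h1
    rw [div_lt_iff₀ hL] at h2
    exact ⟨n, h1, h2.le⟩
  choose! i hi using hex
  obtain ⟨M, hM⟩ : ∃ M, ∀ s ∈ S, i s < M := ⟨S.sup i + 1, fun s hs => Nat.lt_succ_of_le (Finset.le_sup hs)⟩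
  have hpt : ∀ s ∈ S, (D s)^(-e) ≤ ∑ k ∈ Finset.range M, if D s ≤ 2^(k+1) * L then (2^k * L)^(-e) else 0 := by
    intro s hs
    calc (D s)^(-e) ≤ (2^(i s) * L)^(-e) := 
          Real.rpow_le_rpow_of_nonpos (by positivity) (hi s hs).1 (by linarith)
      _ = if D s ≤ 2^(i s+1) * L then (2^(i s) * L)^(-e) else 0 := by rw [if_pos (hi s hs).2]
      _ ≤ _ := Finset.single_le_sum (f := fun k => if D s ≤ 2^(k+1) * L then (2^k * L)^(-e) else 0)
        (fun k _ => by split_ifs <;> positivity) (Finset.mem_range.2 (hM s hs))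
  calc ∑ s ∈ S, (D s)^(-e) ≤ ∑ s ∈ S, ∑ k ∈ Finset.range M, (if D s ≤ 2^(k+1) * L then (2^k * L)^(-e) else 0) :=
        Finset.sum_le_sum hpt
    _ = ∑ k ∈ Finset.range M, ((S.filter (fun s => D s ≤ 2^(k+1) * L)).card : ℝ) * (2^k * L)^(-e) := by
        rw [Finset.sum_comm]
        refine Finset.sum_congr rfl fun k _ => ?_
        rw [← Finset.sum_filter, Finset.sum_const, nsmul_eq_mul]
    _ ≤ ∑ k ∈ Finset.range M, (2 * (u * L^(1-e))) * ((2:ℝ)^(1-e))^k := by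
        refine Finset.sum_le_sum fun k _ => ?_
        have h1 : L ≤ 2^(k+1) * L := by
          have : (1:ℝ) ≤ 2^(k+1) := one_le_pow₀ (by norm_num)
          nlinarith
        calc _ ≤ (u * (2^(k+1) * L)) * (2^k * L)^(-e) := by gcongr; exact hc _ h1
          _ = 2 * u * ((2^k * L) * (2^k * L)^(-e)) := by rw [pow_succ]; ring
          _ = 2 * u * ((2^k * L)^(1-e)) := by
            rw [sub_eq_add_neg, Real.rpow_add (by positivity), Real.rpow_one]
          _ = _ := by
            rw [Real.mul_rpow (by positivity) hL.le, ← Real.rpow_natCast, ← Real.rpow_natCast, ← Real.rpow_mul (by norm_num),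
              ← Real.rpow_mul (by norm_num), mul_comm (k:ℝ)]
            ring
    _ = (2 * (u * L^(1-e))) * ∑ k ∈ Finset.range M, ((2:ℝ)^(1-e))^k := by rw [Finset.mul_sum]
    _ ≤ (2 * (u * L^(1-e))) * (1 / (1 - 2^(1-e))) := by
        gcongr
        exact geomsum_le _ (by positivity) hq1 M
    _ = _ := by ring

/-- The analytic input for the combinatorial argument. -/
structure Hyp {H : Type*} [NormedAddCommGroup H] [InnerProductSpace ℂ H] (d : ℕ) (Φ : Ed d × ℝ → H) (C : ℝ) : Prop where
  pos : 0 < C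
  i2 : ∀ (Y : Finset (Ed d)), (∀ y ∈ Y, ∀ z ∈ Y, y ≠ z → 1 ≤ dist y z) →
      ∀ (c : Ed d → ℂ) (r : ℝ), 1 ≤ r →
      ‖∑ y ∈ Y, c y • Φ (y, r)‖^2 ≤ C * r^(d-1) * ∑ y ∈ Y, ‖c y‖^2
  i3 : ∀ a b : Ed d × ℝ, 1 ≤ a.2 → 1 ≤ b.2 →
      ‖inner ℂ (Φ a) (Φ b)‖ * (1 + ‖a.1 - b.1‖) ^ (((d:ℝ)-1)/2)
      ≤ C * (a.2 ^ (((d:ℝ)-1)/2) * b.2 ^ (((d:ℝ)-1)/2))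
  i4 : ∀ a b : Ed d × ℝ, 1 ≤ a.2 → 1 ≤ b.2 →
      (‖a.1 - b.1‖ + 1 < |a.2 - b.2| ∨ a.2 + b.2 + 1 < ‖a.1 - b.1‖) → inner ℂ (Φ a) (Φ b) = 0

lemma hyp_phi {d : ℕ} (hd : 4 ≤ d) {ψ₀ : Ed d → ℂ} (hψ : Admissible d ψ₀) : ∃ C, Hyp d (Phi d ψ₀) C := by
  obtain ⟨C2, h20, h2⟩ := I2 hd hψ
  obtain ⟨C3, h30, h3⟩ := I3 hd hψ
  refine ⟨max C2 C3, lt_max_of_lt_left h20, ?_, ?_, I4 hd hψ⟩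
  · intro Y hY c r hr
    refine (h2 Y hY c r hr).trans ?_
    have : 0 ≤ r := by linarith
    gcongr
    exact le_max_left _ _
  · intro a b ha hb
    refine (h3 a b ha hb).trans ?_
    have h1 : 0 ≤ a.2 := by linarith
    have h2 : 0 ≤ b.2 := by linarith
    gcongr
    exact le_max_right _ _

def SepSet {d : ℕ} (A : Finset (Ed d × ℝ)) : Prop :=
  ∀ a ∈ A, ∀ b ∈ A, (a.1 = b.1 ∨ 1 ≤ dist a.1 b.1) ∧ (a.2 = b.2 ∨ 1 ≤ |a.2 - b.2|)

def InJ {d : ℕ} (A : Finset (Ed d × ℝ)) (j : ℕ) : Prop := ∀ a ∈ A, (2:ℝ)^j ≤ a.2 ∧ a.2 < 2^(j+1)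

def Dens {d : ℕ} (A : Finset (Ed d × ℝ)) (j : ℕ) (u : ℝ) : Prop :=
  ∀ a ∈ A, ∀ ρ : ℝ, 1 ≤ ρ → ρ ≤ 2^(j+4) → ((A.filter (fun b => dist a b ≤ ρ)).card : ℝ) ≤ u * ρ

lemma SepSet.mono {d : ℕ} {A B : Finset (Ed d × ℝ)} (h : SepSet A) (hB : B ⊆ A) : SepSet B :=
  fun a ha b hb => h a (hB ha) b (hB hb)

lemma InJ.one_le {d : ℕ} {A : Finset (Ed d × ℝ)} {j : ℕ} (h : InJ A j) {a : Ed d × ℝ} (ha : a ∈ A) : 1 ≤ a.2 :=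
  le_trans (one_le_pow₀ (by norm_num)) (h a ha).1

section
variable {H : Type*} [NormedAddCommGroup H] [InnerProductSpace ℂ H] {d : ℕ} {Φ : Ed d × ℝ → H} {C : ℝ}

lemma fixedr (hΦ : Hyp d Φ C) (A : Finset (Ed d × ℝ)) (hA : SepSet A) (r : ℝ) (hr : 1 ≤ r)
    (h : ∀ a ∈ A, a.2 = r) (c : Ed d × ℝ → ℂ) (hc : ∀ a, ‖c a‖ ≤ 1) :
    ‖∑ a ∈ A, c a • Φ a‖^2 ≤ C * r^(d-1) * A.card := by
  classical
  have hinj : Set.InjOn Prod.fst (A : Set (Ed d × ℝ)) := by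
    intro a ha b hb hab
    exact Prod.ext hab ((h a ha).trans (h b hb).symm)
  have h1 : ∑ a ∈ A, c a • Φ a = ∑ y ∈ A.image Prod.fst, c (y, r) • Φ (y, r) := by
    rw [Finset.sum_image hinj]
    refine Finset.sum_congr rfl fun a ha => ?_
    rw [← h a ha]
  rw [h1]
  have hY : ∀ y ∈ A.image Prod.fst, ∀ z ∈ A.image Prod.fst, y ≠ z → 1 ≤ dist y z := by
    intro y hy z hz hyz
    obtain ⟨a, ha, rfl⟩ := Finset.mem_image.1 hy
    obtain ⟨b, hb, rfl⟩ := Finset.mem_image.1 hz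
    exact (hA a ha b hb).1.resolve_left hyz
  refine (hΦ.i2 _ hY (fun y => c (y, r)) r hr).trans ?_
  have hC := hΦ.pos
  have : ∑ y ∈ A.image Prod.fst, ‖c (y, r)‖^2 ≤ A.card := by
    calc _ ≤ ∑ y ∈ A.image Prod.fst, (1:ℝ) := Finset.sum_le_sum fun y _ => by
            have := hc (y, r)
            exact pow_le_one₀ (norm_nonneg _) this
      _ = (A.image Prod.fst).card := by simp
      _ ≤ _ := by exact_mod_cast Finset.card_image_le
  gcongr

lemma block (hΦ : Hyp d Φ C) (A : Finset (Ed d × ℝ)) (hA : SepSet A) (j : ℕ) (hj : InJ A j) (x L : ℝ) (hL : 1 ≤ L)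
    (h : ∀ a ∈ A, x ≤ a.2 ∧ a.2 ≤ x + L) (c : Ed d × ℝ → ℂ) (hc : ∀ a, ‖c a‖ ≤ 1) :
    ‖∑ a ∈ A, c a • Φ a‖^2 ≤ 2 * L * (C * (2^(j+1))^(d-1) * A.card) := by
  have hC := hΦ.pos
  have h1 := near_far A (fun a => c a • Φ a) Prod.snd (fun _ _ => True) (fun _ _ _ => trivial)
    (A.image Prod.snd).card (fun n _ => Finset.card_filter_le _ _)
  simp only [not_true_eq_false, Finset.filter_false, Finset.sum_empty, Finset.sum_const_zero, add_zero] at h1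
  refine h1.trans ?_
  have hK : ((A.image Prod.snd).card : ℝ) ≤ 2 * L := by
    have := card_sep (A.image Prod.snd) x L (by
      intro t ht
      obtain ⟨a, ha, rfl⟩ := Finset.mem_image.1 ht
      exact h a ha) (by
      intro s hs t ht
      obtain ⟨a, ha, rfl⟩ := Finset.mem_image.1 hs
      obtain ⟨b, hb, rfl⟩ := Finset.mem_image.1 ht
      exact (hA a ha b hb).2)
    rw [max_eq_left (by linarith)] at this
    linarith
  have hS : ∑ n ∈ A.image Prod.snd, ‖∑ a ∈ A.filter (fun a => a.2 = n), c a • Φ a‖^2 ≤ C * (2^(j+1))^(d-1) * A.card := by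
    calc _ ≤ ∑ n ∈ A.image Prod.snd, C * (2^(j+1))^(d-1) * ((A.filter (fun a => a.2 = n)).card : ℝ) := by
          refine Finset.sum_le_sum fun n hn => ?_
          obtain ⟨a, ha, rfl⟩ := Finset.mem_image.1 hn
          refine (fixedr hΦ (A.filter (fun b => b.2 = a.2)) (hA.mono (Finset.filter_subset _ _)) a.2
            (hj.one_le ha) (fun b hb => (Finset.mem_filter.1 hb).2) c hc).trans ?_
          have h2 := (hj a ha).2
          have h3 := hj.one_le ha
          gcongr
      _ = _ := by
          rw [← Finset.mul_sum]
          congr 1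
          rw [Finset.card_eq_sum_card_image Prod.snd A]
          push_cast; rfl
  gcongr

lemma single (hd : 4 ≤ d) (hΦ : Hyp d Φ C) : ∃ C' : ℝ, 0 < C' ∧ ∀ (j : ℕ) (u : ℝ) (A : Finset (Ed d × ℝ)) (c : Ed d × ℝ → ℂ),
    1 ≤ u → SepSet A → InJ A j → Dens A j u → (∀ a, ‖c a‖ ≤ 1) →
    ‖∑ a ∈ A, c a • Φ a‖^2 ≤ C' * u^(2/((d:ℝ)-1)) * (2^(j+1))^(d-1) * A.card := by
  have hd' : (4:ℝ) ≤ d := by exact_mod_cast hd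
  have hC := hΦ.pos
  set e := ((d:ℝ)-1)/2 with he
  have he1 : 1 < e := by rw [he]; linarith
  have hq1 : (2:ℝ)^(1-e) < 1 := Real.rpow_lt_one_of_one_lt_of_neg (by norm_num) (by linarith)
  have hq2 : 0 < 1 - (2:ℝ)^(1-e) := by linarith
  refine ⟨C * (6 + 2 / (1 - 2^(1-e))), by positivity, ?_⟩
  intro j u A c hu hA hj hD hc
  set L := u^(2/((d:ℝ)-1)) with hL
  have hL1 : 1 ≤ L := Real.one_le_rpow hu (by apply div_nonneg <;> linarith)
  have hL0 : 0 < L := by linarith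
  have huL : u * L^(1-e) = L := by
    have h1 : L^e = u := by
      rw [hL, ← Real.rpow_mul (by linarith), he]
      rw [show (2/((d:ℝ)-1)) * (((d:ℝ)-1)/2) = 1 by
        have : (d:ℝ) - 1 ≠ 0 := by linarith
        field_simp]
      exact Real.rpow_one u
    rw [Real.rpow_sub hL0, Real.rpow_one, h1]
    have : u ≠ 0 := by linarith
    field_simp
  have hnf := near_far A (fun a => c a • Φ a) (fun a => ⌊a.2 / L⌋₊) (fun n m => n ≤ m + 1 ∧ m ≤ n + 1)
    (fun n m h => ⟨h.2, h.1⟩) 3 (by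
      intro n _
      have : ((A.image (fun a => ⌊a.2 / L⌋₊)).filter (fun m => n ≤ m + 1 ∧ m ≤ n + 1)) ⊆ Finset.Icc (n-1) (n+1) := by
        intro m hm
        rw [Finset.mem_filter] at hm
        rw [Finset.mem_Icc]; omega
      refine (Finset.card_le_card this).trans ?_
      rw [Nat.card_Icc]; omega)
  refine hnf.trans ?_
  have hnear : ∑ n ∈ A.image (fun a => ⌊a.2 / L⌋₊), ‖∑ a ∈ A.filter (fun a => ⌊a.2 / L⌋₊ = n), c a • Φ a‖^2
      ≤ 2 * L * (C * (2^(j+1))^(d-1) * A.card) := by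
    calc _ ≤ ∑ n ∈ A.image (fun a => ⌊a.2 / L⌋₊), 2 * L * (C * (2^(j+1))^(d-1) * ((A.filter (fun a => ⌊a.2 / L⌋₊ = n)).card : ℝ)) := by
          refine Finset.sum_le_sum fun n _ => ?_
          refine block hΦ _ (hA.mono (Finset.filter_subset _ _)) j (fun a ha => hj a (Finset.mem_filter.1 ha).1)
            (n * L) L hL1 ?_ c hc
          intro a ha
          have ha2 := (Finset.mem_filter.1 ha).2
          have hr := hj.one_le (Finset.mem_filter.1 ha).1
          have h1 := Nat.floor_le (a := a.2 / L) (by positivity)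
          have h2 := Nat.lt_floor_add_one (a.2 / L)
          rw [ha2] at h1 h2
          rw [le_div_iff₀ hL0] at h1
          rw [div_lt_iff₀ hL0] at h2
          constructor <;> linarith
      _ = _ := by
          rw [← Finset.mul_sum, ← Finset.mul_sum]
          congr 2
          rw [Finset.card_eq_sum_card_image (fun a => ⌊a.2 / L⌋₊) A]
          push_cast; rfl
  have hfar : ∀ a ∈ A, ∑ b ∈ A.filter (fun b => ¬ (⌊a.2 / L⌋₊ ≤ ⌊b.2 / L⌋₊ + 1 ∧ ⌊b.2 / L⌋₊ ≤ ⌊a.2 / L⌋₊ + 1)),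
      ‖inner ℂ (c a • Φ a) (c b • Φ b)‖ ≤ C * (2^(j+1))^(d-1) * (2 / (1 - 2^(1-e)) * L) := by
    intro a ha
    classical
    set S := A.filter (fun b => ¬ (⌊a.2 / L⌋₊ ≤ ⌊b.2 / L⌋₊ + 1 ∧ ⌊b.2 / L⌋₊ ≤ ⌊a.2 / L⌋₊ + 1)) with hS
    set S' := S.filter (fun b => ‖inner ℂ (c a • Φ a) (c b • Φ b)‖ ≠ 0) with hS'
    have hle : ∀ b, ‖inner ℂ (c a • Φ a) (c b • Φ b)‖ ≤ ‖inner ℂ (Φ a) (Φ b)‖ := by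
      intro b
      rw [inner_smul_left, inner_smul_right, norm_mul, norm_mul, RCLike.norm_conj]
      have h1 := hc a
      have h2 := hc b
      calc _ ≤ 1 * (1 * ‖inner ℂ (Φ a) (Φ b)‖) := by gcongr
        _ = _ := by ring
    have hr1 := hj.one_le ha
    have hgeo : ∀ b ∈ S', L ≤ dist a b ∧ dist a b ≤ 1 + ‖a.1 - b.1‖ ∧ dist a b ≤ 2^(j+4) := by
      intro b hb
      have hbS := (Finset.mem_filter.1 hb).1
      have hb0 := (Finset.mem_filter.1 hb).2
      have hbA := (Finset.mem_filter.1 hbS).1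
      have hfl := (Finset.mem_filter.1 hbS).2
      have hb1 := hj.one_le hbA
      have hinn : inner ℂ (Φ a) (Φ b) ≠ 0 := by
        intro h0
        have := hle b
        rw [h0, norm_zero] at this
        exact hb0 (le_antisymm this (norm_nonneg _))
      have hi4 := mt (hΦ.i4 a b hr1 hb1) hinn
      push Not at hi4
      have hLr : L ≤ |a.2 - b.2| := by
        have a1 := Nat.floor_le (a := a.2 / L) (by positivity)
        have a2 := Nat.lt_floor_add_one (a.2 / L)
        have b1 := Nat.floor_le (a := b.2 / L) (by positivity)
        have b2 := Nat.lt_floor_add_one (b.2 / L)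
        rw [le_div_iff₀ hL0] at a1 b1
        rw [div_lt_iff₀ hL0] at a2 b2
        rw [not_and_or, not_le, not_le] at hfl
        rcases hfl with h | h
        · have : (⌊b.2 / L⌋₊ : ℝ) + 2 ≤ ⌊a.2 / L⌋₊ := by exact_mod_cast h
          refine le_trans ?_ (le_abs_self _)
          nlinarith
        · have : (⌊a.2 / L⌋₊ : ℝ) + 2 ≤ ⌊b.2 / L⌋₊ := by exact_mod_cast h
          rw [abs_sub_comm]
          refine le_trans ?_ (le_abs_self _)
          nlinarith
      have hdd : dist a b = max ‖a.1 - b.1‖ |a.2 - b.2| := by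
        rw [Prod.dist_eq, dist_eq_norm, Real.dist_eq]
      have hd2 : dist a b ≤ 1 + ‖a.1 - b.1‖ := by
        rw [hdd]; apply max_le <;> linarith
      refine ⟨hdd ▸ hLr.trans (le_max_right _ _), hd2, ?_⟩
      have h3 := (hj a ha).2
      have h4 := (hj b hbA).2
      have h5 : (1:ℝ) ≤ 2^j := one_le_pow₀ (by norm_num)
      rw [pow_succ] at h3 h4
      have : (2:ℝ)^(j+4) = 2^j * 16 := by rw [pow_add]; norm_num
      rw [this]; linarith
    have hsh := shell S' (fun b => dist a b) L u e hL0 (by linarith) he1 (fun b hb => (hgeo b hb).1) (by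
      intro ρ hρ
      rcases le_or_gt ρ (2^(j+4)) with h | h
      · refine le_trans ?_ (hD a ha ρ (by linarith) h)
        have hsub : S'.filter (fun b => dist a b ≤ ρ) ⊆ A.filter (fun b => dist a b ≤ ρ) := by
          intro b hb
          rw [Finset.mem_filter] at hb ⊢
          exact ⟨(Finset.mem_filter.1 (Finset.mem_filter.1 hb.1).1).1, hb.2⟩
        exact_mod_cast Finset.card_le_card hsub
      · have h1 : (1:ℝ) ≤ 2^(j+4) := one_le_pow₀ (by norm_num)
        have h2 := hD a ha (2^(j+4)) h1 le_rfl
        have hsub : S'.filter (fun b => dist a b ≤ ρ) ⊆ A.filter (fun b => dist a b ≤ 2^(j+4)) := by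
          intro b hb
          rw [Finset.mem_filter] at hb ⊢
          exact ⟨(Finset.mem_filter.1 (Finset.mem_filter.1 hb.1).1).1, (hgeo b hb.1).2.2⟩
        have h3 : ((S'.filter (fun b => dist a b ≤ ρ)).card : ℝ) ≤ (A.filter (fun b => dist a b ≤ 2^(j+4))).card := by
          exact_mod_cast Finset.card_le_card hsub
        refine h3.trans (h2.trans ?_)
        gcongr)
    rw [huL] at hsh
    calc ∑ b ∈ S, ‖inner ℂ (c a • Φ a) (c b • Φ b)‖ = ∑ b ∈ S', ‖inner ℂ (c a • Φ a) (c b • Φ b)‖ :=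
          (Finset.sum_filter_ne_zero S).symm
      _ ≤ ∑ b ∈ S', C * (2^(j+1))^(d-1) * (dist a b)^(-e) := by
          refine Finset.sum_le_sum fun b hb => ?_
          obtain ⟨g1, g2, g3⟩ := hgeo b hb
          have hbA := (Finset.mem_filter.1 (Finset.mem_filter.1 hb).1).1
          have hb1 := hj.one_le hbA
          refine (hle b).trans ?_
          have h3 := hΦ.i3 a b hr1 hb1
          have hdp : 0 < dist a b := by linarith
          rw [Real.rpow_neg hdp.le, ← div_eq_mul_inv, le_div_iff₀ (by positivity)]
          calc _ ≤ ‖inner ℂ (Φ a) (Φ b)‖ * (1 + ‖a.1 - b.1‖)^e := by gcongr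
            _ ≤ C * (a.2^e * b.2^e) := h3
            _ ≤ C * ((2^(j+1))^e * (2^(j+1))^e) := by
              have h4 := (hj a ha).2
              have h5 := (hj b hbA).2
              gcongr
            _ = _ := by rw [pow_split hd _ (by positivity)]
      _ = C * (2^(j+1))^(d-1) * ∑ b ∈ S', (dist a b)^(-e) := by rw [Finset.mul_sum]
      _ ≤ _ := by gcongr
  calc _ ≤ (3:ℕ) * (2 * L * (C * (2^(j+1))^(d-1) * A.card)) + ∑ a ∈ A, C * (2^(j+1))^(d-1) * (2 / (1 - 2^(1-e)) * L) :=
        add_le_add (mul_le_mul_of_nonneg_left hnear (by positivity)) (Finset.sum_le_sum hfar)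
    _ = _ := by
        rw [Finset.sum_const, nsmul_eq_mul]; push_cast; ring

end

def annu {d : ℕ} (y : Ed d) (R s : ℝ) : Set (Ed d) := {x | |‖x - y‖ - R| ≤ s}

def om (d : ℕ) : ℝ := (volume : Measure (Ed d)).real (ball 0 1)

lemma om_pos (d : ℕ) : 0 < om d := by
  unfold om
  rw [measureReal_def]
  exact ENNReal.toReal_pos (measure_ball_pos _ _ one_pos).ne' measure_ball_lt_top.ne

lemma om_ofReal (d : ℕ) : (volume : Measure (Ed d)) (ball 0 1) = ENNReal.ofReal (om d) := by
  unfold om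
  rw [measureReal_def, ENNReal.ofReal_toReal measure_ball_lt_top.ne]

lemma vol_cball {d : ℕ} (x : Ed d) (r : ℝ) (hr : 0 ≤ r) :
    volume (closedBall x r) = ENNReal.ofReal (om d * r^d) := by
  rw [Measure.addHaar_closedBall _ _ hr, om_ofReal, ← ENNReal.ofReal_mul (by positivity)]
  simp [mul_comm]

lemma vol_ball {d : ℕ} (hd : 4 ≤ d) (x : Ed d) (r : ℝ) (hr : 0 ≤ r) :
    volume (ball x r) = ENNReal.ofReal (om d * r^d) := by
  have : Nonempty (Fin d) := ⟨⟨0, by omega⟩⟩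
  rw [Measure.addHaar_ball _ _ hr, om_ofReal, ← ENNReal.ofReal_mul (by positivity)]
  simp [mul_comm]

lemma annu_vol {d : ℕ} (hd : 4 ≤ d) (y : Ed d) (R s : ℝ) (hR : 0 ≤ R) (hs : 0 ≤ s) :
    volume (annu y R s) ≤ ENNReal.ofReal (om d * (2 * d * s * (R + s)^(d-1))) := by
  have hom := om_pos d
  set b := max (R - s) 0 with hb
  have hb0 : 0 ≤ b := le_max_right _ _
  have hba : b ≤ R + s := max_le (by linarith) (by linarith)
  have hsub : annu y R s ⊆ closedBall y (R + s) \ ball y b := by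
    intro x hx
    have hx := abs_le.1 (show |‖x - y‖ - R| ≤ s from hx)
    refine ⟨?_, ?_⟩
    · rw [mem_closedBall, dist_eq_norm]; linarith
    · rw [mem_ball, dist_eq_norm, not_lt]
      exact max_le (by linarith) (norm_nonneg _)
  refine (measure_mono hsub).trans ?_
  rw [measure_sdiff (ball_subset_closedBall.trans (closedBall_subset_closedBall hba)) measurableSet_ball.nullMeasurableSet
    measure_ball_lt_top.ne, vol_cball y _ (by positivity), vol_ball hd y _ hb0, ← ENNReal.ofReal_sub _ (by positivity)]
  apply ENNReal.ofReal_le_ofReal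
  rw [← mul_sub]
  gcongr
  have h := abs_pow_sub_pow_le (R + s) b d
  rw [abs_of_nonneg (by linarith : 0 ≤ R + s), abs_of_nonneg hb0, max_eq_left hba,
    abs_of_nonneg (by linarith : 0 ≤ R + s - b)] at h
  refine (le_abs_self _).trans (h.trans ?_)
  have : R + s - b ≤ 2 * s := by
    have := le_max_left (R - s) 0
    linarith
  calc _ ≤ 2 * s * d * (R + s)^(d-1) := by gcongr
    _ = _ := by ring

lemma count_le {d : ℕ} (A : Finset (Ed d × ℝ)) (Ω : Set (Ed d)) (s : ℝ) (hs : 0 ≤ s)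
    (M : ℝ) (hM : ∀ x, ((A.filter (fun a => ‖a.1 - x‖ ≤ s)).card : ℝ) ≤ M)
    (hA : ∀ a ∈ A, closedBall a.1 s ⊆ Ω) :
    ENNReal.ofReal (A.card * (om d * s^d)) ≤ ENNReal.ofReal M * volume Ω := by
  have h1 : ENNReal.ofReal (A.card * (om d * s^d)) = ∑ a ∈ A, volume (closedBall a.1 s) := by
    rw [Finset.sum_congr rfl (fun a _ => vol_cball a.1 s hs), Finset.sum_const, nsmul_eq_mul,
      ENNReal.ofReal_mul (by positivity), ENNReal.ofReal_natCast]
  have h2 : ∑ a ∈ A, volume (closedBall a.1 s) = ∫⁻ x, ∑ a ∈ A, (closedBall a.1 s).indicator (fun _ => (1:ℝ≥0∞)) x := by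
    rw [lintegral_finsetSum _ (fun a _ => measurable_const.indicator measurableSet_closedBall)]
    refine Finset.sum_congr rfl fun a _ => ?_
    rw [lintegral_indicator_const measurableSet_closedBall, one_mul]
  rw [h1, h2, ← Measure.restrict_eq_self volume (s := Ω) (t := Ω) subset_rfl]
  calc _ ≤ ∫⁻ x, (toMeasurable volume Ω).indicator (fun _ => ENNReal.ofReal M) x := by
        apply lintegral_mono
        intro x
        have e : ∑ a ∈ A, (closedBall a.1 s).indicator (fun _ => (1:ℝ≥0∞)) x = ((A.filter (fun a => ‖a.1 - x‖ ≤ s)).card : ℝ≥0∞) := by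
          rw [Finset.card_filter]
          push_cast
          refine Finset.sum_congr rfl fun a _ => ?_
          by_cases h : ‖a.1 - x‖ ≤ s
          · rw [if_pos h, indicator_of_mem]
            rw [mem_closedBall, dist_comm, dist_eq_norm]; exact h
          · rw [if_neg h, indicator_of_notMem]
            rw [mem_closedBall, dist_comm, dist_eq_norm]; exact h
        show ∑ a ∈ A, (closedBall a.1 s).indicator (fun _ => (1:ℝ≥0∞)) x ≤ _
        rw [e]
        by_cases hx : x ∈ toMeasurable volume Ω
        · rw [indicator_of_mem hx, ← ENNReal.ofReal_natCast]
          exact ENNReal.ofReal_le_ofReal (hM x)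
        · rw [indicator_of_notMem hx]
          simp only [nonpos_iff_eq_zero, Nat.cast_eq_zero, Finset.card_eq_zero]
          rw [Finset.filter_eq_empty_iff]
          intro a ha h
          apply hx
          apply subset_toMeasurable volume Ω
          apply hA a ha
          rw [mem_closedBall, dist_comm, dist_eq_norm]; exact h
    _ = _ := by
        rw [lintegral_indicator_const (measurableSet_toMeasurable _ _), measure_toMeasurable]
        simp

section
variable {H : Type*} [NormedAddCommGroup H] [InnerProductSpace ℂ H] {d : ℕ} {Φ : Ed d × ℝ → H} {C : ℝ}

lemma cross (hd : 4 ≤ d) (hΦ : Hyp d Φ C) : ∃ C' : ℝ, 0 < C' ∧ ∀ (j k : ℕ) (u : ℝ) (A : Finset (Ed d × ℝ)) (a : Ed d × ℝ),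
    k + 3 ≤ j → 1 ≤ u → (2:ℝ)^j ≤ a.2 → a.2 < 2^(j+1) → InJ A k → Dens A k u →
    ∑ b ∈ A, ‖inner ℂ (Φ a) (Φ b)‖ ≤ C' * u * (2^(j+1))^(d-1) * ((2:ℝ)^k)^(-(1/2):ℝ) := by
  classical
  have hd' : (4:ℝ) ≤ d := by exact_mod_cast hd
  have hC := hΦ.pos
  set e := ((d:ℝ)-1)/2 with he
  have he1 : 1 < e := by rw [he]; linarith
  refine ⟨16 * d * 2^(d-1) * C * 8^e, by positivity, ?_⟩
  intro j k u A a hkj hu ha1 ha2 hA hD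
  set T : ℝ := 2^(j+1) with hT
  set s : ℝ := 2^k with hs
  have hs1 : 1 ≤ s := one_le_pow₀ (by norm_num)
  have hs0 : 0 < s := by linarith
  have hTs : 16 * s ≤ T := by
    rw [hT, hs, show (16:ℝ) = 2^4 by norm_num, ← pow_add]
    exact pow_le_pow_right₀ (by norm_num) (by omega)
  have hT0 : 0 < T := by linarith
  have haT : T / 2 ≤ a.2 := by rw [hT, pow_succ]; linarith
  have ha0 : 1 ≤ a.2 := by linarith
  have hk2 : (2:ℝ)^(k+1) = 2 * s := by rw [hs, pow_succ]; ring
  set S := A.filter (fun b => inner ℂ (Φ a) (Φ b) ≠ 0) with hS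
  have hsum : ∑ b ∈ A, ‖inner ℂ (Φ a) (Φ b)‖ = ∑ b ∈ S, ‖inner ℂ (Φ a) (Φ b)‖ := by
    rw [hS, Finset.sum_filter]
    refine Finset.sum_congr rfl fun b _ => ?_
    split_ifs with h
    · rfl
    · push Not at h; rw [h, norm_zero]
  have hSb : ∀ b ∈ S, (s ≤ b.2 ∧ b.2 < 2 * s) ∧ a.2 - 3 * s ≤ ‖a.1 - b.1‖ ∧ ‖a.1 - b.1‖ ≤ a.2 + 3 * s := by
    intro b hb
    obtain ⟨hbA, hb0⟩ := Finset.mem_filter.1 hb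
    have hbj := hA b hbA
    rw [hk2] at hbj
    have := mt (hΦ.i4 a b ha0 (hA.one_le hbA)) hb0
    push Not at this
    have h1 := le_abs_self (a.2 - b.2)
    exact ⟨hbj, by linarith [this.1], by linarith [this.2]⟩
  have hcard : (S.card : ℝ) * s^d ≤ 16 * d * u * s^2 * (2*T)^(d-1) := by
    have hM : ∀ x, ((S.filter (fun b => ‖b.1 - x‖ ≤ s)).card : ℝ) ≤ u * (2 * s) := by
      intro x
      rcases (S.filter (fun b => ‖b.1 - x‖ ≤ s)).eq_empty_or_nonempty with h | ⟨b0, hb0⟩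
      · rw [h]; simp; positivity
      · obtain ⟨hb0S, hb0x⟩ := Finset.mem_filter.1 hb0
        refine le_trans ?_ (hD b0 (Finset.mem_filter.1 hb0S).1 (2*s) (by linarith) (by
          rw [pow_add]; linarith))
        norm_cast
        apply Finset.card_le_card
        intro b hb
        obtain ⟨hbS, hbx⟩ := Finset.mem_filter.1 hb
        refine Finset.mem_filter.2 ⟨(Finset.mem_filter.1 hbS).1, ?_⟩
        rw [Prod.dist_eq]
        apply max_le
        · have := dist_triangle_right b0.1 b.1 x
          rw [dist_eq_norm b0.1 x, dist_eq_norm b.1 x] at this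
          linarith
        · rw [Real.dist_eq, abs_le]
          have h1 := (hSb b hbS).1
          have h2 := (hSb b0 hb0S).1
          constructor <;> linarith
    have hΩ : ∀ b ∈ S, closedBall b.1 s ⊆ annu a.1 a.2 (4*s) := by
      intro b hb x hx
      rw [mem_closedBall, dist_eq_norm] at hx
      have h1 := (hSb b hb).2
      have h2 : |‖x - a.1‖ - ‖b.1 - a.1‖| ≤ ‖x - b.1‖ := by
        have := abs_norm_sub_norm_le (x - a.1) (b.1 - a.1)
        simpa using this
      have h2 := abs_le.1 h2
      rw [norm_sub_rev b.1 a.1] at h2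
      show |‖x - a.1‖ - a.2| ≤ 4 * s
      rw [abs_le]
      constructor <;> linarith
    have h1 := count_le S _ s hs0.le _ hM hΩ
    have h2 := h1.trans (mul_le_mul_right (annu_vol hd a.1 a.2 (4*s) (by linarith) (by linarith)) _)
    rw [← ENNReal.ofReal_mul (by positivity)] at h2
    have h3 := (ENNReal.ofReal_le_ofReal_iff (by have := om_pos d; positivity)).1 h2
    have hom := om_pos d
    have h4 : (a.2 + 4 * s)^(d-1) ≤ (2*T)^(d-1) := by gcongr; linarith
    have h5 : om d * (S.card * s^d) ≤ om d * (16 * d * u * s^2 * (2*T)^(d-1)) := by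
      calc _ = S.card * (om d * s^d) := by ring
        _ ≤ _ := h3
        _ ≤ u * (2 * s) * (om d * (2 * d * (4*s) * (2*T)^(d-1))) := by gcongr
        _ = _ := by ring
    exact le_of_mul_le_mul_left h5 hom
  have hinner : ∀ b ∈ S, ‖inner ℂ (Φ a) (Φ b)‖ ≤ C * 8^e * s^e := by
    intro b hb
    have hbs := hSb b hb
    have h1 := hΦ.i3 a b ha0 (by linarith)
    rw [← he] at h1
    have h2 : ‖inner ℂ (Φ a) (Φ b)‖ * (T/4)^e ≤ C * 8^e * s^e * (T/4)^e := by
      calc _ ≤ ‖inner ℂ (Φ a) (Φ b)‖ * (1 + ‖a.1 - b.1‖)^e := by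
            gcongr; linarith
        _ ≤ _ := h1
        _ ≤ C * (T^e * (2*s)^e) := by
            have hb1 : b.2 ≤ 2 * s := hbs.1.2.le
            have hb0 : 0 ≤ b.2 := by linarith [hbs.1.1]
            have ha0' : 0 ≤ a.2 := by linarith
            gcongr
        _ = _ := by
            rw [show C * 8^e * s^e * (T/4)^e = C * (8^e * s^e * (T/4)^e) by ring, ← Real.mul_rpow hT0.le (by positivity),
              ← Real.mul_rpow (by norm_num) hs0.le, ← Real.mul_rpow (by positivity) (by positivity)]
            congr 2; ring
    exact le_of_mul_le_mul_right h2 (by positivity)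
  have hexp : s^(2:ℕ) * s^e ≤ s^(d:ℕ) * s^(-(1/2):ℝ) := by
    rw [← Real.rpow_natCast s 2, ← Real.rpow_natCast s d, ← Real.rpow_add hs0, ← Real.rpow_add hs0]
    apply Real.rpow_le_rpow_of_exponent_le hs1
    rw [he]; push_cast; linarith
  rw [hsum]
  have h1 : ∑ b ∈ S, ‖inner ℂ (Φ a) (Φ b)‖ ≤ S.card * (C * 8^e * s^e) := by
    rw [← nsmul_eq_mul]; exact Finset.sum_le_card_nsmul _ _ _ hinner
  refine h1.trans ?_
  have h2 : (S.card * (C * 8^e * s^e)) * s^d ≤ (16 * d * 2^(d-1) * C * 8^e * u * T^(d-1) * s^(-(1/2):ℝ)) * s^d := by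
    calc _ = (S.card * s^d) * (C * 8^e * s^e) := by ring
      _ ≤ (16 * d * u * s^2 * (2*T)^(d-1)) * (C * 8^e * s^e) := by gcongr
      _ = 16 * d * u * (2*T)^(d-1) * (C * 8^e) * (s^(2:ℕ) * s^e) := by ring
      _ ≤ 16 * d * u * (2*T)^(d-1) * (C * 8^e) * (s^(d:ℕ) * s^(-(1/2):ℝ)) := by gcongr
      _ = _ := by rw [mul_pow]; ring
  exact le_of_mul_le_mul_right h2 (by positivity)


def jof {d : ℕ} (a : Ed d × ℝ) : ℕ := Nat.log 2 ⌊a.2⌋₊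

lemma jof_spec {a : Ed d × ℝ} (ha : 1 ≤ a.2) : (2:ℝ)^(jof a) ≤ a.2 ∧ a.2 < 2^(jof a + 1) := by
  have h0 : ⌊a.2⌋₊ ≠ 0 := by
    have := (Nat.one_le_floor_iff a.2).2 ha
    omega
  constructor
  · have h1 := Nat.pow_log_le_self 2 h0
    have h2 : ((2^(Nat.log 2 ⌊a.2⌋₊) : ℕ) : ℝ) ≤ (⌊a.2⌋₊ : ℝ) := by exact_mod_cast h1
    push_cast at h2
    exact h2.trans (Nat.floor_le (by linarith))
  · have h1 := Nat.lt_pow_succ_log_self (b := 2) (by norm_num) ⌊a.2⌋₊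
    have h2 := (Nat.floor_lt (by linarith : 0 ≤ a.2)).1 h1
    push_cast at h2
    exact h2

lemma Dens.mono {A B : Finset (Ed d × ℝ)} {j : ℕ} {u : ℝ} (h : Dens A j u) (hB : B ⊆ A) : Dens B j u := by
  intro a ha ρ h1 h2
  refine le_trans ?_ (h a (hB ha) ρ h1 h2)
  norm_cast
  exact Finset.card_le_card (Finset.filter_subset_filter _ hB)

lemma blocks (hd : 4 ≤ d) (hΦ : Hyp d Φ C) : ∃ C' : ℝ, 0 < C' ∧ ∀ (u : ℝ) (A : Finset (Ed d × ℝ)) (c : Ed d × ℝ → ℂ),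
    1 ≤ u → SepSet A → (∀ a ∈ A, 1 ≤ a.2) → (∀ j, Dens (A.filter (fun a => jof a = j)) j u) → (∀ a, ‖c a‖ ≤ 1) →
    ∑ n ∈ A.image jof, ‖∑ a ∈ A.filter (fun a => jof a = n), c a • Φ a‖^2 ≤ C' * u^(2/((d:ℝ)-1)) * ∑ a ∈ A, a.2^(d-1) := by
  obtain ⟨C1, hC1, h⟩ := single hd hΦ
  refine ⟨C1 * 2^(d-1), by positivity, ?_⟩
  intro u A c hu hA hr hD hc
  rw [← Finset.sum_fiberwise_of_maps_to (s := A) (t := A.image jof) (g := jof) (fun a ha => Finset.mem_image_of_mem _ ha)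
    (fun a => a.2^(d-1)), Finset.mul_sum]
  refine Finset.sum_le_sum fun n _ => ?_
  have hJ : InJ (A.filter (fun a => jof a = n)) n := by
    intro a ha
    obtain ⟨h1, h2⟩ := Finset.mem_filter.1 ha
    rw [← h2]; exact jof_spec (hr a h1)
  refine (h n u _ c hu (hA.mono (Finset.filter_subset _ _)) hJ (hD n) hc).trans ?_
  have h2 : ((A.filter (fun a => jof a = n)).card : ℝ) * (2^n)^(d-1) ≤ ∑ a ∈ A.filter (fun a => jof a = n), a.2^(d-1) := by
    rw [← nsmul_eq_mul]
    refine Finset.card_nsmul_le_sum _ _ _ fun a ha => ?_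
    have := (hJ a ha).1
    gcongr
  calc _ = C1 * 2^(d-1) * u^(2/((d:ℝ)-1)) * (((A.filter (fun a => jof a = n)).card : ℝ) * (2^n)^(d-1)) := by
        rw [pow_succ, mul_pow]; ring
    _ ≤ _ := by gcongr

lemma farsum (hd : 4 ≤ d) (hΦ : Hyp d Φ C) : ∃ C' : ℝ, 0 < C' ∧ ∀ (κ : ℕ) (A : Finset (Ed d × ℝ)),
    (∀ a ∈ A, 1 ≤ a.2) → (∀ j, Dens (A.filter (fun a => jof a = j)) j (2^(κ+1))) → (∀ a ∈ A, 2*κ+2 ≤ jof a) →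
    ∑ a ∈ A, ∑ b ∈ A.filter (fun b => jof b + 3 ≤ jof a), ‖inner ℂ (Φ a) (Φ b)‖ ≤ C' * ∑ a ∈ A, a.2^(d-1) := by
  classical
  obtain ⟨C1, hC1, h⟩ := cross hd hΦ
  set q : ℝ := (2:ℝ)^(-(1/2):ℝ) with hq
  have hq0 : 0 < q := by positivity
  have hq1 : q < 1 := Real.rpow_lt_one_of_one_lt_of_neg (by norm_num) (by norm_num)
  have hq2 : 0 < 1 - q := by linarith
  have hqq : q^2 = 1/2 := by
    rw [hq, ← Real.rpow_natCast, ← Real.rpow_mul (by norm_num)]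
    norm_num
  refine ⟨C1 * 2^(d-1) * (1/(1-q)), by positivity, ?_⟩
  intro κ A hr hD hlow
  rw [Finset.mul_sum]
  refine Finset.sum_le_sum fun a ha => ?_
  have haj := jof_spec (hr a ha)
  have hmaps : ∀ b ∈ A.filter (fun b => jof b + 3 ≤ jof a), jof b ∈ Finset.Ico (2*κ+2) (jof a - 2) := by
    intro b hb
    obtain ⟨h1, h2⟩ := Finset.mem_filter.1 hb
    have := hlow b h1
    rw [Finset.mem_Ico]; omega
  rw [← Finset.sum_fiberwise_of_maps_to hmaps]
  have hk : ∀ k ∈ Finset.Ico (2*κ+2) (jof a - 2),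
      ∑ b ∈ (A.filter (fun b => jof b + 3 ≤ jof a)).filter (fun b => jof b = k), ‖inner ℂ (Φ a) (Φ b)‖
      ≤ C1 * 2^(κ+1) * (2^(jof a+1))^(d-1) * q^k := by
    intro k hk
    rw [Finset.mem_Ico] at hk
    have hsub : (A.filter (fun b => jof b + 3 ≤ jof a)).filter (fun b => jof b = k) ⊆ A.filter (fun b => jof b = k) :=
      Finset.filter_subset_filter _ (Finset.filter_subset _ _)
    have := h (jof a) k (2^(κ+1)) (A.filter (fun b => jof b = k)) a (by omega) (one_le_pow₀ (by norm_num)) haj.1 haj.2 (by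
      intro b hb
      obtain ⟨h1, h2⟩ := Finset.mem_filter.1 hb
      rw [← h2]; exact jof_spec (hr b h1)) (hD k)
    have e : ((2:ℝ)^k)^(-(1/2):ℝ) = q^k := by
      rw [hq, ← Real.rpow_natCast, ← Real.rpow_natCast, ← Real.rpow_mul (by norm_num), ← Real.rpow_mul (by norm_num), mul_comm]
    rw [e] at this
    exact (Finset.sum_le_sum_of_subset_of_nonneg hsub (fun _ _ _ => norm_nonneg _)).trans this
  refine (Finset.sum_le_sum hk).trans ?_
  rw [← Finset.mul_sum]
  have hg : ∑ k ∈ Finset.Ico (2*κ+2) (jof a - 2), q^k ≤ q^(2*κ+2) * (1/(1-q)) := by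
    rw [Finset.sum_Ico_eq_sum_range]
    simp_rw [pow_add q (2*κ+2)]
    rw [← Finset.mul_sum]
    gcongr
    exact geomsum_le q hq0.le hq1 _
  have hq3 : (2:ℝ)^(κ+1) * q^(2*κ+2) = 1 := by
    rw [show 2*κ+2 = 2*(κ+1) by ring, pow_mul, hqq, ← mul_pow]; norm_num
  have h5 : ((2:ℝ)^(jof a+1))^(d-1) ≤ 2^(d-1) * a.2^(d-1) := by
    rw [← mul_pow]
    gcongr
    rw [pow_succ]; linarith [haj.1]
  calc _ ≤ C1 * 2^(κ+1) * (2^(jof a+1))^(d-1) * (q^(2*κ+2) * (1/(1-q))) := by gcongr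
    _ = C1 * (2^(jof a+1))^(d-1) * (1/(1-q)) * (2^(κ+1) * q^(2*κ+2)) := by ring
    _ = C1 * (2^(jof a+1))^(d-1) * (1/(1-q)) := by rw [hq3, mul_one]
    _ ≤ C1 * (2^(d-1) * a.2^(d-1)) * (1/(1-q)) := by gcongr
    _ = _ := by ring

lemma total (hd : 4 ≤ d) (hΦ : Hyp d Φ C) : ∃ C' : ℝ, 0 < C' ∧ ∀ (κ : ℕ) (A : Finset (Ed d × ℝ)) (c : Ed d × ℝ → ℂ),
    SepSet A → (∀ a ∈ A, 1 ≤ a.2) → (∀ j, Dens (A.filter (fun a => jof a = j)) j (2^(κ+1))) → (∀ a, ‖c a‖ ≤ 1) →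
    ‖∑ a ∈ A, c a • Φ a‖^2 ≤ C' * (κ+1) * ((2:ℝ)^(κ+1))^(2/((d:ℝ)-1)) * ∑ a ∈ A, a.2^(d-1) := by
  classical
  have hd' : (4:ℝ) ≤ d := by exact_mod_cast hd
  obtain ⟨C1, hC1, hB⟩ := blocks hd hΦ
  obtain ⟨C2, hC2, hF⟩ := farsum hd hΦ
  refine ⟨4 * C1 + 10 * C1 + 4 * C2, by positivity, ?_⟩
  intro κ A c hA hr hD hc
  have hu1 : (1:ℝ) ≤ 2^(κ+1) := one_le_pow₀ (by norm_num)
  set U := ((2:ℝ)^(κ+1))^(2/((d:ℝ)-1)) with hU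
  have hU1 : 1 ≤ U := Real.one_le_rpow hu1 (by apply div_nonneg <;> linarith)
  set A1 := A.filter (fun a => jof a < 2*κ+2) with hA1
  set A2 := A.filter (fun a => ¬ jof a < 2*κ+2) with hA2
  have hs1 : A1 ⊆ A := Finset.filter_subset _ _
  have hs2 : A2 ⊆ A := Finset.filter_subset _ _
  have hpos : ∀ B ⊆ A, 0 ≤ ∑ a ∈ B, a.2^(d-1) := fun B hB => Finset.sum_nonneg fun a ha => by
    have := hr a (hB ha); positivity
  have hle : ∀ B ⊆ A, ∑ a ∈ B, a.2^(d-1) ≤ ∑ a ∈ A, a.2^(d-1) := fun B hB =>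
    Finset.sum_le_sum_of_subset_of_nonneg hB fun a ha _ => by
      have := hr a ha; positivity
  have hDs : ∀ B ⊆ A, ∀ j, Dens (B.filter (fun a => jof a = j)) j (2^(κ+1)) := fun B hB j =>
    (hD j).mono (Finset.filter_subset_filter _ hB)
  set SS := ∑ a ∈ A, a.2^(d-1) with hSS
  have hSS0 : 0 ≤ SS := hpos A subset_rfl
  have hBl : ∀ B ⊆ A, ∑ n ∈ B.image jof, ‖∑ a ∈ B.filter (fun a => jof a = n), c a • Φ a‖^2 ≤ C1 * U * SS := by
    intro B hBA
    refine (hB _ B c hu1 (hA.mono hBA) (fun a ha => hr a (hBA ha)) (hDs B hBA) hc).trans ?_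
    have := hle B hBA
    gcongr
  have low : ‖∑ a ∈ A1, c a • Φ a‖^2 ≤ (2*κ+2) * (C1 * U * SS) := by
    have h1 := near_far A1 (fun a => c a • Φ a) jof (fun _ _ => True) (fun _ _ _ => trivial)
      (2*κ+2) (fun n _ => by
        refine (Finset.card_filter_le _ _).trans ?_
        have : A1.image jof ⊆ Finset.range (2*κ+2) := by
          intro n hn
          obtain ⟨a, ha, rfl⟩ := Finset.mem_image.1 hn
          exact Finset.mem_range.2 (Finset.mem_filter.1 ha).2
        simpa using Finset.card_le_card this)
    simp only [not_true_eq_false, Finset.filter_false, Finset.sum_empty, Finset.sum_const_zero, add_zero] at h1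
    refine h1.trans ?_
    push_cast
    have := hBl A1 hs1
    gcongr
  have high : ‖∑ a ∈ A2, c a • Φ a‖^2 ≤ 5 * (C1 * U * SS) + 2 * C2 * SS := by
    have h1 := near_far A2 (fun a => c a • Φ a) jof (fun n m => n ≤ m + 2 ∧ m ≤ n + 2) (fun n m h => ⟨h.2, h.1⟩)
      5 (fun n _ => by
        have : ((A2.image jof).filter (fun m => n ≤ m + 2 ∧ m ≤ n + 2)) ⊆ Finset.Icc (n-2) (n+2) := by
          intro m hm
          rw [Finset.mem_filter] at hm
          rw [Finset.mem_Icc]; omega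
        refine (Finset.card_le_card this).trans ?_
        rw [Nat.card_Icc]; omega)
    refine h1.trans ?_
    have hn := hBl A2 hs2
    have hF2 := hF κ A2 (fun a ha => hr a (hs2 ha)) (hDs A2 hs2) (fun a ha => by
      have := (Finset.mem_filter.1 ha).2; omega)
    have hf : ∑ a ∈ A2, ∑ b ∈ A2.filter (fun b => ¬ (jof a ≤ jof b + 2 ∧ jof b ≤ jof a + 2)),
        ‖inner ℂ (c a • Φ a) (c b • Φ b)‖ ≤ 2 * C2 * SS := by
      have hi : ∀ a b, ‖inner ℂ (c a • Φ a) (c b • Φ b)‖ ≤ ‖inner ℂ (Φ a) (Φ b)‖ := by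
        intro a b
        rw [inner_smul_left, inner_smul_right, norm_mul, norm_mul, RCLike.norm_conj]
        calc _ ≤ 1 * (1 * ‖inner ℂ (Φ a) (Φ b)‖) := by
              gcongr
              exacts [hc a, hc b]
          _ = _ := by ring
      have hsplit : ∀ a ∈ A2, ∑ b ∈ A2.filter (fun b => ¬ (jof a ≤ jof b + 2 ∧ jof b ≤ jof a + 2)),
          ‖inner ℂ (c a • Φ a) (c b • Φ b)‖ ≤
          ∑ b ∈ A2.filter (fun b => jof b + 3 ≤ jof a), ‖inner ℂ (Φ a) (Φ b)‖
          + ∑ b ∈ A2, if jof a + 3 ≤ jof b then ‖inner ℂ (Φ b) (Φ a)‖ else 0 := by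
        intro a _
        rw [Finset.sum_filter (s := A2), Finset.sum_filter (s := A2), ← Finset.sum_add_distrib]
        refine Finset.sum_le_sum fun b _ => ?_
        have h0 := hi a b
        have h01 := norm_nonneg (inner ℂ (Φ a) (Φ b))
        have hsym : ‖inner ℂ (Φ b) (Φ a)‖ = ‖inner ℂ (Φ a) (Φ b)‖ := norm_inner_symm _ _
        rw [hsym]
        split_ifs <;> first | linarith | omega
      refine (Finset.sum_le_sum hsplit).trans ?_
      rw [Finset.sum_add_distrib, Finset.sum_comm (s := A2) (t := A2)]
      simp_rw [← Finset.sum_filter]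
      have := hle A2 hs2
      have h6 : C2 * ∑ a ∈ A2, a.2^(d-1) ≤ C2 * SS := by gcongr
      linarith
    push_cast
    have := mul_le_mul_of_nonneg_left hn (by norm_num : (0:ℝ) ≤ 5)
    exact add_le_add this hf
  have hsum : ∑ a ∈ A, c a • Φ a = ∑ a ∈ A1, c a • Φ a + ∑ a ∈ A2, c a • Φ a :=
    (Finset.sum_filter_add_sum_filter_not _ _ _).symm
  rw [hsum]
  have h2 : ∀ x y : H, ‖x + y‖^2 ≤ 2 * ‖x‖^2 + 2 * ‖y‖^2 := by
    intro x y
    have := norm_add_le x y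
    nlinarith [sq_nonneg (‖x‖ - ‖y‖), norm_nonneg (x+y), norm_nonneg x, norm_nonneg y]
  refine (h2 _ _).trans ?_
  have hκ : (0:ℝ) ≤ κ := by positivity
  have e1 : C1 * U * SS ≤ C1 * U * SS * (κ + 1) := le_mul_of_one_le_right (by positivity) (by linarith)
  have e2 : C2 * SS ≤ C2 * SS * (U * (κ + 1)) := le_mul_of_one_le_right (by positivity) (by nlinarith)
  nlinarith

end

lemma suppvol1 {d : ℕ} (hd : 4 ≤ d) : ∃ C : ℝ, 0 < C ∧ ∀ (j : ℕ) (m : ℝ) (E B : Finset (Ed d × ℝ)), 0 < m → B ⊆ E →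
    InJ E j → (∀ a ∈ B, ∃ ρ : ℝ, 1 ≤ ρ ∧ ρ ≤ 2^(j+4) ∧ m * ρ ≤ ((E.filter (fun b => dist a b ≤ ρ)).card : ℝ)) →
    volume (⋃ a ∈ B, annu a.1 a.2 1) ≤ ENNReal.ofReal (C * m⁻¹ * ∑ a ∈ E, a.2^(d-1)) := by
  classical
  have hd' : (4:ℝ) ≤ d := by exact_mod_cast hd
  have hom := om_pos d
  refine ⟨om d * 22 * d * 354^(d-1), by positivity, ?_⟩
  intro j m E B hm hBE hJ hB
  choose! ρ h1 h2 h3 using hB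
  obtain ⟨u, hut, hdisj, hcov⟩ := Vitali.exists_disjoint_subfamily_covering_enlargement_closedBall (B : Set (Ed d × ℝ))
    id ρ (2^(j+4)) (fun a ha => h2 a ha) 5 (by norm_num)
  have hfin : u.Finite := B.finite_toSet.subset hut
  set U := hfin.toFinset with hU
  have hUB : ∀ b ∈ U, b ∈ B := fun b hb => hut (hfin.mem_toFinset.1 hb)
  have hsub : (⋃ a ∈ B, annu a.1 a.2 1) ⊆ ⋃ b ∈ U, annu b.1 b.2 (11 * ρ b) := by
    intro x hx
    simp only [mem_iUnion] at hx ⊢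
    obtain ⟨a, ha, hx⟩ := hx
    obtain ⟨b, hb, hab⟩ := hcov a ha
    refine ⟨b, hfin.mem_toFinset.2 hb, ?_⟩
    have h4 := h1 b (hut hb)
    have h5 : dist a b ≤ 5 * ρ b := hab (mem_closedBall_self (by linarith [h1 a ha]))
    rw [Prod.dist_eq] at h5
    have h6 := (le_max_left _ _).trans h5
    have h7 := (le_max_right _ _).trans h5
    rw [Real.dist_eq] at h7
    rw [dist_eq_norm] at h6
    have h8 : |‖x - a.1‖ - ‖x - b.1‖| ≤ ‖a.1 - b.1‖ := by
      have := abs_norm_sub_norm_le (x - a.1) (x - b.1)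
      rw [sub_sub_sub_cancel_left, norm_sub_rev b.1 a.1] at this
      exact this
    have h9 : |‖x - a.1‖ - a.2| ≤ 1 := hx
    show |‖x - b.1‖ - b.2| ≤ 11 * ρ b
    rw [abs_le] at h7 h8 h9 ⊢
    constructor <;> linarith
  have hvol : ∀ b ∈ U, volume (annu b.1 b.2 (11 * ρ b)) ≤ ENNReal.ofReal (om d * 22 * d * 354^(d-1) * (2^j)^(d-1) * ρ b) := by
    intro b hb
    have hb1 := hJ b (hBE (hUB b hb))
    have hb2 := h1 b (hUB b hb)
    have hb3 := h2 b (hUB b hb)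
    have hb4 := hJ.one_le (hBE (hUB b hb))
    refine (annu_vol hd b.1 b.2 (11 * ρ b) (by linarith) (by linarith)).trans (ENNReal.ofReal_le_ofReal ?_)
    have : (b.2 + 11 * ρ b)^(d-1) ≤ (354 * 2^j)^(d-1) := by
      gcongr
      rw [pow_add] at hb3 hb1
      have : (0:ℝ) < 2^j := by positivity
      linarith
    calc _ ≤ om d * (2 * d * (11 * ρ b) * (354 * 2^j)^(d-1)) := by gcongr
      _ = _ := by rw [mul_pow]; ring
  have hcount : m * ∑ b ∈ U, ρ b ≤ E.card := by
    rw [Finset.mul_sum]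
    calc _ ≤ ∑ b ∈ U, ((E.filter (fun x => dist b x ≤ ρ b)).card : ℝ) :=
          Finset.sum_le_sum fun b hb => h3 b (hUB b hb)
      _ = ((U.biUnion fun b => E.filter (fun x => dist b x ≤ ρ b)).card : ℝ) := by
          rw [Finset.card_biUnion]
          · push_cast; rfl
          · intro b hb c hc hbc
            show Disjoint (E.filter (fun x => dist b x ≤ ρ b)) (E.filter (fun x => dist c x ≤ ρ c))
            rw [Finset.disjoint_left]
            intro x hx hx'
            have := hdisj (hfin.mem_toFinset.1 hb) (hfin.mem_toFinset.1 hc) hbc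
            refine (Set.disjoint_left.1 this) (a := x) ?_ ?_
            · rw [mem_closedBall, dist_comm]; exact (Finset.mem_filter.1 hx).2
            · rw [mem_closedBall, dist_comm]; exact (Finset.mem_filter.1 hx').2
      _ ≤ _ := by
          norm_cast
          apply Finset.card_le_card
          intro x hx
          obtain ⟨b, _, hx⟩ := Finset.mem_biUnion.1 hx
          exact (Finset.mem_filter.1 hx).1
  have hE : (E.card : ℝ) * (2^j)^(d-1) ≤ ∑ a ∈ E, a.2^(d-1) := by
    rw [← nsmul_eq_mul]
    refine Finset.card_nsmul_le_sum _ _ _ fun a ha => ?_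
    have := (hJ a ha).1
    gcongr
  calc _ ≤ volume (⋃ b ∈ U, annu b.1 b.2 (11 * ρ b)) := measure_mono hsub
    _ ≤ ∑ b ∈ U, volume (annu b.1 b.2 (11 * ρ b)) := measure_biUnion_finset_le _ _
    _ ≤ ∑ b ∈ U, ENNReal.ofReal (om d * 22 * d * 354^(d-1) * (2^j)^(d-1) * ρ b) := Finset.sum_le_sum hvol
    _ = ENNReal.ofReal (∑ b ∈ U, om d * 22 * d * 354^(d-1) * (2^j)^(d-1) * ρ b) := by
        rw [ENNReal.ofReal_sum_of_nonneg]
        intro b hb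
        have := h1 b (hUB b hb)
        positivity
    _ ≤ _ := by
        apply ENNReal.ofReal_le_ofReal
        rw [← Finset.mul_sum]
        have h10 : ∑ b ∈ U, ρ b ≤ m⁻¹ * E.card := by
          rw [inv_mul_eq_div, le_div_iff₀ hm]; linarith
        calc _ ≤ om d * 22 * d * 354^(d-1) * (2^j)^(d-1) * (m⁻¹ * E.card) := by gcongr
          _ = om d * 22 * d * 354^(d-1) * m⁻¹ * (E.card * (2^j)^(d-1)) := by ring
          _ ≤ _ := by gcongr

/-- density level predicate -/
def GG {d : ℕ} (E : Finset (Ed d × ℝ)) (κ : ℕ) (a : Ed d × ℝ) : Prop :=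
  ∃ ρ : ℝ, 1 ≤ ρ ∧ ρ ≤ 2^(jof a+4) ∧ 2^κ * ρ ≤ (((E.filter (fun b => jof b = jof a)).filter (fun b => dist a b ≤ ρ)).card : ℝ)

lemma suppvol {d : ℕ} (hd : 4 ≤ d) : ∃ C : ℝ, 0 < C ∧ ∀ (κ : ℕ) (E B : Finset (Ed d × ℝ)), B ⊆ E →
    (∀ a ∈ E, 1 ≤ a.2) → (∀ a ∈ B, GG E κ a) →
    volume (⋃ a ∈ B, annu a.1 a.2 1) ≤ ENNReal.ofReal (C * ((2:ℝ)^κ)⁻¹ * ∑ a ∈ E, a.2^(d-1)) := by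
  classical
  obtain ⟨C, hC, h⟩ := suppvol1 hd
  refine ⟨C, hC, ?_⟩
  intro κ E B hBE hr hG
  have hsub : (⋃ a ∈ B, annu a.1 a.2 1) ⊆ ⋃ j ∈ E.image jof, ⋃ a ∈ B.filter (fun a => jof a = j), annu a.1 a.2 1 := by
    intro x hx
    simp only [mem_iUnion] at hx ⊢
    obtain ⟨a, ha, hx⟩ := hx
    exact ⟨jof a, Finset.mem_image_of_mem _ (hBE ha), a, Finset.mem_filter.2 ⟨ha, rfl⟩, hx⟩
  refine (measure_mono hsub).trans ((measure_biUnion_finset_le _ _).trans ?_)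
  rw [← Finset.sum_fiberwise_of_maps_to (s := E) (t := E.image jof) (g := jof) (fun a ha => Finset.mem_image_of_mem _ ha)
    (fun a => a.2^(d-1)), Finset.mul_sum, ENNReal.ofReal_sum_of_nonneg]
  · refine Finset.sum_le_sum fun j _ => ?_
    refine h j (2^κ) (E.filter (fun a => jof a = j)) _ (by positivity) (Finset.filter_subset_filter _ hBE) ?_ ?_
    · intro a ha
      obtain ⟨h1, h2⟩ := Finset.mem_filter.1 ha
      rw [← h2]; exact jof_spec (hr a h1)
    · intro a ha
      obtain ⟨h1, h2⟩ := Finset.mem_filter.1 ha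
      have := hG a h1
      unfold GG at this
      rw [h2] at this
      exact this
  · intro j _
    have : 0 ≤ ∑ a ∈ E.filter (fun a => jof a = j), a.2^(d-1) := Finset.sum_nonneg fun a ha => by
      have := hr a (Finset.mem_filter.1 ha).1
      positivity
    positivity

open Classical in
def kap {d : ℕ} (E : Finset (Ed d × ℝ)) (a : Ed d × ℝ) : ℕ := Nat.findGreatest (fun κ => GG E κ a) E.card

lemma kap_spec {d : ℕ} (E : Finset (Ed d × ℝ)) (a : Ed d × ℝ) (ha : a ∈ E) : GG E (kap E a) a ∧ ¬ GG E (kap E a + 1) a := by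
  classical
  have h0 : GG E 0 a := by
    refine ⟨1, le_rfl, one_le_pow₀ (by norm_num), ?_⟩
    simp only [pow_zero, mul_one, Nat.one_le_cast]
    apply Finset.card_pos.2
    exact ⟨a, by simp [ha]⟩
  have hb : ∀ κ, GG E κ a → κ ≤ E.card := by
    rintro κ ⟨ρ, h1, h2, h3⟩
    have h4 : (2:ℝ)^κ ≤ E.card := by
      have h5 : (((E.filter (fun b => jof b = jof a)).filter (fun b => dist a b ≤ ρ)).card : ℝ) ≤ E.card := by
        norm_cast
        exact Finset.card_le_card ((Finset.filter_subset _ _).trans (Finset.filter_subset _ _))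
      have : (2:ℝ)^κ ≤ 2^κ * ρ := le_mul_of_one_le_right (by positivity) h1
      linarith
    have h5 : 2^κ ≤ E.card := by exact_mod_cast h4
    exact (Nat.lt_two_pow_self).le.trans h5
  constructor
  · exact Nat.findGreatest_spec (P := fun κ => GG E κ a) (Nat.zero_le _) h0
  · intro h
    exact Nat.findGreatest_is_greatest (P := fun κ => GG E κ a) (n := E.card) (Nat.lt_succ_self _) (hb _ h) h

lemma dens_kap {d : ℕ} (E : Finset (Ed d × ℝ)) (κ j : ℕ) :
    Dens ((E.filter (fun a => kap E a = κ)).filter (fun a => jof a = j)) j (2^(κ+1)) := by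
  intro a ha ρ h1 h2
  obtain ⟨ha, haj⟩ := Finset.mem_filter.1 ha
  obtain ⟨haE, hak⟩ := Finset.mem_filter.1 ha
  have := (kap_spec E a haE).2
  rw [hak] at this
  by_contra hcon
  apply this
  refine ⟨ρ, h1, by rw [haj]; exact h2, ?_⟩
  push Not at hcon
  refine hcon.le.trans ?_
  norm_cast
  apply Finset.card_le_card
  apply Finset.filter_subset_filter
  intro b hb
  obtain ⟨hb, hbj⟩ := Finset.mem_filter.1 hb
  exact Finset.mem_filter.2 ⟨(Finset.mem_filter.1 hb).1, by rw [hbj, haj]⟩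

lemma l2_eq {d : ℕ} (hd : 4 ≤ d) {ψ₀ : Ed d → ℂ} (hψ : Admissible d ψ₀) (A : Finset (Ed d × ℝ)) (hA : ∀ a ∈ A, 1 ≤ a.2)
    (c : Ed d × ℝ → ℂ) :
    eLpNorm (fun x => ∑ a ∈ A, c a * Fyr d ψ₀ a.1 a.2 x) 2 volume = ENNReal.ofReal ‖∑ a ∈ A, c a • Phi d ψ₀ a‖ := by
  have h : (fun x => ∑ a ∈ A, c a * Fyr d ψ₀ a.1 a.2 x) =ᵐ[volume] (∑ a ∈ A, c a • Phi d ψ₀ a : Lp ℂ 2 (volume : Measure (Ed d))) := by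
    have h1 := Lp.coeFn_finsetSum A (fun a => c a • Phi d ψ₀ a)
    have h2 : ∀ᵐ x ∂(volume : Measure (Ed d)), ∀ a ∈ A, (c a • Phi d ψ₀ a : Lp ℂ 2 (volume : Measure (Ed d))) x = c a * Fyr d ψ₀ a.1 a.2 x := by
      refine (Filter.eventually_all_finset A).2 fun a ha => ?_
      have := hA a ha
      filter_upwards [Lp.coeFn_smul (c a) (Phi d ψ₀ a), Phi_ae hd hψ a (by linarith)] with x hx1 hx2
      rw [hx1, Pi.smul_apply, hx2, smul_eq_mul]
    filter_upwards [h1, h2] with x hx1 hx2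
    rw [hx1, Finset.sum_apply]
    exact (Finset.sum_congr rfl hx2).symm
  rw [eLpNorm_congr_ae h, Lp.norm_def, ENNReal.ofReal_toReal (Lp.eLpNorm_ne_top _)]

lemma G_cont {d : ℕ} (hd : 4 ≤ d) {ψ₀ : Ed d → ℂ} (hψ : Admissible d ψ₀) (A : Finset (Ed d × ℝ)) (hA : ∀ a ∈ A, 1 ≤ a.2)
    (c : Ed d × ℝ → ℂ) : Continuous (fun x => ∑ a ∈ A, c a * Fyr d ψ₀ a.1 a.2 x) :=
  continuous_finsetSum _ fun a ha => continuous_const.mul (Fyr_continuous hd hψ a.1 a.2 (by linarith [hA a ha]))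

lemma level {d : ℕ} (hd : 4 ≤ d) {ψ₀ : Ed d → ℂ} (hψ : Admissible d ψ₀) (p : ℝ) (hp1 : 1 ≤ p) (hp2 : p ≤ 2) :
    ∃ C : ℝ, 0 < C ∧ ∀ (κ : ℕ) (E : Finset (Ed d × ℝ)) (c : Ed d × ℝ → ℂ), SepSet E → (∀ a ∈ E, 1 ≤ a.2) → (∀ a, ‖c a‖ ≤ 1) →
    eLpNorm (fun x => ∑ a ∈ E.filter (fun a => kap E a = κ), c a * Fyr d ψ₀ a.1 a.2 x) (ENNReal.ofReal p) volume ≤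
      ENNReal.ofReal (C * ((κ+1) * ((2:ℝ)^(1/((d:ℝ)-1) + 1/2 - 1/p))^κ) * (∑ a ∈ E, a.2^(d-1))^(1/p)) := by
  classical
  have hd' : (4:ℝ) ≤ d := by exact_mod_cast hd
  obtain ⟨C0, hΦ⟩ := hyp_phi hd hψ
  obtain ⟨C1, hC1, hT⟩ := total hd hΦ
  obtain ⟨C2, hC2, hS⟩ := suppvol hd
  have he : 0 ≤ 1/p - 1/2 := by
    rw [sub_nonneg]; exact one_div_le_one_div_of_le (by linarith) hp2
  refine ⟨C1^(1/2:ℝ) * (2:ℝ)^(1/((d:ℝ)-1)) * C2^(1/p-1/2), by positivity, ?_⟩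
  intro κ E c hE hr hc
  set A := E.filter (fun a => kap E a = κ) with hA
  have hAE : A ⊆ E := Finset.filter_subset _ _
  set SS := ∑ a ∈ E, a.2^(d-1) with hSS
  have hSS0 : 0 ≤ SS := Finset.sum_nonneg fun a ha => by
    have := hr a ha
    positivity
  set G := fun x => ∑ a ∈ A, c a * Fyr d ψ₀ a.1 a.2 x with hG
  set Ω := ⋃ a ∈ A, annu a.1 a.2 1 with hΩ
  have hsupp : Function.support G ⊆ Ω := by
    intro x hx
    obtain ⟨a, ha, hax⟩ := Finset.exists_ne_zero_of_sum_ne_zero hx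
    have := Fyr_supp hψ a.1 a.2 x (right_ne_zero_of_mul hax)
    simp only [hΩ, mem_iUnion]
    exact ⟨a, ha, le_trans this (by norm_num)⟩
  have hΩv := hS κ E A hAE hr (fun a ha => by
    obtain ⟨h1, h2⟩ := Finset.mem_filter.1 ha
    rw [← h2]; exact (kap_spec E a h1).1)
  have hT' := hT κ A c (hE.mono hAE) (fun a ha => hr a (hAE ha)) (dens_kap E κ) hc
  have hAS : ∑ a ∈ A, a.2^(d-1) ≤ SS := Finset.sum_le_sum_of_subset_of_nonneg hAE fun a ha _ => by
      have := hr a ha; positivity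
  have h2 : eLpNorm G 2 volume ≤ ENNReal.ofReal ((C1 * (κ+1) * ((2:ℝ)^(κ+1))^(2/((d:ℝ)-1)) * SS)^(1/2:ℝ)) := by
    rw [hG, l2_eq hd hψ A (fun a ha => hr a (hAE ha)) c]
    apply ENNReal.ofReal_le_ofReal
    rw [← Real.sqrt_eq_rpow]
    apply Real.le_sqrt_of_sq_le
    refine hT'.trans ?_
    gcongr
  rw [← eLpNorm_restrict_eq_of_support_subset hsupp]
  refine (eLpNorm_le_eLpNorm_mul_rpow_measure_univ (q := 2) (by
    rw [show (2:ℝ≥0∞) = ENNReal.ofReal 2 by simp]; exact ENNReal.ofReal_le_ofReal hp2)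
    (G_cont hd hψ A (fun a ha => hr a (hAE ha)) c).aestronglyMeasurable).trans ?_
  rw [Measure.restrict_apply_univ, ENNReal.toReal_ofReal (by linarith), ENNReal.toReal_ofNat]
  calc _ ≤ ENNReal.ofReal ((C1 * (κ+1) * ((2:ℝ)^(κ+1))^(2/((d:ℝ)-1)) * SS)^(1/2:ℝ)) *
        (ENNReal.ofReal (C2 * ((2:ℝ)^κ)⁻¹ * SS))^(1/p-1/2) := by
        gcongr
        exact (eLpNorm_restrict_le _ _ _ _).trans h2
    _ = ENNReal.ofReal ((C1 * (κ+1) * ((2:ℝ)^(κ+1))^(2/((d:ℝ)-1)) * SS)^(1/2:ℝ) * (C2 * ((2:ℝ)^κ)⁻¹ * SS)^(1/p-1/2)) := by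
        rw [ENNReal.ofReal_rpow_of_nonneg (by positivity) he, ENNReal.ofReal_mul (by positivity)]
    _ ≤ _ := by
        apply ENNReal.ofReal_le_ofReal
        rw [Real.mul_rpow (by positivity) hSS0, Real.mul_rpow (by positivity) (by positivity),
          Real.mul_rpow (by positivity) (by positivity), Real.mul_rpow (by positivity) hSS0,
          Real.mul_rpow (by positivity) (by positivity)]
        have e1 : SS^(1/2:ℝ) * SS^(1/p-1/2) = SS^(1/p) := by
          rw [← Real.rpow_add' hSS0 (by
            have : 0 < 1/p := by positivity
            linarith)]
          congr 1; ring
        have e2 : ((κ:ℝ)+1)^(1/2:ℝ) ≤ κ + 1 := by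
          have : (1:ℝ) ≤ κ + 1 := by have : (0:ℝ) ≤ κ := by positivity
                                     linarith
          calc _ ≤ ((κ:ℝ)+1)^(1:ℝ) := Real.rpow_le_rpow_of_exponent_le this (by norm_num)
            _ = _ := Real.rpow_one _
        have e3 : (((2:ℝ)^(κ+1))^(2/((d:ℝ)-1)))^(1/2:ℝ) * (((2:ℝ)^κ)⁻¹)^(1/p-1/2) =
            (2:ℝ)^(1/((d:ℝ)-1)) * ((2:ℝ)^(1/((d:ℝ)-1) + 1/2 - 1/p))^κ := by
          rw [← Real.rpow_natCast, ← Real.rpow_natCast, ← Real.rpow_natCast, ← Real.rpow_neg (by norm_num),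
            ← Real.rpow_mul (by positivity), ← Real.rpow_mul (by positivity), ← Real.rpow_mul (by positivity),
            ← Real.rpow_mul (by positivity), ← Real.rpow_add (by norm_num), ← Real.rpow_add (by norm_num)]
          congr 1
          push_cast
          have : (d:ℝ) - 1 ≠ 0 := by linarith
          field_simp
          ring
        calc _ = (C1^(1/2:ℝ) * C2^(1/p-1/2)) * ((κ:ℝ)+1)^(1/2:ℝ) * ((((2:ℝ)^(κ+1))^(2/((d:ℝ)-1)))^(1/2:ℝ) * (((2:ℝ)^κ)⁻¹)^(1/p-1/2)) * (SS^(1/2:ℝ) * SS^(1/p-1/2)) := by ring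
          _ ≤ (C1^(1/2:ℝ) * C2^(1/p-1/2)) * ((κ:ℝ)+1) * ((2:ℝ)^(1/((d:ℝ)-1)) * ((2:ℝ)^(1/((d:ℝ)-1) + 1/2 - 1/p))^κ) * SS^(1/p) := by
            rw [e1, e3]; gcongr
          _ = _ := by ring

lemma pd_lt {d : ℕ} (hd : 4 ≤ d) (p : ℝ) (hp1 : 1 ≤ p) (hpd : p < (2*(d:ℝ)-2)/((d:ℝ)+1)) :
    p ≤ 2 ∧ 1/((d:ℝ)-1) + 1/2 - 1/p < 0 := by
  have hd' : (4:ℝ) ≤ d := by exact_mod_cast hd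
  rw [lt_div_iff₀ (by linarith)] at hpd
  constructor
  · nlinarith
  · have h1 : 0 < (d:ℝ) - 1 := by linarith
    have h0 : 0 < p := by linarith
    rw [show 1/((d:ℝ)-1) + 1/2 - 1/p = (p * (d + 1) - (2 * d - 2)) / (2 * p * (d-1)) by field_simp; ring]
    apply div_neg_of_neg_of_pos
    · linarith
    · positivity

lemma discrete {d : ℕ} (hd : 4 ≤ d) {ψ₀ : Ed d → ℂ} (hψ : Admissible d ψ₀) (p : ℝ) (hp1 : 1 ≤ p) (hpd : p < (2*(d:ℝ)-2)/((d:ℝ)+1)) :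
    ∃ C : ℝ, 0 < C ∧ ∀ (E : Finset (Ed d × ℝ)) (c : Ed d × ℝ → ℂ), SepSet E → (∀ a ∈ E, 1 ≤ a.2) → (∀ a, ‖c a‖ ≤ 1) →
    eLpNorm (fun x => ∑ a ∈ E, c a * Fyr d ψ₀ a.1 a.2 x) (ENNReal.ofReal p) volume ≤
      ENNReal.ofReal (C * (∑ a ∈ E, a.2^(d-1))^(1/p)) := by
  classical
  obtain ⟨hp2, hneg⟩ := pd_lt hd p hp1 hpd
  obtain ⟨C1, hC1, hL⟩ := level hd hψ p hp1 hp2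
  set q := (2:ℝ)^(1/((d:ℝ)-1) + 1/2 - 1/p) with hq
  have hq0 : 0 < q := by positivity
  have hq1 : q < 1 := Real.rpow_lt_one_of_one_lt_of_neg (by norm_num) hneg
  have hsum : Summable (fun κ : ℕ => ((κ:ℝ)+1) * q^κ) := by
    have h1 := summable_pow_mul_geometric_of_norm_lt_one 1 (r := q) (by rw [Real.norm_of_nonneg hq0.le]; exact hq1)
    have h2 := summable_geometric_of_lt_one hq0.le hq1
    refine (h1.add h2).congr fun κ => ?_
    ring
  set Z := ∑' κ : ℕ, ((κ:ℝ)+1) * q^κ with hZ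
  have hZ0 : 0 ≤ Z := tsum_nonneg fun κ => by positivity
  refine ⟨C1 * (Z + 1), by positivity, ?_⟩
  intro E c hE hr hc
  have hSS0 : 0 ≤ ∑ a ∈ E, a.2^(d-1) := Finset.sum_nonneg fun a ha => by
    have := hr a ha
    positivity
  have hdec : (fun x => ∑ a ∈ E, c a * Fyr d ψ₀ a.1 a.2 x) =
      ∑ κ ∈ E.image (kap E), fun x => ∑ a ∈ E.filter (fun a => kap E a = κ), c a * Fyr d ψ₀ a.1 a.2 x := by
    funext x
    rw [Finset.sum_apply, Finset.sum_fiberwise_of_maps_to (fun a ha => Finset.mem_image_of_mem _ ha)]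
  rw [hdec]
  refine (eLpNorm_sum_le (fun κ _ => (G_cont hd hψ _ (fun a ha => hr a (Finset.mem_filter.1 ha).1) c).aestronglyMeasurable)
    (by rw [← ENNReal.ofReal_one]; exact ENNReal.ofReal_le_ofReal hp1)).trans ?_
  refine (Finset.sum_le_sum fun κ _ => hL κ E c hE hr hc).trans ?_
  rw [← ENNReal.ofReal_sum_of_nonneg (fun κ _ => by positivity)]
  apply ENNReal.ofReal_le_ofReal
  rw [← Finset.sum_mul, ← Finset.mul_sum]
  have : ∑ κ ∈ E.image (kap E), ((κ:ℝ)+1) * q^κ ≤ Z := hsum.sum_le_tsum _ (fun κ _ => by positivity)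
  gcongr
  linarith

def latB (d : ℕ) : Module.Basis (Fin d ⊕ Unit) ℝ (Ed d × ℝ) :=
  (EuclideanSpace.basisFun (Fin d) ℝ).toBasis.prod (Module.Basis.singleton Unit ℝ)

lemma latB_int {d : ℕ} {g : Ed d × ℝ} (hg : g ∈ Submodule.span ℤ (Set.range (latB d))) :
    (g.1 = 0 ∨ 1 ≤ ‖g.1‖) ∧ (g.2 = 0 ∨ 1 ≤ |g.2|) := by
  have h := ((latB d).mem_span_iff_repr_mem ℤ g).1 hg
  have hz : ∀ z : ℤ, (z:ℝ) ≠ 0 → 1 ≤ |(z:ℝ)| := by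
    intro z hz
    have : z ≠ 0 := by exact_mod_cast hz
    exact_mod_cast Int.one_le_abs this
  constructor
  · by_cases h0 : g.1 = 0
    · exact Or.inl h0
    · right
      have : ∃ i, g.1 i ≠ 0 := by
        by_contra hcon
        push Not at hcon
        exact h0 (PiLp.ext hcon)
      obtain ⟨i, hi⟩ := this
      obtain ⟨z, hz'⟩ := h (Sum.inl i)
      have hz2 : (z:ℝ) = g.1 i := by
        rw [← eq_intCast (algebraMap ℤ ℝ), hz']
        simp [latB]
      rw [← hz2] at hi
      have h1 := hz z hi
      rw [hz2] at h1
      exact h1.trans (PiLp.norm_apply_le g.1 i)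
  · by_cases h0 : g.2 = 0
    · exact Or.inl h0
    · right
      obtain ⟨z, hz'⟩ := h (Sum.inr ())
      have hz2 : (z:ℝ) = g.2 := by
        rw [← eq_intCast (algebraMap ℤ ℝ), hz']
        simp [latB]
      rw [← hz2] at h0 ⊢
      exact hz z h0

lemma lattice (d : ℕ) : ∃ D : Set (Ed d × ℝ), MeasurableSet D ∧ volume D < ⊤ ∧ ∀ N : ℝ, ∃ L : Finset (Ed d × ℝ),
    (∀ g ∈ L, ∀ g' ∈ L, (g.1 = g'.1 ∨ 1 ≤ ‖g.1 - g'.1‖) ∧ (g.2 = g'.2 ∨ 1 ≤ |g.2 - g'.2|)) ∧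
    (∀ f : Ed d × ℝ → ℂ, Integrable f volume → (∀ v, f v ≠ 0 → ‖v‖ ≤ N) → ∫ v, f v = ∫ v in D, ∑ g ∈ L, f (g + v)) ∧
    (∀ f : Ed d × ℝ → ℝ≥0∞, Measurable f → ∫⁻ v in D, ∑ g ∈ L, f (g + v) ≤ ∫⁻ v, f v) := by
  classical
  set b := latB d
  set D := ZSpan.fundamentalDomain b
  have hDm : MeasurableSet D := ZSpan.fundamentalDomain_measurableSet b
  have hDb : Bornology.IsBounded D := ZSpan.fundamentalDomain_isBounded b
  have hfd := ZSpan.isAddFundamentalDomain b (volume : Measure (Ed d × ℝ))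
  have : (volume : Measure (Ed d × ℝ)).IsAddLeftInvariant := by
    rw [Measure.volume_eq_prod]; infer_instance
  have : VAddInvariantMeasure (Submodule.span ℤ (Set.range b)) (Ed d × ℝ) volume :=
    ⟨fun g s _ => measure_preimage_add volume (g : Ed d × ℝ) s⟩
  refine ⟨D, hDm, hDb.measure_lt_top, ?_⟩
  intro N
  obtain ⟨K, hK⟩ := isBounded_iff_forall_norm_le.1 hDb
  have hfin : (closedBall (0 : Ed d × ℝ) (N + K) ∩ Submodule.span ℤ (Set.range b)).Finite :=
    ZSpan.setFinite_inter b isBounded_closedBall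
  have hfin' : {g : Submodule.span ℤ (Set.range b) | ‖(g : Ed d × ℝ)‖ ≤ N + K}.Finite := by
    refine (hfin.preimage (f := fun g : Submodule.span ℤ (Set.range b) => (g : Ed d × ℝ)) Subtype.val_injective.injOn).subset ?_
    intro g hg
    exact ⟨by simpa using hg, g.2⟩
  set L' := hfin'.toFinset with hL'
  have hinj : Function.Injective (fun g : Submodule.span ℤ (Set.range b) => -(g : Ed d × ℝ)) := by
    intro g g' h
    exact Subtype.ext (neg_injective h)
  have hsum : ∀ {M : Type} [AddCommMonoid M] (f : Ed d × ℝ → M) (v : Ed d × ℝ),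
      ∑ g ∈ L'.map ⟨_, hinj⟩, f (g + v) = ∑ g ∈ L', f (-g +ᵥ v) := by
    intro M _ f v
    rw [Finset.sum_map]
    rfl
  refine ⟨L'.map ⟨_, hinj⟩, ?_, ?_, ?_⟩
  · intro g hg g' hg'
    obtain ⟨x, _, rfl⟩ := Finset.mem_map.1 hg
    obtain ⟨y, _, rfl⟩ := Finset.mem_map.1 hg'
    have := latB_int (Submodule.sub_mem _ y.2 x.2)
    simp only [Function.Embedding.coeFn_mk, Prod.fst_neg, Prod.snd_neg, neg_inj, neg_sub_neg]
    simpa [sub_eq_zero, eq_comm] using this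
  · intro f hf hN
    rw [hfd.integral_eq_tsum' f hf]
    simp_rw [hsum]
    rw [tsum_eq_sum (s := L'), integral_finsetSum]
    · intro g _
      have : Integrable (fun v => f (-g +ᵥ v)) volume := by
        have := hf.comp_add_left (-(g : Ed d × ℝ))
        exact this
      exact this.integrableOn
    · intro g hg
      apply setIntegral_eq_zero_of_forall_eq_zero
      intro v hv
      by_contra hcon
      apply hg
      rw [hL', Set.Finite.mem_toFinset]
      show ‖(g : Ed d × ℝ)‖ ≤ N + K
      have h1 : ‖-(g : Ed d × ℝ) + v‖ ≤ N := hN _ hcon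
      have h2 := hK v hv
      have h3 : (g : Ed d × ℝ) = v - (-(g : Ed d × ℝ) + v) := by abel
      rw [h3]
      refine (norm_sub_le _ _).trans ?_
      linarith
  · intro f hf
    rw [hfd.lintegral_eq_tsum' f]
    simp_rw [hsum]
    rw [lintegral_finsetSum]
    · exact ENNReal.sum_le_tsum _
    · intro g _
      exact hf.comp (measurable_const_add (-(g : Ed d × ℝ)))

lemma eLp_eq {α : Type*} [MeasurableSpace α] (μ : Measure α) (f : α → ℂ) (p : ℝ) (hp : 1 ≤ p) :
    eLpNorm f (ENNReal.ofReal p) μ = (∫⁻ x, ‖f x‖ₑ^p ∂μ)^(1/p) := by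
  rw [eLpNorm_eq_lintegral_rpow_enorm_toReal (by simp; linarith) ENNReal.ofReal_ne_top,
    ENNReal.toReal_ofReal (by linarith)]

lemma eLp_pow {α : Type*} [MeasurableSpace α] (μ : Measure α) (f : α → ℂ) (p : ℝ) (hp : 1 ≤ p) :
    (eLpNorm f (ENNReal.ofReal p) μ)^p = ∫⁻ x, ‖f x‖ₑ^p ∂μ := by
  rw [eLp_eq μ f p hp, ← ENNReal.rpow_mul, one_div_mul_cancel (by linarith), ENNReal.rpow_one]

lemma jensen {α : Type*} [MeasurableSpace α] (μ : Measure α) (f : α → ℂ) (hf : AEStronglyMeasurable f μ) (p : ℝ) (hp : 1 ≤ p) :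
    ‖∫ x, f x ∂μ‖ₑ^p ≤ (∫⁻ x, ‖f x‖ₑ^p ∂μ) * μ univ ^ (p - 1) := by
  have h1 : ‖∫ x, f x ∂μ‖ₑ ≤ eLpNorm f (ENNReal.ofReal 1) μ := by
    rw [ENNReal.ofReal_one, eLpNorm_one_eq_lintegral_enorm]
    exact enorm_integral_le_lintegral_enorm _
  have h2 := eLpNorm_le_eLpNorm_mul_rpow_measure_univ (p := ENNReal.ofReal 1) (q := ENNReal.ofReal p)
    (ENNReal.ofReal_le_ofReal hp) hf
  rw [ENNReal.toReal_ofReal (by linarith), ENNReal.toReal_ofReal (by linarith)] at h2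
  have hp0 : 0 < p := by linarith
  calc _ ≤ (eLpNorm f (ENNReal.ofReal p) μ * μ univ ^ (1/1 - 1/p))^p := by
        gcongr; exact h1.trans h2
    _ = _ := by
        rw [ENNReal.mul_rpow_of_nonneg _ _ hp0.le, eLp_pow μ f p hp, ← ENNReal.rpow_mul]
        congr 2
        field_simp

lemma hF_int {d : ℕ} (hd : 4 ≤ d) {ψ₀ : Ed d → ℂ} (hψ : Admissible d ψ₀) (N B : ℝ) (h : Ed d × ℝ → ℂ) (hm : Measurable h)
    (hB : ∀ v, ‖h v‖ ≤ B) (hs : ∀ v, h v ≠ 0 → 1 < v.2 ∧ ‖v‖ ≤ N) (x : Ed d) :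
    Integrable (fun v => h v * FF d ψ₀ (v, x)) volume := by
  obtain ⟨C, hC, hI⟩ := I1 hd hψ
  have hi : Integrable ((closedBall (0 : Ed d × ℝ) N).indicator (fun _ => B * C)) volume :=
    (integrable_indicator_iff measurableSet_closedBall).2 (integrableOn_const (by exact (isBounded_closedBall.measure_lt_top).ne))
  refine hi.mono' ?_ ?_
  · exact (hm.mul ((FF_continuous hd hψ).comp (Continuous.prodMk continuous_id continuous_const)).measurable).aestronglyMeasurable
  · filter_upwards with v
    have hB0 : 0 ≤ B := (norm_nonneg _).trans (hB v)
    by_cases hv : h v = 0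
    · rw [hv, zero_mul, norm_zero]
      exact indicator_nonneg (fun _ _ => by positivity) _
    · obtain ⟨h1, h2⟩ := hs v hv
      rw [indicator_of_mem (by simpa using h2), norm_mul]
      have h3 := Fyr_eq_FF hd ψ₀ v.1 v.2 (by linarith) x
      rw [Prod.mk.eta] at h3
      rw [← h3]
      exact mul_le_mul (hB v) (hI _ _ h1.le x) (norm_nonneg _) hB0

lemma restr {d : ℕ} (hd : 4 ≤ d) {ψ₀ : Ed d → ℂ} (hψ : Admissible d ψ₀) (p : ℝ) (hp1 : 1 ≤ p) (hpd : p < (2*(d:ℝ)-2)/((d:ℝ)+1)) :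
    ∃ C : ℝ, 0 < C ∧ ∀ (N : ℝ) (h : Ed d × ℝ → ℂ), Measurable h → (∀ v, ‖h v‖ ≤ 1) → (∀ v, h v ≠ 0 → 1 < v.2 ∧ ‖v‖ ≤ N) →
    ∫⁻ x, ‖∫ v, h v * FF d ψ₀ (v, x)‖ₑ^p ≤ ENNReal.ofReal C *
      ∫⁻ v, (Function.support h).indicator (fun v => ENNReal.ofReal (v.2^(d-1))) v := by
  classical
  obtain ⟨C, hC, hdisc⟩ := discrete hd hψ p hp1 hpd
  obtain ⟨D, hDm, hDv, hlat⟩ := lattice d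
  have hp0 : 0 < p := by linarith
  refine ⟨C^p * ((volume D).toReal^(p-1) + 1), by positivity, ?_⟩
  intro N h hm hB hs
  obtain ⟨L, hLsep, hLint, hLl⟩ := hlat N
  have hsupp : MeasurableSet (Function.support h) := measurableSet_support hm
  have hFm : Measurable (FF d ψ₀) := (FF_continuous hd hψ).measurable
  set S : Ed d × ℝ → Ed d → ℂ := fun v x => ∑ g ∈ L, h (g + v) * FF d ψ₀ (g + v, x) with hS
  have hSm : Measurable (Function.uncurry S) := by
    simp only [hS, Function.uncurry_def]
    refine Finset.measurable_fun_sum _ fun g _ => ?_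
    refine (hm.comp (measurable_fst.const_add g)).mul (hFm.comp ?_)
    exact (measurable_fst.const_add g).prodMk measurable_snd
  have hT : ∀ x, ∫ v, h v * FF d ψ₀ (v, x) = ∫ v in D, S v x := by
    intro x
    exact hLint _ (hF_int hd hψ N 1 h hm hB hs x) (fun v hv => (hs v (left_ne_zero_of_mul hv)).2)
  have hv : ∀ v, ∫⁻ x, ‖S v x‖ₑ^p ≤ ENNReal.ofReal (C^p) *
      ∑ g ∈ L, (Function.support h).indicator (fun v => ENNReal.ofReal (v.2^(d-1))) (g + v) := by
    intro v
    set E := (L.map (addRightEmbedding v)).filter (fun a => h a ≠ 0) with hE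
    have hE1 : ∀ a ∈ E, 1 ≤ a.2 := fun a ha => (hs a (Finset.mem_filter.1 ha).2).1.le
    have hSE : S v = fun x => ∑ a ∈ E, h a * Fyr d ψ₀ a.1 a.2 x := by
      funext x
      rw [hE, Finset.sum_filter, Finset.sum_map]
      refine Finset.sum_congr rfl fun g _ => ?_
      simp only [addRightEmbedding_apply]
      split_ifs with h0
      · rw [Fyr_eq_FF hd ψ₀ _ _ (by linarith [(hs _ h0).1])]
      · push Not at h0; rw [h0, zero_mul]
    have hsep : SepSet E := by
      intro a ha b hb
      obtain ⟨g, hg, rfl⟩ := Finset.mem_map.1 (Finset.mem_filter.1 ha).1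
      obtain ⟨g', hg', rfl⟩ := Finset.mem_map.1 (Finset.mem_filter.1 hb).1
      have := hLsep g hg g' hg'
      simpa [dist_eq_norm] using this
    rw [← eLp_pow _ _ p hp1, hSE]
    have h1 := hdisc E h hsep hE1 hB
    have hSS0 : 0 ≤ ∑ a ∈ E, a.2^(d-1) := Finset.sum_nonneg fun a ha => by
      have := hE1 a ha
      positivity
    calc _ ≤ (ENNReal.ofReal (C * (∑ a ∈ E, a.2^(d-1))^(1/p)))^p := by gcongr
      _ = ENNReal.ofReal (C^p) * ENNReal.ofReal (∑ a ∈ E, a.2^(d-1)) := by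
          rw [ENNReal.ofReal_rpow_of_nonneg (by positivity) hp0.le, Real.mul_rpow hC.le (by positivity),
            ← Real.rpow_mul hSS0, one_div_mul_cancel hp0.ne', Real.rpow_one, ENNReal.ofReal_mul (by positivity)]
      _ = _ := by
          congr 1
          rw [ENNReal.ofReal_sum_of_nonneg (fun a ha => by
            have := hE1 a ha
            positivity), hE, Finset.sum_filter, Finset.sum_map]
          refine Finset.sum_congr rfl fun g _ => ?_
          simp only [addRightEmbedding_apply, indicator_apply, Function.mem_support]
  calc ∫⁻ x, ‖∫ v, h v * FF d ψ₀ (v, x)‖ₑ^p ≤ ∫⁻ x, (∫⁻ v in D, ‖S v x‖ₑ^p) * (volume D)^(p-1) := by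
        refine lintegral_mono fun x => ?_
        show ‖∫ v, h v * FF d ψ₀ (v, x)‖ₑ^p ≤ _
        rw [hT x]
        refine (jensen (volume.restrict D) (fun v => S v x) ?_ p hp1).trans ?_
        · exact (hSm.comp (measurable_id.prodMk measurable_const)).aestronglyMeasurable
        · rw [Measure.restrict_apply_univ]
    _ = (∫⁻ v in D, ∫⁻ x, ‖S v x‖ₑ^p) * (volume D)^(p-1) := by
        rw [lintegral_mul_const' _ _ (ENNReal.rpow_ne_top_of_nonneg (by linarith) hDv.ne),
          lintegral_lintegral_swap]
        have : Measurable (Function.uncurry fun x v => ‖S v x‖ₑ^p) :=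
          ((hSm.comp measurable_swap).enorm).pow_const p
        exact this.aemeasurable
    _ ≤ (∫⁻ v in D, ENNReal.ofReal (C^p) *
      ∑ g ∈ L, (Function.support h).indicator (fun v => ENNReal.ofReal (v.2^(d-1))) (g + v)) * (volume D)^(p-1) := by
        gcongr with v
        exact hv v
    _ ≤ (ENNReal.ofReal (C^p) * ∫⁻ v, (Function.support h).indicator (fun v => ENNReal.ofReal (v.2^(d-1))) v) * (volume D)^(p-1) := by
        rw [lintegral_const_mul' _ _ ENNReal.ofReal_ne_top]
        refine mul_le_mul' (mul_le_mul' le_rfl ?_) le_rfl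
        exact hLl _ ((measurable_snd.pow_const _).ennreal_ofReal.indicator hsupp)
    _ ≤ _ := by
        rw [ENNReal.ofReal_mul (by positivity)]
        have : (volume D)^(p-1) ≤ ENNReal.ofReal ((volume D).toReal^(p-1) + 1) := by
          rw [← ENNReal.ofReal_toReal hDv.ne, ENNReal.ofReal_rpow_of_nonneg (by positivity) (by linarith)]
          apply ENNReal.ofReal_le_ofReal
          rw [ENNReal.toReal_ofReal (by positivity)]
          linarith
        calc _ = ENNReal.ofReal (C^p) * (volume D)^(p-1) * ∫⁻ v, (Function.support h).indicator (fun v => ENNReal.ofReal (v.2^(d-1))) v := by ring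
          _ ≤ _ := by gcongr

lemma exists_log2 (B : ℝ) (hB : 0 < B) : ∃ m : ℤ, (2:ℝ)^(m:ℝ) ≤ B ∧ B < (2:ℝ)^((m:ℝ)+1) := by
  refine ⟨Int.log 2 B, ?_, ?_⟩
  · rw [Real.rpow_intCast]
    exact_mod_cast Int.zpow_log_le_self (b := 2) (by norm_num) hB
  · have := Int.lt_zpow_succ_log_self (b := 2) (by norm_num) B
    rw [show ((Int.log 2 B : ℤ) : ℝ) + 1 = ((Int.log 2 B + 1 : ℤ) : ℝ) by push_cast; ring, Real.rpow_intCast]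
    exact_mod_cast this

lemma log2_unique (B : ℝ) (k m : ℤ) (h1 : (2:ℝ)^(m:ℝ) ≤ B) (h2 : B < (2:ℝ)^((m:ℝ)+1))
    (h3 : (2:ℝ)^(k:ℝ) ≤ B) (h4 : B < (2:ℝ)^((k:ℝ)+1)) : k = m := by
  have a1 := (Real.rpow_lt_rpow_left_iff (x := 2) (by norm_num)).1 (h1.trans_lt h4)
  have a2 := (Real.rpow_lt_rpow_left_iff (x := 2) (by norm_num)).1 (h3.trans_lt h2)
  have b1 : m < k + 1 := by exact_mod_cast a1
  have b2 : k < m + 1 := by exact_mod_cast a2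
  omega

lemma sum_int_geom (q : ℝ) (hq : 0 < q) (hq1 : q < 1) : ∃ W : ℝ, 0 < W ∧ ∀ (K : Finset ℤ) (m : ℤ),
    ∑ k ∈ K, q^(|((k:ℝ) - m)|) ≤ W := by
  have hg : Summable (fun n : ℕ => q^n) := summable_geometric_of_lt_one hq.le hq1
  have hs : Summable (fun k : ℤ => q^(|(k:ℝ)|)) := by
    apply Summable.of_nat_of_neg
    · refine hg.congr fun n => ?_
      rw [Int.cast_natCast, abs_of_nonneg (by positivity), Real.rpow_natCast]
    · refine hg.congr fun n => ?_
      rw [Int.cast_neg, Int.cast_natCast, abs_neg, abs_of_nonneg (by positivity), Real.rpow_natCast]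
  refine ⟨∑' k : ℤ, q^(|(k:ℝ)|) + 1, by
    have : 0 ≤ ∑' k : ℤ, q^(|(k:ℝ)|) := tsum_nonneg fun k => by positivity
    linarith, ?_⟩
  intro K m
  have h1 := hs.sum_le_tsum (K.map (Equiv.subRight m).toEmbedding) (fun k _ => by positivity)
  rw [Finset.sum_map] at h1
  simp only [Equiv.coe_toEmbedding, Equiv.subRight_apply, Int.cast_sub] at h1
  linarith

lemma interp_pt (p0 p p1 : ℝ) (h0 : 0 < p0) (h01 : p0 < p) (h1 : p < p1) : ∃ C : ℝ, 0 < C ∧ ∀ (K : Finset ℤ) (b : ℤ → ℝ),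
    (∀ k, 0 ≤ b k) → (∑ k ∈ K, b k)^p ≤ C * ∑ k ∈ K, ((2:ℝ)^((k:ℝ) * (p - p0)) * (b k)^p0 + (2:ℝ)^((k:ℝ) * (p - p1)) * (b k)^p1) := by
  set ε := min ((p1 - p)/p1) ((p - p0)/p0) with hε
  have hε0 : 0 < ε := lt_min (div_pos (by linarith) (by linarith)) (div_pos (by linarith) h0)
  have hε1 : ε * p1 ≤ p1 - p := by
    have := min_le_left ((p1 - p)/p1) ((p - p0)/p0)
    rwa [← hε, le_div_iff₀ (by linarith)] at this
  have hε2 : ε * p0 ≤ p - p0 := by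
    have := min_le_right ((p1 - p)/p1) ((p - p0)/p0)
    rwa [← hε, le_div_iff₀ (by linarith)] at this
  set q := (2:ℝ)^(-ε) with hq
  have hq0 : 0 < q := by positivity
  have hq1 : q < 1 := Real.rpow_lt_one_of_one_lt_of_neg (by norm_num) (by linarith)
  obtain ⟨W, hW, hWs⟩ := sum_int_geom q hq0 hq1
  refine ⟨W^p1 + W^p0 * 2^(p-p0), by positivity, ?_⟩
  intro K b hb
  have hterm : ∀ k : ℤ, 0 ≤ (2:ℝ)^((k:ℝ) * (p - p0)) * (b k)^p0 + (2:ℝ)^((k:ℝ) * (p - p1)) * (b k)^p1 := fun k => by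
    have := hb k
    positivity
  set B := ∑ k ∈ K, b k with hB
  have hB0 : 0 ≤ B := Finset.sum_nonneg fun k _ => hb k
  rcases hB0.eq_or_lt with h | hBp
  · rw [← h, Real.zero_rpow (by linarith)]
    exact mul_nonneg (by positivity) (Finset.sum_nonneg fun k _ => hterm k)
  obtain ⟨m, hm1, hm2⟩ := exists_log2 B hBp
  have : ∃ k ∈ K, q^(|((k:ℝ) - m)|) * B ≤ W * b k := by
    by_contra hcon
    push Not at hcon
    have hne : K.Nonempty := by
      by_contra hK
      rw [Finset.not_nonempty_iff_eq_empty] at hK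
      rw [hB, hK] at hBp
      simp at hBp
    have h2 := Finset.sum_lt_sum_of_nonempty hne hcon
    rw [← Finset.mul_sum, ← Finset.sum_mul, ← hB] at h2
    have h3 := hWs K m
    nlinarith
  obtain ⟨k, hkK, hk⟩ := this
  have hsum := Finset.single_le_sum (f := fun k : ℤ => (2:ℝ)^((k:ℝ) * (p - p0)) * (b k)^p0 + (2:ℝ)^((k:ℝ) * (p - p1)) * (b k)^p1)
    (fun k _ => hterm k) hkK
  refine le_trans ?_ (mul_le_mul_of_nonneg_left hsum (by positivity))
  have hbk := hb k
  have hpw : ∀ e, 0 < e → (2:ℝ)^(-ε * e * |((k:ℝ) - m)|) * B^e ≤ W^e * (b k)^e := by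
    intro e he
    have := Real.rpow_le_rpow (by positivity) hk he.le
    rw [Real.mul_rpow (by positivity) hB0, Real.mul_rpow hW.le hbk, hq, ← Real.rpow_mul (by positivity), ← Real.rpow_mul (by positivity)] at this
    convert this using 3
    ring
  have t0 : 0 ≤ (2:ℝ)^((k:ℝ) * (p - p0)) * (b k)^p0 := by positivity
  have t1 : 0 ≤ (2:ℝ)^((k:ℝ) * (p - p1)) * (b k)^p1 := by positivity
  by_cases hkm : k ≤ m
  · have hkm' : (k:ℝ) ≤ m := by exact_mod_cast hkm
    have e1 := hpw p1 (by linarith)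
    rw [abs_of_nonpos (by linarith)] at e1
    have e2 : B^p * (2:ℝ)^((m:ℝ) * (p1 - p)) ≤ B^p1 := by
      have : B^p1 = B^p * B^(p1-p) := by rw [← Real.rpow_add hBp]; congr 1; ring
      rw [this]
      gcongr
      rw [Real.rpow_mul (by norm_num)]
      exact Real.rpow_le_rpow (by positivity) hm1 (by linarith)
    have e3 : B^p ≤ W^p1 * ((2:ℝ)^((k:ℝ) * (p - p1)) * (b k)^p1) := by
      calc B^p = B^p * 1 := by ring
        _ ≤ B^p * ((2:ℝ)^((m:ℝ) * (p1 - p)) * (2:ℝ)^(-ε * p1 * -((k:ℝ) - m)) * (2:ℝ)^((k:ℝ) * (p - p1))) := by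
            gcongr
            rw [← Real.rpow_add (by norm_num), ← Real.rpow_add (by norm_num)]
            apply Real.one_le_rpow (by norm_num)
            nlinarith
        _ = (B^p * (2:ℝ)^((m:ℝ) * (p1 - p))) * (2:ℝ)^(-ε * p1 * -((k:ℝ) - m)) * (2:ℝ)^((k:ℝ) * (p - p1)) := by ring
        _ ≤ B^p1 * (2:ℝ)^(-ε * p1 * -((k:ℝ) - m)) * (2:ℝ)^((k:ℝ) * (p - p1)) := by gcongr
        _ = ((2:ℝ)^(-ε * p1 * -((k:ℝ) - m)) * B^p1) * (2:ℝ)^((k:ℝ) * (p - p1)) := by ring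
        _ ≤ (W^p1 * (b k)^p1) * (2:ℝ)^((k:ℝ) * (p - p1)) := by gcongr
        _ = _ := by ring
    refine e3.trans ?_
    have : 0 ≤ W^p0 * 2^(p-p0) := by positivity
    have hW1 : 0 ≤ W^p1 := by positivity
    rw [add_mul, mul_add]
    nlinarith [mul_nonneg hW1 t0, mul_nonneg this (add_nonneg t0 t1)]
  · have hkm' : (m:ℝ) ≤ k := by
      have : m ≤ k := by omega
      exact_mod_cast this
    have e1 := hpw p0 h0
    rw [abs_of_nonneg (by linarith)] at e1
    have e2 : B^p ≤ B^p0 * (2:ℝ)^(((m:ℝ)+1) * (p - p0)) := by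
      have : B^p = B^p0 * B^(p-p0) := by rw [← Real.rpow_add hBp]; congr 1; ring
      rw [this]
      gcongr
      rw [Real.rpow_mul (by norm_num)]
      exact Real.rpow_le_rpow hB0 hm2.le (by linarith)
    have e3 : B^p ≤ W^p0 * 2^(p-p0) * ((2:ℝ)^((k:ℝ) * (p - p0)) * (b k)^p0) := by
      calc B^p ≤ B^p0 * (2:ℝ)^(((m:ℝ)+1) * (p - p0)) := e2
        _ ≤ B^p0 * ((2:ℝ)^(-ε * p0 * ((k:ℝ) - m)) * 2^(p-p0) * (2:ℝ)^((k:ℝ) * (p - p0))) := by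
            gcongr
            rw [← Real.rpow_add (by norm_num), ← Real.rpow_add (by norm_num)]
            apply Real.rpow_le_rpow_of_exponent_le (by norm_num)
            nlinarith
        _ = ((2:ℝ)^(-ε * p0 * ((k:ℝ) - m)) * B^p0) * 2^(p-p0) * (2:ℝ)^((k:ℝ) * (p - p0)) := by ring
        _ ≤ (W^p0 * (b k)^p0) * 2^(p-p0) * (2:ℝ)^((k:ℝ) * (p - p0)) := by gcongr
        _ = _ := by ring
    refine e3.trans ?_
    have : 0 ≤ W^p0 * 2^(p-p0) := by positivity
    have hW1 : 0 ≤ W^p1 := by positivity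
    rw [add_mul, mul_add]
    nlinarith [mul_nonneg this t1, mul_nonneg hW1 (add_nonneg t0 t1)]

lemma restr_scaled {d : ℕ} (hd : 4 ≤ d) {ψ₀ : Ed d → ℂ} (hψ : Admissible d ψ₀) (p : ℝ) (hp1 : 1 ≤ p) (hpd : p < (2*(d:ℝ)-2)/((d:ℝ)+1)) :
    ∃ C : ℝ, 0 < C ∧ ∀ (N B : ℝ) (h : Ed d × ℝ → ℂ), 0 < B → Measurable h → (∀ v, ‖h v‖ ≤ B) → (∀ v, h v ≠ 0 → 1 < v.2 ∧ ‖v‖ ≤ N) →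
    ∫⁻ x, ‖∫ v, h v * FF d ψ₀ (v, x)‖ₑ^p ≤ ENNReal.ofReal (C * B^p) *
      ∫⁻ v, (Function.support h).indicator (fun v => ENNReal.ofReal (v.2^(d-1))) v := by
  obtain ⟨C, hC, hr⟩ := restr hd hψ p hp1 hpd
  refine ⟨C, hC, ?_⟩
  intro N B h hB hm hb hs
  have hBc : (B:ℂ) ≠ 0 := by exact_mod_cast hB.ne'
  set g : Ed d × ℝ → ℂ := fun v => (B:ℂ)⁻¹ * h v with hg
  have hsg : Function.support g = Function.support h := by
    ext v; simp [hg, hBc]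
  have h1 := hr N g (hm.const_mul _) (by
    intro v
    simp only [hg, norm_mul, norm_inv, Complex.norm_real, Real.norm_eq_abs, abs_of_pos hB]
    rw [inv_mul_le_iff₀ hB, mul_one]
    exact hb v) (fun v hv => hs v (right_ne_zero_of_mul hv))
  rw [hsg] at h1
  have h2 : ∀ x, ‖∫ v, h v * FF d ψ₀ (v, x)‖ₑ^p = ENNReal.ofReal (B^p) * ‖∫ v, g v * FF d ψ₀ (v, x)‖ₑ^p := by
    intro x
    have : ∫ v, h v * FF d ψ₀ (v, x) = (B:ℂ) * ∫ v, g v * FF d ψ₀ (v, x) := by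
      rw [← integral_const_mul]
      congr 1; funext v
      simp only [hg]; field_simp
    rw [this, enorm_mul, ENNReal.mul_rpow_of_nonneg _ _ (by linarith), ← ENNReal.ofReal_rpow_of_nonneg hB.le (by linarith)]
    congr 2
    rw [← ofReal_norm, Complex.norm_real, Real.norm_eq_abs, abs_of_pos hB]
  simp_rw [h2]
  rw [lintegral_const_mul' _ _ ENNReal.ofReal_ne_top, mul_comm C, ENNReal.ofReal_mul (by positivity), mul_assoc]
  gcongr

lemma T_meas {d : ℕ} (hd : 4 ≤ d) {ψ₀ : Ed d → ℂ} (hψ : Admissible d ψ₀) (h : Ed d × ℝ → ℂ) (hm : Measurable h) :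
    Measurable (fun x => ∫ v, h v * FF d ψ₀ (v, x)) := by
  have hFm : Measurable (FF d ψ₀) := (FF_continuous hd hψ).measurable
  have : StronglyMeasurable (fun q : Ed d × (Ed d × ℝ) => h q.2 * FF d ψ₀ (q.2, q.1)) := by
    apply Measurable.stronglyMeasurable
    exact (hm.comp measurable_snd).mul (hFm.comp (measurable_snd.prodMk measurable_fst))
  exact this.integral_prod_right'.measurable

lemma strong_bdd {d : ℕ} (hd : 4 ≤ d) {ψ₀ : Ed d → ℂ} (hψ : Admissible d ψ₀) (p : ℝ) (hp1 : 1 < p) (hpd : p < (2*(d:ℝ)-2)/((d:ℝ)+1)) :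
    ∃ C : ℝ, 0 < C ∧ ∀ (N : ℝ) (M : ℕ) (h : Ed d × ℝ → ℂ), Measurable h → 
    (∀ v, h v ≠ 0 → 1 < v.2 ∧ ‖v‖ ≤ N ∧ (2:ℝ)^(-(M:ℝ)) ≤ ‖h v‖ ∧ ‖h v‖ ≤ (2:ℝ)^(M:ℝ)) →
    ∫⁻ x, ‖∫ v, h v * FF d ψ₀ (v, x)‖ₑ^p ≤ ENNReal.ofReal C *
      ∫⁻ v, ‖h v‖ₑ^p * ENNReal.ofReal (v.2^(d-1)) := by
  classical
  obtain ⟨p1, hpp1, hp1d⟩ := exists_between hpd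
  obtain ⟨C0, hC0, hr0⟩ := restr_scaled hd hψ 1 le_rfl (hp1.trans hpd)
  obtain ⟨C1, hC1, hr1⟩ := restr_scaled hd hψ p1 (by linarith) hp1d
  obtain ⟨Ci, hCi, hinn⟩ := interp_pt 1 p p1 one_pos hp1 hpp1
  have hp0 : 0 < p := by linarith
  refine ⟨Ci * (C0 * 2 + C1 * 2^p1), by positivity, ?_⟩
  intro N M h hm hs
  set K : Finset ℤ := Finset.Icc (-(M:ℤ)) M with hK
  set A : ℤ → Set (Ed d × ℝ) := fun k => {v | (2:ℝ)^(k:ℝ) ≤ ‖h v‖ ∧ ‖h v‖ < (2:ℝ)^((k:ℝ)+1)} with hA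
  have hAm : ∀ k, MeasurableSet (A k) := fun k =>
    (measurableSet_le measurable_const hm.norm).inter (measurableSet_lt hm.norm measurable_const)
  set hk : ℤ → Ed d × ℝ → ℂ := fun k => (A k).indicator h with hhk
  have hkm : ∀ k, Measurable (hk k) := fun k => hm.indicator (hAm k)
  have hkne : ∀ k v, hk k v ≠ 0 → v ∈ A k ∧ h v ≠ 0 := by
    intro k v hv
    have : v ∈ A k := by
      by_contra hc
      exact hv (indicator_of_notMem hc _)
    refine ⟨this, ?_⟩
    simpa only [hhk, indicator_of_mem this] using hv
  have hkb : ∀ k v, ‖hk k v‖ ≤ (2:ℝ)^((k:ℝ)+1) := by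
    intro k v
    by_cases hv : v ∈ A k
    · simp only [hhk, indicator_of_mem hv]; exact hv.2.le
    · simp only [hhk, indicator_of_notMem hv, norm_zero]; positivity
  have hks : ∀ k v, hk k v ≠ 0 → 1 < v.2 ∧ ‖v‖ ≤ N := fun k v hv =>
    ⟨(hs v (hkne k v hv).2).1, (hs v (hkne k v hv).2).2.1⟩
  have hsum : ∀ v, h v = ∑ k ∈ K, hk k v := by
    intro v
    by_cases hv : h v = 0
    · rw [hv]
      refine (Finset.sum_eq_zero fun k _ => ?_).symm
      by_contra hc
      exact (hkne k v hc).2 hv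
    · obtain ⟨-, -, b1, b2⟩ := hs v hv
      obtain ⟨m, m1, m2⟩ := exists_log2 ‖h v‖ (norm_pos_iff.2 hv)
      have mK : m ∈ K := by
        have a1 := (Real.rpow_lt_rpow_left_iff (x := 2) (by norm_num)).1 (b1.trans_lt m2)
        have a2 := (Real.rpow_le_rpow_left_iff (x := 2) (by norm_num)).1 (m1.trans b2)
        have c1 : -(M:ℤ) < m + 1 := by exact_mod_cast a1
        have c2 : m ≤ (M:ℤ) := by exact_mod_cast a2
        rw [hK, Finset.mem_Icc]; omega
      rw [Finset.sum_eq_single_of_mem m mK]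
      · exact (indicator_of_mem (show v ∈ A m from ⟨m1, m2⟩) _).symm
      · intro k _ hkm'
        refine indicator_of_notMem (fun hc => hkm' ?_) _
        exact log2_unique _ k m m1 m2 hc.1 hc.2
  set T : ℤ → Ed d → ℂ := fun k x => ∫ v, hk k v * FF d ψ₀ (v, x) with hT
  have hTm : ∀ k, Measurable (T k) := fun k => T_meas hd hψ (hk k) (hkm k)
  have hTsum : ∀ x, ∫ v, h v * FF d ψ₀ (v, x) = ∑ k ∈ K, T k x := by
    intro x
    simp only [hT]
    rw [← integral_finsetSum _ fun k _ => hF_int hd hψ N _ (hk k) (hkm k) (hkb k) (hks k) x]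
    congr 1; funext v
    rw [hsum v, Finset.sum_mul]
  set W : ℤ → ℝ≥0∞ := fun k => ∫⁻ v, (Function.support (hk k)).indicator (fun v => ENNReal.ofReal (v.2^(d-1))) v with hW
  have hpt : ∀ x, ‖∫ v, h v * FF d ψ₀ (v, x)‖ₑ^p ≤ ENNReal.ofReal Ci * ∑ k ∈ K,
      (ENNReal.ofReal ((2:ℝ)^((k:ℝ)*(p-1))) * ‖T k x‖ₑ^(1:ℝ) + ENNReal.ofReal ((2:ℝ)^((k:ℝ)*(p-p1))) * ‖T k x‖ₑ^p1) := by
    intro x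
    have h1 : ‖∫ v, h v * FF d ψ₀ (v, x)‖ ^ p ≤ (∑ k ∈ K, ‖T k x‖)^p := by
      rw [hTsum]
      exact Real.rpow_le_rpow (norm_nonneg _) (norm_sum_le _ _) hp0.le
    have h2 := h1.trans (hinn K (fun k => ‖T k x‖) (fun k => norm_nonneg _))
    have h3 := ENNReal.ofReal_le_ofReal h2
    rw [← ENNReal.ofReal_rpow_of_nonneg (norm_nonneg _) hp0.le, ofReal_norm, ENNReal.ofReal_mul hCi.le,
      ENNReal.ofReal_sum_of_nonneg (fun k _ => by positivity)] at h3
    refine h3.trans (le_of_eq ?_)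
    congr 1
    refine Finset.sum_congr rfl fun k _ => ?_
    rw [ENNReal.ofReal_add (by positivity) (by positivity), ENNReal.ofReal_mul (by positivity), ENNReal.ofReal_mul (by positivity),
      ← ENNReal.ofReal_rpow_of_nonneg (norm_nonneg _) (by norm_num), ← ENNReal.ofReal_rpow_of_nonneg (norm_nonneg _) (by linarith),
      ofReal_norm]
  have hk0 : ∀ k : ℤ, ENNReal.ofReal ((2:ℝ)^((k:ℝ)*(p-1))) * ∫⁻ x, ‖T k x‖ₑ^(1:ℝ) ≤ ENNReal.ofReal (C0 * 2) * (ENNReal.ofReal ((2:ℝ)^((k:ℝ)*p)) * W k) := by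
    intro k
    calc _ ≤ ENNReal.ofReal ((2:ℝ)^((k:ℝ)*(p-1))) * (ENNReal.ofReal (C0 * ((2:ℝ)^((k:ℝ)+1))^(1:ℝ)) * W k) := by
          gcongr
          exact hr0 N _ (hk k) (by positivity) (hkm k) (hkb k) (hks k)
      _ = _ := by
          rw [← mul_assoc, ← mul_assoc, ← ENNReal.ofReal_mul (by positivity), ← ENNReal.ofReal_mul (by positivity)]
          congr 2
          rw [Real.rpow_one, show (k:ℝ)*p = (k:ℝ)*(p-1) + k by ring, Real.rpow_add (by norm_num), Real.rpow_add (by norm_num), Real.rpow_one]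
          ring
  have hk1 : ∀ k : ℤ, ENNReal.ofReal ((2:ℝ)^((k:ℝ)*(p-p1))) * ∫⁻ x, ‖T k x‖ₑ^p1 ≤ ENNReal.ofReal (C1 * 2^p1) * (ENNReal.ofReal ((2:ℝ)^((k:ℝ)*p)) * W k) := by
    intro k
    calc _ ≤ ENNReal.ofReal ((2:ℝ)^((k:ℝ)*(p-p1))) * (ENNReal.ofReal (C1 * ((2:ℝ)^((k:ℝ)+1))^p1) * W k) := by
          gcongr
          exact hr1 N _ (hk k) (by positivity) (hkm k) (hkb k) (hks k)
      _ = _ := by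
          rw [← mul_assoc, ← mul_assoc, ← ENNReal.ofReal_mul (by positivity), ← ENNReal.ofReal_mul (by positivity)]
          congr 2
          rw [← Real.rpow_mul (by norm_num), show (k:ℝ)*p = (k:ℝ)*(p-p1) + k*p1 by ring, Real.rpow_add (by norm_num), add_mul, one_mul, Real.rpow_add (by norm_num)]
          ring
  have hwm : Measurable (fun v : Ed d × ℝ => ENNReal.ofReal (v.2^(d-1))) := (measurable_snd.pow_const _).ennreal_ofReal
  have hWsum : ∑ k ∈ K, ENNReal.ofReal ((2:ℝ)^((k:ℝ)*p)) * W k ≤ ∫⁻ v, ‖h v‖ₑ^p * ENNReal.ofReal (v.2^(d-1)) := by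
    have e1 : ∀ k ∈ K, ENNReal.ofReal ((2:ℝ)^((k:ℝ)*p)) * W k = ∫⁻ v, ENNReal.ofReal ((2:ℝ)^((k:ℝ)*p)) * 
        (Function.support (hk k)).indicator (fun v => ENNReal.ofReal (v.2^(d-1))) v := fun k _ => by
      rw [lintegral_const_mul' _ _ ENNReal.ofReal_ne_top]
    rw [Finset.sum_congr rfl e1, ← lintegral_finsetSum _ fun k _ => 
      ((hwm.indicator (measurableSet_support (hkm k))).const_mul _)]
    refine lintegral_mono fun v => ?_
    by_cases hv : ∃ k ∈ K, hk k v ≠ 0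
    · obtain ⟨k, hkK, hkv⟩ := hv
      obtain ⟨a1, a2⟩ := hkne k v hkv
      show ∑ i ∈ K, _ ≤ _
      rw [Finset.sum_eq_single_of_mem k hkK]
      · rw [indicator_of_mem (by exact hkv)]
        gcongr
        rw [← ofReal_norm, ENNReal.ofReal_rpow_of_nonneg (norm_nonneg _) hp0.le]
        apply ENNReal.ofReal_le_ofReal
        rw [Real.rpow_mul (by norm_num)]
        exact Real.rpow_le_rpow (by positivity) a1.1 hp0.le
      · intro j _ hj
        rw [indicator_of_notMem, mul_zero]
        intro hc
        obtain ⟨b1, b2⟩ := hkne j v hc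
        exact hj (log2_unique _ j k a1.1 a1.2 b1.1 b1.2)
    · push Not at hv
      show ∑ i ∈ K, _ ≤ _
      rw [Finset.sum_eq_zero]
      · exact zero_le
      · intro j hj
        rw [indicator_of_notMem, mul_zero]
        simpa using hv j hj
  calc _ ≤ ∫⁻ x, ENNReal.ofReal Ci * ∑ k ∈ K,
      (ENNReal.ofReal ((2:ℝ)^((k:ℝ)*(p-1))) * ‖T k x‖ₑ^(1:ℝ) + ENNReal.ofReal ((2:ℝ)^((k:ℝ)*(p-p1))) * ‖T k x‖ₑ^p1) := lintegral_mono hpt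
    _ = ENNReal.ofReal Ci * ∑ k ∈ K, (ENNReal.ofReal ((2:ℝ)^((k:ℝ)*(p-1))) * (∫⁻ x, ‖T k x‖ₑ^(1:ℝ)) + ENNReal.ofReal ((2:ℝ)^((k:ℝ)*(p-p1))) * ∫⁻ x, ‖T k x‖ₑ^p1) := by
        rw [lintegral_const_mul' _ _ ENNReal.ofReal_ne_top, lintegral_finsetSum]
        · congr 1
          refine Finset.sum_congr rfl fun k _ => ?_
          rw [lintegral_add_left (((hTm k).enorm.pow_const _).const_mul _), lintegral_const_mul' _ _ ENNReal.ofReal_ne_top,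
            lintegral_const_mul' _ _ ENNReal.ofReal_ne_top]
        · intro k _
          exact (((hTm k).enorm.pow_const _).const_mul _).add (((hTm k).enorm.pow_const _).const_mul _)
    _ ≤ ENNReal.ofReal Ci * ∑ k ∈ K, (ENNReal.ofReal (C0 * 2) * (ENNReal.ofReal ((2:ℝ)^((k:ℝ)*p)) * W k) + ENNReal.ofReal (C1 * 2^p1) * (ENNReal.ofReal ((2:ℝ)^((k:ℝ)*p)) * W k)) := by
        exact mul_le_mul' le_rfl (Finset.sum_le_sum fun k _ => add_le_add (hk0 k) (hk1 k))
    _ = ENNReal.ofReal (Ci * (C0 * 2 + C1 * 2^p1)) * ∑ k ∈ K, ENNReal.ofReal ((2:ℝ)^((k:ℝ)*p)) * W k := by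
        rw [Finset.sum_add_distrib, ← Finset.mul_sum, ← Finset.mul_sum, ← add_mul, ENNReal.ofReal_mul hCi.le,
          ENNReal.ofReal_add (by positivity) (by positivity), mul_assoc]
    _ ≤ _ := by gcongr

lemma young_pt (d : ℕ) (hd : 4 ≤ d) (p : ℝ) (hp1 : 1 < p) (hpd : p < (2*(d:ℝ)-2)/((d:ℝ)+1)) (a r : ℝ) (ha : 0 ≤ a) (hr : 1 < r) :
    a ≤ a^p * r^(d-1) + r^(-((d:ℝ)+1)) := by
  have hr0 : 0 < r := by linarith
  have hg : 0 < r^(-((d:ℝ)+1)) := by positivity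
  by_cases h : a ≤ r^(-((d:ℝ)+1))
  · have : 0 ≤ a^p * r^(d-1) := by positivity
    linarith
  · push Not at h
    have ha0 : 0 < a := hg.trans h
    have h1 : 1 ≤ a^(p-1) * r^(d-1) := by
      have h2 : (r^(-((d:ℝ)+1)))^(p-1) ≤ a^(p-1) := Real.rpow_le_rpow hg.le h.le (by linarith)
      rw [← Real.rpow_mul hr0.le] at h2
      have h3 : 1 ≤ r^(-((d:ℝ)+1)*(p-1)) * r^(d-1) := by
        rw [← Real.rpow_natCast, ← Real.rpow_add hr0]
        apply Real.one_le_rpow hr.le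
        rw [Nat.cast_sub (by omega)]
        rw [lt_div_iff₀ (by positivity)] at hpd
        push_cast
        nlinarith
      exact h3.trans (by gcongr)
    have h4 : a^p = a * a^(p-1) := by
      nth_rewrite 2 [← Real.rpow_one a]
      rw [← Real.rpow_add ha0]; congr 1; ring
    rw [h4]
    nlinarith

lemma g_int {d : ℕ} (hd : 4 ≤ d) (x : Ed d) :
    ∫⁻ v : Ed d × ℝ, {v : Ed d × ℝ | 1 < v.2 ∧ |‖x - v.1‖ - v.2| ≤ 1/5}.indicator (fun v => ENNReal.ofReal (v.2^(-((d:ℝ)+1)))) v < ⊤ := by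
  have hSm : MeasurableSet {v : Ed d × ℝ | 1 < v.2 ∧ |‖x - v.1‖ - v.2| ≤ 1/5} := by
    apply MeasurableSet.inter
    · exact measurableSet_lt measurable_const measurable_snd
    · have hf : Measurable (fun v : Ed d × ℝ => |‖x - v.1‖ - v.2|) := Continuous.measurable (by fun_prop)
      exact measurableSet_le hf measurable_const
  have hm : Measurable ({v : Ed d × ℝ | 1 < v.2 ∧ |‖x - v.1‖ - v.2| ≤ 1/5}.indicator (fun v => ENNReal.ofReal (v.2^(-((d:ℝ)+1))))) :=
    Measurable.indicator (by fun_prop) hSm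
  rw [Measure.volume_eq_prod, lintegral_prod_symm _ hm.aemeasurable]
  set c : ℝ := om d * (2*d*(1/5)*2^(d-1)) with hc
  have hc0 : 0 ≤ c := by
    have := om_pos (d := d)
    positivity
  calc _ ≤ ∫⁻ r : ℝ, (Ioi (1:ℝ)).indicator (fun r => ENNReal.ofReal (c * r^(-2:ℝ))) r := by
        refine lintegral_mono fun r => ?_
        show ∫⁻ y : Ed d, _ ≤ _
        by_cases hr : 1 < r
        · rw [indicator_of_mem (by exact hr)]
          calc _ ≤ ∫⁻ y : Ed d, (annu x r (1/5)).indicator (fun _ => ENNReal.ofReal (r^(-((d:ℝ)+1)))) y := by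
                refine lintegral_mono fun y => ?_
                by_cases hy : |‖x - y‖ - r| ≤ 1/5
                · rw [indicator_of_mem (by exact ⟨hr, hy⟩), indicator_of_mem (by
                    show |‖y - x‖ - r| ≤ 1/5
                    rwa [norm_sub_rev])]
                · rw [indicator_of_notMem (by exact fun h => hy h.2)]
                  exact zero_le
            _ ≤ ENNReal.ofReal (r^(-((d:ℝ)+1))) * volume (annu x r (1/5)) := lintegral_indicator_const_le _ _
            _ ≤ ENNReal.ofReal (r^(-((d:ℝ)+1))) * ENNReal.ofReal (om d * (2*d*(1/5)*(r+1/5)^(d-1))) := by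
                gcongr
                exact annu_vol hd x r (1/5) (by linarith) (by norm_num)
            _ ≤ _ := by
                rw [← ENNReal.ofReal_mul (by positivity)]
                apply ENNReal.ofReal_le_ofReal
                have := om_pos (d := d)
                calc _ ≤ r^(-((d:ℝ)+1)) * (om d * (2*d*(1/5)*(2*r)^(d-1))) := by
                      gcongr
                      linarith
                  _ = c * (r^(-((d:ℝ)+1)) * r^(d-1)) := by rw [hc, mul_pow]; ring
                  _ = _ := by
                      rw [← Real.rpow_natCast, ← Real.rpow_add (by linarith), Nat.cast_sub (by omega)]
                      congr 2
                      push_cast; ring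
        · rw [indicator_of_notMem (by exact hr)]
          refine le_of_eq ?_
          rw [lintegral_eq_zero_iff' (by exact (hm.comp (measurable_id.prodMk measurable_const)).aemeasurable)]
          filter_upwards with y
          exact indicator_of_notMem (fun h => hr h.1) _
    _ = ∫⁻ r in Ioi (1:ℝ), ENNReal.ofReal (c * r^(-2:ℝ)) := lintegral_indicator measurableSet_Ioi _
    _ < ⊤ := by
        have := (integrableOn_Ioi_rpow_of_lt (a := -2) (by norm_num) (c := 1) one_pos).const_mul c
        exact this.lintegral_lt_top

lemma T_int {d : ℕ} (hd : 4 ≤ d) {ψ₀ : Ed d → ℂ} (hψ : Admissible d ψ₀) (p : ℝ) (hp1 : 1 < p) (hpd : p < (2*(d:ℝ)-2)/((d:ℝ)+1))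
    (H : Ed d × ℝ → ℂ) (hm : Measurable H) (hs : ∀ v, H v ≠ 0 → 1 < v.2)
    (hfin : ∫⁻ v, ‖H v‖ₑ^p * ENNReal.ofReal (v.2^(d-1)) < ⊤) (x : Ed d) :
    Integrable (fun v => H v * FF d ψ₀ (v, x)) volume := by
  obtain ⟨C, hC, hI⟩ := I1 hd hψ
  have hg := g_int hd x
  refine ⟨(hm.mul ((FF_continuous hd hψ).comp (Continuous.prodMk continuous_id continuous_const)).measurable).aestronglyMeasurable, ?_⟩
  have hp0 : 0 < p := by linarith
  refine lt_of_le_of_lt (b := ENNReal.ofReal C * (∫⁻ v, (‖H v‖ₑ^p * ENNReal.ofReal (v.2^(d-1)) +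
    {v : Ed d × ℝ | 1 < v.2 ∧ |‖x - v.1‖ - v.2| ≤ 1/5}.indicator (fun v => ENNReal.ofReal (v.2^(-((d:ℝ)+1)))) v))) ?_ ?_
  · rw [← lintegral_const_mul' _ _ ENNReal.ofReal_ne_top]
    refine lintegral_mono fun v => ?_
    show ‖H v * FF d ψ₀ (v, x)‖ₑ ≤ _
    by_cases h0 : H v * FF d ψ₀ (v, x) = 0
    · rw [h0, enorm_zero]; exact zero_le
    have h1 := hs v (left_ne_zero_of_mul h0)
    have h3 := Fyr_eq_FF hd ψ₀ v.1 v.2 (by linarith) x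
    rw [Prod.mk.eta] at h3
    have h2 := Fyr_supp hψ v.1 v.2 x (by rw [h3]; exact right_ne_zero_of_mul h0)
    rw [indicator_of_mem (by exact ⟨h1, h2⟩), ← ofReal_norm, ← ofReal_norm, ENNReal.ofReal_rpow_of_nonneg (norm_nonneg _) hp0.le,
      ← ENNReal.ofReal_mul (by positivity), ← ENNReal.ofReal_add (by positivity) (by positivity), ← ENNReal.ofReal_mul hC.le]
    apply ENNReal.ofReal_le_ofReal
    rw [norm_mul, ← h3, mul_comm]
    exact mul_le_mul (hI _ _ h1.le x) (young_pt d hd p hp1 hpd _ _ (norm_nonneg _) h1) (norm_nonneg _) hC.le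
  · rw [lintegral_add_left]
    · exact ENNReal.mul_lt_top ENNReal.ofReal_lt_top (ENNReal.add_lt_top.2 ⟨hfin, hg⟩)
    · exact (hm.enorm.pow_const _).mul (measurable_snd.pow_const _).ennreal_ofReal

lemma strong {d : ℕ} (hd : 4 ≤ d) {ψ₀ : Ed d → ℂ} (hψ : Admissible d ψ₀) (p : ℝ) (hp1 : 1 < p) (hpd : p < (2*(d:ℝ)-2)/((d:ℝ)+1)) :
    ∃ C : ℝ, 0 < C ∧ ∀ H : Ed d × ℝ → ℂ, Measurable H → (∀ v, H v ≠ 0 → 1 < v.2) →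
    (∫⁻ v, ‖H v‖ₑ^p * ENNReal.ofReal (v.2^(d-1)) < ⊤) →
    ∫⁻ x, ‖∫ v, H v * FF d ψ₀ (v, x)‖ₑ^p ≤ ENNReal.ofReal C * ∫⁻ v, ‖H v‖ₑ^p * ENNReal.ofReal (v.2^(d-1)) := by
  obtain ⟨C, hC, hb⟩ := strong_bdd hd hψ p hp1 hpd
  have hp0 : 0 < p := by linarith
  refine ⟨C, hC, ?_⟩
  intro H hm hs hfin
  set A : ℕ → Set (Ed d × ℝ) := fun n => {v | ‖v‖ ≤ n ∧ (2:ℝ)^(-(n:ℝ)) ≤ ‖H v‖ ∧ ‖H v‖ ≤ (2:ℝ)^(n:ℝ)} with hA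
  have hAm : ∀ n, MeasurableSet (A n) := fun n =>
    (measurableSet_le measurable_norm measurable_const).inter
      ((measurableSet_le measurable_const hm.norm).inter (measurableSet_le hm.norm measurable_const))
  set Hn : ℕ → Ed d × ℝ → ℂ := fun n => (A n).indicator H with hHn
  have hnm : ∀ n, Measurable (Hn n) := fun n => hm.indicator (hAm n)
  have hle : ∀ n v, ‖Hn n v‖ ≤ ‖H v‖ := fun n v => norm_indicator_le_norm_self _ _
  have hbn : ∀ n, ∫⁻ x, ‖∫ v, Hn n v * FF d ψ₀ (v, x)‖ₑ^p ≤ ENNReal.ofReal C * ∫⁻ v, ‖H v‖ₑ^p * ENNReal.ofReal (v.2^(d-1)) := by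
    intro n
    refine (hb n n (Hn n) (hnm n) ?_).trans ?_
    · intro v hv
      have hvA : v ∈ A n := by
        by_contra hc
        exact hv (indicator_of_notMem hc _)
      simp only [hHn, indicator_of_mem hvA] at hv ⊢
      exact ⟨hs v hv, hvA⟩
    · gcongr with v
      rw [← ofReal_norm, ← ofReal_norm]
      exact ENNReal.ofReal_le_ofReal (hle n v)
  have hconv : ∀ v, ∀ᶠ n in Filter.atTop, Hn n v = H v := by
    intro v
    by_cases hv : H v = 0
    · filter_upwards with n
      simp only [hHn, indicator_apply, hv, ite_self]
    · have hv0 : 0 < ‖H v‖ := norm_pos_iff.2 hv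
      have e1 : ∀ᶠ n : ℕ in Filter.atTop, ‖v‖ ≤ n := Filter.tendsto_atTop.1 tendsto_natCast_atTop_atTop _
      have t2 : Filter.Tendsto (fun n : ℕ => (2:ℝ)^n) Filter.atTop Filter.atTop := tendsto_pow_atTop_atTop_of_one_lt (by norm_num)
      filter_upwards [e1, t2.eventually_ge_atTop ‖H v‖, t2.eventually_ge_atTop (‖H v‖⁻¹)] with n h1 h2 h3
      refine indicator_of_mem (show v ∈ A n from ⟨h1, ?_, ?_⟩) _
      · rw [Real.rpow_neg (by norm_num), Real.rpow_natCast]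
        exact inv_le_of_inv_le₀ hv0 h3
      · rw [Real.rpow_natCast]; exact h2
  have hTconv : ∀ x, Filter.Tendsto (fun n => ∫ v, Hn n v * FF d ψ₀ (v, x)) Filter.atTop (nhds (∫ v, H v * FF d ψ₀ (v, x))) := by
    intro x
    have hi := T_int hd hψ p hp1 hpd H hm hs hfin x
    refine tendsto_integral_of_dominated_convergence (fun v => ‖H v * FF d ψ₀ (v, x)‖) ?_ hi.norm ?_ ?_
    · intro n
      exact ((hnm n).mul ((FF_continuous hd hψ).comp (Continuous.prodMk continuous_id continuous_const)).measurable).aestronglyMeasurable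
    · intro n
      filter_upwards with v
      rw [norm_mul, norm_mul]
      exact mul_le_mul_of_nonneg_right (hle n v) (norm_nonneg _)
    · filter_upwards with v
      apply tendsto_const_nhds.congr'
      filter_upwards [hconv v] with n hn
      rw [hn]
  have hTe : ∀ x, Filter.Tendsto (fun n => ‖∫ v, Hn n v * FF d ψ₀ (v, x)‖ₑ^p) Filter.atTop (nhds (‖∫ v, H v * FF d ψ₀ (v, x)‖ₑ^p)) :=
    fun x => ((ENNReal.continuous_rpow_const.tendsto _).comp ((continuous_enorm.tendsto _).comp (hTconv x)))
  calc _ = ∫⁻ x, Filter.liminf (fun n => ‖∫ v, Hn n v * FF d ψ₀ (v, x)‖ₑ^p) Filter.atTop :=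
        lintegral_congr fun x => (hTe x).liminf_eq.symm
    _ ≤ Filter.liminf (fun n => ∫⁻ x, ‖∫ v, Hn n v * FF d ψ₀ (v, x)‖ₑ^p) Filter.atTop :=
        lintegral_liminf_le fun n => (T_meas hd hψ (Hn n) (hnm n)).enorm.pow_const p
    _ ≤ _ := Filter.liminf_le_of_frequently_le' (Filter.Frequently.of_forall hbn)

lemma main_aux
    (d : ℕ) (hd : 4 ≤ d) (p : ℝ) (hp1 : 1 < p)
    (hpd : p < (2 * (d : ℝ) - 2) / ((d : ℝ) + 1))
    (ψ₀ : Ed d → ℂ) (hψ : Admissible d ψ₀) :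
    ∃ C : ℝ, 0 < C ∧
      ∀ h : Ed d × ℝ → ℂ, Measurable h →
        (∫⁻ y : Ed d, ∫⁻ r in Set.Ioi (1 : ℝ),
            ENNReal.ofReal (‖h (y, r)‖ ^ p * r ^ (d - 1))) < ⊤ →
        eLpNorm
            (fun x => ∫ y : Ed d, ∫ r in Set.Ioi (1 : ℝ), h (y, r) * Fyr d ψ₀ y r x)
            (ENNReal.ofReal p) volume ≤
          ENNReal.ofReal C *
            (∫⁻ y : Ed d, ∫⁻ r in Set.Ioi (1 : ℝ),
                ENNReal.ofReal (‖h (y, r)‖ ^ p * r ^ (d - 1))) ^ (1 / p) := by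
  obtain ⟨C, hC, hb⟩ := strong hd hψ p hp1 hpd
  have hp0 : 0 < p := by linarith
  refine ⟨C^(1/p), by positivity, ?_⟩
  intro h hm hfin
  set H : Ed d × ℝ → ℂ := {v : Ed d × ℝ | 1 < v.2}.indicator h with hH
  have hHm : Measurable H := hm.indicator (measurableSet_lt measurable_const measurable_snd)
  have hHs : ∀ v, H v ≠ 0 → 1 < v.2 := by
    intro v hv
    by_contra hc
    exact hv (indicator_of_notMem (s := {v : Ed d × ℝ | 1 < v.2}) hc _)
  have hmm : Measurable (fun v : Ed d × ℝ => ‖H v‖ₑ^p * ENNReal.ofReal (v.2^(d-1))) :=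
    (hHm.enorm.pow_const _).mul (measurable_snd.pow_const _).ennreal_ofReal
  have e1 : (∫⁻ y : Ed d, ∫⁻ r in Set.Ioi (1 : ℝ), ENNReal.ofReal (‖h (y, r)‖ ^ p * r ^ (d - 1))) =
      ∫⁻ v, ‖H v‖ₑ^p * ENNReal.ofReal (v.2^(d-1)) := by
    rw [Measure.volume_eq_prod, lintegral_prod _ hmm.aemeasurable]
    refine lintegral_congr fun y => ?_
    rw [← lintegral_indicator measurableSet_Ioi]
    refine lintegral_congr fun r => ?_
    by_cases hr : 1 < r
    · rw [indicator_of_mem (by exact hr), hH, indicator_of_mem (by exact hr), ENNReal.ofReal_mul (by positivity),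
        ← ENNReal.ofReal_rpow_of_nonneg (norm_nonneg _) hp0.le, ofReal_norm]
    · rw [indicator_of_notMem (by exact hr), hH, indicator_of_notMem (by exact hr), enorm_zero, ENNReal.zero_rpow_of_pos hp0, zero_mul]
  rw [e1] at hfin ⊢
  have e2 : (fun x => ∫ y : Ed d, ∫ r in Set.Ioi (1 : ℝ), h (y, r) * Fyr d ψ₀ y r x) = fun x => ∫ v, H v * FF d ψ₀ (v, x) := by
    funext x
    have hi := T_int hd hψ p hp1 hpd H hHm hHs hfin x
    rw [Measure.volume_eq_prod] at hi ⊢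
    rw [integral_prod _ hi]
    congr 1; funext y
    rw [← integral_indicator measurableSet_Ioi]
    congr 1; funext r
    by_cases hr : 1 < r
    · rw [indicator_of_mem (by exact hr), hH, indicator_of_mem (by exact hr), Fyr_eq_FF hd ψ₀ y r (by linarith)]
    · rw [indicator_of_notMem (by exact hr), hH, indicator_of_notMem (by exact hr), zero_mul]
  rw [e2, eLp_eq _ _ p hp1.le, ← ENNReal.ofReal_rpow_of_nonneg hC.le (by positivity), ← ENNReal.mul_rpow_of_nonneg _ _ (by positivity)]
  exact ENNReal.rpow_le_rpow (hb H hHm hHs hfin) (by positivity)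

/-- the continuous `L^p` inequality
`‖∫∫ h(y,r) F_{y,r} dr dy‖_p ≲ (∫∫ |h(y,r)|^p r^{d-1} dr dy)^{1/p}`. -/
theorem continuous_lp_inequality
    (d : ℕ) (hd : 4 ≤ d) (p : ℝ) (hp1 : 1 < p)
    (hpd : p < (2 * (d : ℝ) - 2) / ((d : ℝ) + 1))
    (ψ₀ : Ed d → ℂ) (hψ : Admissible d ψ₀) :
    ∃ C : ℝ, 0 < C ∧
      ∀ h : Ed d × ℝ → ℂ, Measurable h →
        (∫⁻ y : Ed d, ∫⁻ r in Set.Ioi (1 : ℝ),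
            ENNReal.ofReal (‖h (y, r)‖ ^ p * r ^ (d - 1))) < ⊤ →
        eLpNorm
            (fun x => ∫ y : Ed d, ∫ r in Set.Ioi (1 : ℝ), h (y, r) * Fyr d ψ₀ y r x)
            (ENNReal.ofReal p) volume ≤
          ENNReal.ofReal C *
            (∫⁻ y : Ed d, ∫⁻ r in Set.Ioi (1 : ℝ),
                ENNReal.ofReal (‖h (y, r)‖ ^ p * r ^ (d - 1))) ^ (1 / p) := by
  exact main_aux d hd p hp1 hpd ψ₀ hψ
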